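/- For every q with 1 < q ≤ ∞ there exists a constant C > 0, independent of n and f, such that: for every n ∈ ℤ, every x ∈ ℝ^d with 2^{-(n+1)/2} < ρ(x) ≤ 2^{-n/2}, and every f ∈ h^1_n(ℝ^d) with supp f ⊂ B(x, 2^{1−n/2}), there exist (H^1_L,q)-atoms a_j related to balls B(x_j, r_j) with B(x_j, r_j) ⊂ B(x, 2^{2−n/2}) and scalars λ_j such that f = ∑_{j=1}^∞ λ_j a_j with convergence in L^1(ℝ^d) and ∑_{j=1}^∞ |λ_j| ≤ C ‖f‖_{h^1_n}. -/

import Mathlib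

open MeasureTheory Metric Real Filter Topology NNReal ENNReal

noncomputable section

abbrev E (d : ℕ) := EuclideanSpace ℝ (Fin d)

/-- The auxiliary function ρ associated with the potential `V`. -/
def rho (d : ℕ) (V : E d → ℝ) (x : E d) : ℝ :=
  sSup {r : ℝ | 0 < r ∧ r ^ ((2:ℝ) - (d:ℝ)) * (∫ y in ball x r, V y) ≤ 1}

/-- The reverse Hölder class `RH_{d/2}`. -/
def IsRH (d : ℕ) (V : E d → ℝ) : Prop :=
  ∃ C : ℝ, 0 < C ∧ ∀ (x : E d) (r : ℝ), 0 < r →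
    ((volume (ball x r)).toReal⁻¹ * ∫ y in ball x r, (V y) ^ ((d:ℝ)/2)) ^ ((2:ℝ)/(d:ℝ)) ≤
      C * ((volume (ball x r)).toReal⁻¹ * ∫ y in ball x r, V y)

/-- The set `𝓑_n = {x : 2^{-(n+1)/2} < ρ(x) ≤ 2^{-n/2}}`. -/
def Bset (d : ℕ) (V : E d → ℝ) (n : ℤ) : Set (E d) :=
  {x | (2:ℝ) ^ (-((n:ℝ)+1)/2) < rho d V x ∧ rho d V x ≤ (2:ℝ) ^ (-(n:ℝ)/2)}

/-- Average of `f` over the ball `B(x,r)`. -/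
def ballAvg (d : ℕ) (f : E d → ℝ) (x : E d) (r : ℝ) : ℝ :=
  (volume (ball x r)).toReal⁻¹ * ∫ y in ball x r, f y

/-- Mean oscillation of `f` over the ball `B(x,r)`. -/
def oscB (d : ℕ) (f : E d → ℝ) (x : E d) (r : ℝ) : ℝ :=
  ballAvg d (fun y => |f y - ballAvg d f x r|) x r

/-- The BMO seminorm, as an extended nonnegative real. -/
def bmoNormE (d : ℕ) (f : E d → ℝ) : ℝ≥0∞ :=
  ⨆ (x : E d) (r : ℝ) (_ : 0 < r), ENNReal.ofReal (oscB d f x r)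

/-- The `bmo_n` norm, as an extended nonnegative real. -/
def bmonNorm (d : ℕ) (n : ℤ) (f : E d → ℝ) : ℝ≥0∞ :=
  bmoNormE d f +
    ⨆ (x : E d) (r : ℝ) (_ : (2:ℝ) ^ (-(n:ℝ)/2) ≤ r),
      ENNReal.ofReal (ballAvg d (fun y => |f y|) x r)

/-- The `BMO_L` norm, as an extended nonnegative real. -/
def bmoLNorm (d : ℕ) (V : E d → ℝ) (f : E d → ℝ) : ℝ≥0∞ :=
  bmoNormE d f +
    ⨆ (x : E d) (r : ℝ) (_ : rho d V x ≤ r),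
      ENNReal.ofReal (ballAvg d (fun y => |f y|) x r)

/-- The Gauss function `P(x) = (4π)^{-d/2} e^{-|x|²/4}`. -/
def gaussP (d : ℕ) (x : E d) : ℝ := (4 * π) ^ (-(d:ℝ)/2) * Real.exp (-(‖x‖^2)/4)

/-- The local maximal function `𝓜_n f(x) = sup_{0<t<2^{-n/2}} |P_t * f(x)|`. -/
def MnMax (d : ℕ) (n : ℤ) (f : E d → ℝ) (x : E d) : ℝ≥0∞ :=
  ⨆ (t : ℝ) (_ : 0 < t ∧ t < (2:ℝ) ^ (-(n:ℝ)/2)),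
    ENNReal.ofReal |∫ z, t ^ (-(d:ℝ)) * gaussP d (t⁻¹ • (x - z)) * f z|

/-- The `h^1_n` norm `‖𝓜_n f‖_{L¹}`, as an extended nonnegative real. -/
def h1nNorm (d : ℕ) (n : ℤ) (f : E d → ℝ) : ℝ≥0∞ := ∫⁻ x, MnMax d n f x

/-- Membership in the local Hardy space `h^1_n`. -/
def Memh1n (d : ℕ) (n : ℤ) (f : E d → ℝ) : Prop :=
  Integrable f volume ∧ h1nNorm d n f < ⊤

/-- `(H^1_L, q)`-atoms related to the ball `B(x₀, r)`, with `L`-constant `CL`. -/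
def IsHLAtom (d : ℕ) (V : E d → ℝ) (CL : ℝ) (q : ℝ≥0∞) (a : E d → ℝ) (x₀ : E d) (r : ℝ) :
    Prop :=
  r ≤ CL * rho d V x₀ ∧ Function.support a ⊆ ball x₀ r ∧
    eLpNorm a q volume ≤ (volume (ball x₀ r)) ^ (1 / q.toReal - 1) ∧
    (r ≤ rho d V x₀ / CL → (∫ x, a x) = 0)

/-
Uchiyama's idea gives control of all test functions by a single kernel: a smooth bump at scale `r`
is expanded into a superposition of dilates `P_t (y_j - ·)`, where the points `y_j` are moved, at
every scale, to places where the local maximal function of `f` is no larger than its average. The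
pairing of `f` with the bump is then bounded by an average of a power `1 / p < 1` of the local
maximal function, so the grand maximal function is dominated pointwise by a Hardy–Littlewood
maximal function to the power `p`, and the two maximal functions have comparable integrals.

Take the Calderón–Zygmund decompositions of `f` at the levels `L * 2 ^ k` of the grand maximal
function, over Whitney balls whose radii are clipped at the scale `R`. Consecutive good parts
differ by bounded pieces of mean zero; the first good part splits into such pieces and one
coarse piece living on `B(x, 3R)`, where the critical radius is comparable to `R` and no
cancellation is required. The costs `height * radius ^ dim` telescope into a level sum
comparable to the integral of the grand maximal function.
-/

section Decay

variable {X : Type*} [NormedAddCommGroup X]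

/-- The radial function `(1 + ‖v‖)⁻ᴺ` measuring decay of order `N` at infinity. -/
def decay (N : ℕ) (v : X) : ℝ := ((1 + ‖v‖) ^ N)⁻¹

lemma decay_pos (N : ℕ) (v : X) : 0 < decay N v := by
  unfold decay; positivity

lemma decay_anti {M N : ℕ} (h : M ≤ N) (v : X) : decay N v ≤ decay M v :=
  inv_anti₀ (by positivity) (pow_le_pow_right₀ (by linarith [norm_nonneg v]) h)

lemma decay_le_one (N : ℕ) (v : X) : decay N v ≤ 1 := by
  simpa [decay] using decay_anti N.zero_le v

lemma integrable_decay [NormedSpace ℝ X] [FiniteDimensional ℝ X] [MeasureSpace X] [BorelSpace X]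
    [(volume : Measure X).IsAddHaarMeasure] {N : ℕ} (h : Module.finrank ℝ X < N) :
    Integrable (decay N : X → ℝ) := by
  refine (integrable_one_add_norm (r := N) (by exact_mod_cast h)).congr
    (Eventually.of_forall fun v => ?_)
  simp only [decay, Real.rpow_neg (by positivity : (0 : ℝ) ≤ 1 + ‖v‖), Real.rpow_natCast]

end Decay

section Dilation

variable {X : Type*} [NormedAddCommGroup X] [NormedSpace ℝ X]

/-- The `L¹`-normalised dilate `g_t(y) = t⁻ᵈ g(y / t)`, where `d` is the dimension. -/
def dilate (t : ℝ) (g : X → ℝ) (y : X) : ℝ := (t ^ Module.finrank ℝ X)⁻¹ * g (t⁻¹ • y)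

lemma norm_inv_smul_eq_div {t : ℝ} (ht : 0 < t) (y : X) : ‖t⁻¹ • y‖ = ‖y‖ / t := by
  rw [norm_smul, norm_inv, Real.norm_of_nonneg ht.le, div_eq_inv_mul]

lemma dilate_decay_pos {t : ℝ} (ht : 0 < t) (N : ℕ) (y : X) : 0 < dilate t (decay N) y :=
  mul_pos (by positivity) (decay_pos _ _)

lemma dilate_decay_eq {t : ℝ} (ht : 0 < t) (N : ℕ) (y : X) :
    dilate t (decay N) y = (t ^ Module.finrank ℝ X)⁻¹ * ((1 + ‖y‖ / t) ^ N)⁻¹ := by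
  rw [dilate, decay, norm_inv_smul_eq_div ht]

lemma dilate_decay_succ {t : ℝ} (ht : 0 < t) (N : ℕ) (y : X) :
    (1 + ‖y‖ / t) * dilate t (decay (N + 1)) y = dilate t (decay N) y := by
  rw [dilate_decay_eq ht, dilate_decay_eq ht, mul_left_comm, pow_succ, mul_inv_rev,
    mul_inv_cancel_left₀ (by positivity)]

lemma dilate_decay_anti {t : ℝ} (ht : 0 < t) {M N : ℕ} (h : M ≤ N) (y : X) :
    dilate t (decay N) y ≤ dilate t (decay M) y :=
  mul_le_mul_of_nonneg_left (decay_anti h _) (by positivity)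

lemma dilate_decay_le_two_pow {t : ℝ} (ht : 0 < t) (N : ℕ) {y z u : X} (h : ‖z - u‖ ≤ t) :
    dilate t (decay N) (z - y) ≤ 2 ^ N * dilate t (decay N) (u - y) := by
  have hdist : 1 + ‖u - y‖ / t ≤ (1 + ‖z - y‖ / t) * 2 := by
    have h2 : ‖u - y‖ ≤ ‖z - y‖ + t := by
      have := norm_sub_le_norm_sub_add_norm_sub u z y
      rw [norm_sub_rev u z] at this
      linarith
    have h3 : ‖u - y‖ / t ≤ ‖z - y‖ / t + 1 := by
      rw [div_add_one ht.ne']; gcongr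
    have : 0 ≤ ‖z - y‖ / t := by positivity
    linarith
  have hpow : ((1 + ‖z - y‖ / t) ^ N)⁻¹ ≤ 2 ^ N * ((1 + ‖u - y‖ / t) ^ N)⁻¹ := by
    rw [← div_eq_mul_inv, le_div_iff₀ (by positivity), inv_mul_le_iff₀ (by positivity), ← mul_pow]
    gcongr
  rw [dilate_decay_eq ht, dilate_decay_eq ht, mul_left_comm]
  gcongr

variable [FiniteDimensional ℝ X] [MeasureSpace X] [BorelSpace X]
  [(volume : Measure X).IsAddHaarMeasure]

lemma integral_dilate_sub {t : ℝ} (ht : 0 < t) (g : X → ℝ) (y : X) :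
    ∫ u, dilate t g (u - y) = ∫ v, g v := by
  rw [integral_sub_right_eq_self (dilate t g)]
  simp only [dilate, integral_const_mul]
  rw [Measure.integral_comp_inv_smul_of_nonneg volume g ht.le, smul_eq_mul,
    inv_mul_cancel_left₀ (by positivity)]

lemma integrable_dilate_sub {t : ℝ} (ht : 0 < t) {g : X → ℝ} (hg : Integrable g) (y : X) :
    Integrable fun u => dilate t g (u - y) :=
  (((integrable_comp_smul_iff volume g (inv_ne_zero ht.ne')).2 hg).const_mul _).comp_sub_right y

end Dilation

section Weight

variable {X : Type*} [NormedAddCommGroup X] [NormedSpace ℝ X]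

/-- The weight adapted to the ball `B(c, r)`; the exponent `2(d + 1)` leaves integrability
after taking a square root, which is what is needed to sum over dyadic shells. -/
def ballWeight (c : X) (r : ℝ) (y : X) : ℝ :=
  ((1 + ‖y - c‖ / r) ^ (2 * (Module.finrank ℝ X + 1)))⁻¹

lemma ballWeight_pos (c : X) {r : ℝ} (hr : 0 < r) (y : X) : 0 < ballWeight c r y := by
  unfold ballWeight; positivity

lemma ballWeight_eq_decay (c : X) {r : ℝ} (hr : 0 < r) (y : X) :
    ballWeight c r y = decay (2 * (Module.finrank ℝ X + 1)) (r⁻¹ • (y - c)) := by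
  rw [ballWeight, decay, norm_inv_smul_eq_div hr]

lemma ballWeight_le_one (c : X) {r : ℝ} (hr : 0 < r) (y : X) : ballWeight c r y ≤ 1 :=
  ballWeight_eq_decay c hr y ▸ decay_le_one _ _

lemma continuous_ballWeight (c : X) {r : ℝ} (hr : 0 < r) : Continuous (ballWeight c r) :=
  Continuous.inv₀ (by fun_prop) fun y => by positivity

lemma ballWeight_le_mul_ballWeight (c : X) {r t : ℝ} (ht : 0 < t) (htr : t ≤ r) (y u : X) :
    ballWeight c r u ≤
      (1 + ‖u - y‖ / t) ^ (2 * (Module.finrank ℝ X + 1)) * ballWeight c r y := by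
  have hr : 0 < r := ht.trans_le htr
  unfold ballWeight
  rw [← div_eq_mul_inv, le_div_iff₀ (by positivity), inv_mul_le_iff₀ (by positivity), ← mul_pow]
  gcongr
  have h1 : ‖y - c‖ / r ≤ ‖u - c‖ / r + ‖u - y‖ / r := by
    rw [← add_div, norm_sub_rev u y, add_comm]
    gcongr
    exact norm_sub_le_norm_sub_add_norm_sub _ _ _
  have h2 : ‖u - y‖ / r ≤ ‖u - y‖ / t := by gcongr
  have h3 : 0 ≤ (‖u - c‖ / r) * (‖u - y‖ / t) := by positivity
  linarith

lemma ballWeight_le_of_mem_ball (c : X) {r : ℝ} {u y : X} (hy : y ∈ ball u r) :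
    ballWeight c r u ≤ 4 ^ (Module.finrank ℝ X + 1) * ballWeight c r y := by
  have hr : 0 < r := pos_of_mem_ball hy
  refine (ballWeight_le_mul_ballWeight c hr le_rfl y u).trans ?_
  have hdist : 1 + ‖u - y‖ / r ≤ 2 := by
    have : ‖u - y‖ / r ≤ 1 := (div_le_one hr).2 (mem_ball'.1 hy |>.le.trans_eq' (by
      rw [dist_eq_norm]))
    linarith
  have := ballWeight_pos c hr y
  calc _ ≤ (2 : ℝ) ^ (2 * (Module.finrank ℝ X + 1)) * ballWeight c r y := by gcongr
    _ = _ := by rw [pow_mul]; norm_num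

lemma ballWeight_mul_dilate_decay_le (c : X) {r t : ℝ} (ht : 0 < t) (htr : t ≤ r) (y u : X)
    (N : ℕ) :
    ballWeight c r u * dilate t (decay (2 * (Module.finrank ℝ X + 1) + N)) (u - y) ≤
      ballWeight c r y * dilate t (decay N) (u - y) := by
  refine (mul_le_mul_of_nonneg_right (ballWeight_le_mul_ballWeight c ht htr y u)
    (dilate_decay_pos ht _ _).le).trans_eq ?_
  rw [dilate_decay_eq ht, dilate_decay_eq ht, pow_add]
  field_simp

lemma integrable_ballWeight [FiniteDimensional ℝ X] [MeasureSpace X] [BorelSpace X]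
    [(volume : Measure X).IsAddHaarMeasure] (c : X) {r : ℝ} (hr : 0 < r) :
    Integrable (ballWeight c r) := by
  simp only [funext (ballWeight_eq_decay c hr)]
  exact ((integrable_comp_smul_iff volume _ (inv_ne_zero hr.ne')).2
    (integrable_decay (by omega))).comp_sub_right c

end Weight

section Kernel

variable {X : Type*} [NormedAddCommGroup X] [NormedSpace ℝ X]

/-- The integrable majorant `k_t`, decaying to order `d + 1`. -/
def slowKernel (t : ℝ) : X → ℝ := dilate t (decay (Module.finrank ℝ X + 1))

/-- The order of decay required of a kernel; the three summands pay for a change of centre in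
`ballWeight`, for integrability, and for one factor `1 + ‖v‖ / t`. -/
abbrev fastOrder (X : Type*) [NormedAddCommGroup X] [NormedSpace ℝ X] : ℕ :=
  2 * (Module.finrank ℝ X + 1) + (Module.finrank ℝ X + 1 + 1)

/-- The majorant `K_t`, decaying to order `fastOrder X`. -/
def fastKernel (t : ℝ) : X → ℝ := dilate t (decay (fastOrder X))

lemma slowKernel_pos {t : ℝ} (ht : 0 < t) (y : X) : 0 < slowKernel t y :=
  dilate_decay_pos ht _ _

lemma fastKernel_pos {t : ℝ} (ht : 0 < t) (y : X) : 0 < fastKernel t y :=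
  dilate_decay_pos ht _ _

lemma one_add_mul_fastKernel_le_slowKernel {t : ℝ} (ht : 0 < t) (y : X) :
    (1 + ‖y‖ / t) * fastKernel t y ≤ slowKernel t y :=
  (dilate_decay_succ ht _ y).trans_le (dilate_decay_anti ht (by simp) y)

lemma ballWeight_mul_one_add_mul_fastKernel_le (c : X) {r t : ℝ} (ht : 0 < t) (htr : t ≤ r)
    (y u : X) :
    ballWeight c r u * ((1 + ‖u - y‖ / t) * fastKernel t (u - y)) ≤
      ballWeight c r y * slowKernel t (u - y) := by
  rw [fastKernel, fastOrder, ← add_assoc, dilate_decay_succ ht]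
  exact ballWeight_mul_dilate_decay_le c ht htr y u _

lemma ballWeight_mul_fastKernel_le (c : X) {r t : ℝ} (ht : 0 < t) (htr : t ≤ r) (y u : X) :
    ballWeight c r u * fastKernel t (u - y) ≤ ballWeight c r y * slowKernel t (u - y) := by
  refine le_trans ?_ (ballWeight_mul_one_add_mul_fastKernel_le c ht htr y u)
  have hfactor : 0 ≤ ‖u - y‖ / t := by positivity
  exact mul_le_mul_of_nonneg_left (le_mul_of_one_le_left (fastKernel_pos ht _).le (by linarith))
    (ballWeight_pos c (ht.trans_le htr) u).le

/-- The constant lost when the pole of `K_t` is moved by at most `t`. -/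
def shiftConst (X : Type*) [NormedAddCommGroup X] [NormedSpace ℝ X] : ℝ :=
  2 ^ fastOrder X

lemma shiftConst_pos : 0 < shiftConst X := by unfold shiftConst; positivity

lemma fastKernel_shift_le {t : ℝ} (ht : 0 < t) {y z u : X} (h : ‖z - u‖ ≤ t) :
    fastKernel t (z - y) ≤ shiftConst X * fastKernel t (u - y) :=
  dilate_decay_le_two_pow ht _ h

variable [MeasureSpace X]

/-- A kernel with integral one whose size and Lipschitz constant decay like
`decay (fastOrder X)`; its dilates form the approximate identity defining the
local maximal function. -/
structure IsDecayKernel (P : X → ℝ) (C : ℝ) : Prop where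
  abs_le : ∀ v, |P v| ≤ C * decay (fastOrder X) v
  abs_sub_le : ∀ v v',
    |P v - P v'| ≤ C * ‖v - v'‖ * (decay (fastOrder X) v + decay (fastOrder X) v')
  integral_eq_one : ∫ v, P v = 1

namespace IsDecayKernel

variable {P : X → ℝ} {C : ℝ}

lemma const_nonneg (hP : IsDecayKernel P C) : 0 ≤ C :=
  nonneg_of_mul_nonneg_left ((abs_nonneg _).trans (hP.abs_le 0)) (decay_pos _ _)

lemma continuous (hP : IsDecayKernel P C) : Continuous P := by
  refine (LipschitzWith.of_dist_le_mul (K := (2 * C).toNNReal) fun v v' => ?_).continuous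
  rw [Real.dist_eq, dist_eq_norm, Real.coe_toNNReal _ (by linarith [hP.const_nonneg])]
  refine (hP.abs_sub_le v v').trans ?_
  have hdecay := add_le_add (decay_le_one (fastOrder X) v) (decay_le_one (fastOrder X) v')
  have := mul_le_mul_of_nonneg_left hdecay (mul_nonneg hP.const_nonneg (norm_nonneg (v - v')))
  linarith

lemma continuous_dilate (hP : IsDecayKernel P C) (t : ℝ) : Continuous (dilate t P) :=
  continuous_const.mul (hP.continuous.comp (continuous_const_smul _))

lemma abs_dilate_le (hP : IsDecayKernel P C) {t : ℝ} (ht : 0 < t) (v : X) :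
    |dilate t P v| ≤ C * fastKernel t v := by
  rw [dilate, fastKernel, dilate, abs_mul, abs_of_pos (by positivity), mul_left_comm]
  exact mul_le_mul_of_nonneg_left (hP.abs_le _) (by positivity)

lemma abs_dilate_sub_le (hP : IsDecayKernel P C) {t : ℝ} (ht : 0 < t) (v v' : X) :
    |dilate t P v - dilate t P v'| ≤
      C * (‖v - v'‖ / t) * (fastKernel t v + fastKernel t v') := by
  simp only [dilate, fastKernel]
  rw [← mul_sub, abs_mul, abs_of_pos (by positivity), ← mul_add, mul_left_comm,
    ← norm_inv_smul_eq_div ht, smul_sub]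
  exact mul_le_mul_of_nonneg_left (hP.abs_sub_le _ _) (by positivity)

lemma abs_dilate_le_const (hP : IsDecayKernel P C) {t : ℝ} (ht : 0 < t) (v : X) :
    |dilate t P v| ≤ C * (t ^ Module.finrank ℝ X)⁻¹ :=
  (hP.abs_dilate_le ht v).trans <| mul_le_mul_of_nonneg_left
    (mul_le_of_le_one_right (by positivity) (decay_le_one _ _)) hP.const_nonneg

lemma abs_dilate_shift_le (hP : IsDecayKernel P C) {t : ℝ} (ht : 0 < t) {y z u : X}
    (h : ‖z - u‖ ≤ t) : |dilate t P (z - y)| ≤ C * shiftConst X * fastKernel t (u - y) := by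
  rw [mul_assoc]
  exact (hP.abs_dilate_le ht _).trans
    (mul_le_mul_of_nonneg_left (fastKernel_shift_le ht h) hP.const_nonneg)

variable [BorelSpace X] [FiniteDimensional ℝ X] [(volume : Measure X).IsAddHaarMeasure]

lemma integrable (hP : IsDecayKernel P C) : Integrable P :=
  ((integrable_decay (by unfold fastOrder; omega)).const_mul C).mono'
    hP.continuous.aestronglyMeasurable
    (Eventually.of_forall hP.abs_le)

lemma integral_dilate_sub_eq_one (hP : IsDecayKernel P C) {t : ℝ} (ht : 0 < t) (y : X) :
    ∫ u, dilate t P (u - y) = 1 :=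
  (integral_dilate_sub ht P y).trans hP.integral_eq_one

end IsDecayKernel

end Kernel

section Discretisation

variable {X : Type*} [NormedAddCommGroup X] [NormedSpace ℝ X]

/-- `e` is bounded by `A` and Lipschitz with constant `L`, both relative to the weight of the
ball `B(c, r)`. -/
structure IsWeightedLipschitz (c : X) (r A L : ℝ) (e : X → ℝ) : Prop where
  abs_le : ∀ y, |e y| ≤ A * ballWeight c r y
  abs_sub_le : ∀ y y',
    |e y - e y'| ≤ L * ‖y - y'‖ * (ballWeight c r y + ballWeight c r y')

namespace IsWeightedLipschitz

variable {c : X} {r A L : ℝ} {e : X → ℝ}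

lemma continuous (he : IsWeightedLipschitz c r A L e) (hr : 0 < r) (hL : 0 ≤ L) :
    Continuous e := by
  refine (LipschitzWith.of_dist_le_mul (K := (2 * L).toNNReal) fun y y' => ?_).continuous
  rw [Real.dist_eq, dist_eq_norm, Real.coe_toNNReal _ (by positivity)]
  refine (he.abs_sub_le y y').trans ?_
  have hweight := add_le_add (ballWeight_le_one c hr y) (ballWeight_le_one c hr y')
  have := mul_le_mul_of_nonneg_left hweight (by positivity : 0 ≤ L * ‖y - y'‖)
  linarith

lemma bound_nonneg (he : IsWeightedLipschitz c r A L e) (hr : 0 < r) : 0 ≤ A :=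
  nonneg_of_mul_nonneg_left ((abs_nonneg _).trans (he.abs_le c)) (ballWeight_pos c hr c)

lemma mono (he : IsWeightedLipschitz c r A L e) (hr : 0 < r) {A' L' : ℝ} (hA : A ≤ A')
    (hL : L ≤ L') : IsWeightedLipschitz c r A' L' e where
  abs_le y := (he.abs_le y).trans (mul_le_mul_of_nonneg_right hA (ballWeight_pos c hr y).le)
  abs_sub_le y y' := (he.abs_sub_le y y').trans <| by
    have := ballWeight_pos c hr y
    have := ballWeight_pos c hr y'
    gcongr

lemma integrable [FiniteDimensional ℝ X] [MeasureSpace X] [BorelSpace X]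
    [(volume : Measure X).IsAddHaarMeasure] (he : IsWeightedLipschitz c r A L e) (hr : 0 < r)
    (hL : 0 ≤ L) : Integrable e :=
  ((integrable_ballWeight c hr).const_mul A).mono'
    (he.continuous hr hL).aestronglyMeasurable (Eventually.of_forall he.abs_le)

end IsWeightedLipschitz

variable [MeasureSpace X]

/-- Uchiyama's discretised convolution: the superposition, with density `e`, of the kernels `P_t`
centred at the points `z u`. -/
def discreteConv (P : X → ℝ) (t : ℝ) (z : X → X) (e : X → ℝ) (y : X) : ℝ :=
  ∫ u, e u * dilate t P (z u - y)

/-- The mass of the majorant `k_t`. -/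
def slowMass (X : Type*) [NormedAddCommGroup X] [NormedSpace ℝ X] [MeasureSpace X] : ℝ :=
  ∫ v : X, decay (Module.finrank ℝ X + 1) v

lemma slowMass_nonneg : 0 ≤ slowMass X := integral_nonneg fun v => (decay_pos _ v).le

/-- The constant in the error estimate for one step of the discretisation. -/
def stepConst (X : Type*) [NormedAddCommGroup X] [NormedSpace ℝ X] [MeasureSpace X] (C : ℝ) : ℝ :=
  1 + 2 * C * (1 + shiftConst X) * slowMass X

variable {P : X → ℝ} {C : ℝ}

lemma IsDecayKernel.one_le_stepConst (hP : IsDecayKernel P C) : 1 ≤ stepConst X C := by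
  have := hP.const_nonneg
  have := shiftConst_pos (X := X)
  have := slowMass_nonneg (X := X)
  have : 0 ≤ 2 * C * (1 + shiftConst X) * slowMass X := by positivity
  unfold stepConst; linarith

variable {c : X} {r t h A L : ℝ} {z : X → X} {e : X → ℝ}

lemma IsWeightedLipschitz.abs_mul_dilate_le (he : IsWeightedLipschitz c r A L e)
    (hP : IsDecayKernel P C) (ht : 0 < t) (htr : t ≤ r) (hzu : ∀ u, ‖z u - u‖ ≤ t) (y u : X) :
    |e u * dilate t P (z u - y)| ≤
      A * C * shiftConst X * ballWeight c r y * slowKernel t (u - y) := by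
  have hA := he.bound_nonneg (ht.trans_le htr)
  have hC := hP.const_nonneg
  have hB := shiftConst_pos (X := X)
  rw [abs_mul]
  calc |e u| * |dilate t P (z u - y)|
      ≤ (A * ballWeight c r u) * (C * shiftConst X * fastKernel t (u - y)) :=
        mul_le_mul (he.abs_le u) (hP.abs_dilate_shift_le ht (hzu u)) (abs_nonneg _)
          (mul_nonneg hA (ballWeight_pos c (ht.trans_le htr) u).le)
    _ = A * C * shiftConst X * (ballWeight c r u * fastKernel t (u - y)) := by ring
    _ ≤ A * C * shiftConst X * (ballWeight c r y * slowKernel t (u - y)) :=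
        mul_le_mul_of_nonneg_left (ballWeight_mul_fastKernel_le c ht htr y u) (by positivity)
    _ = _ := by ring

lemma IsWeightedLipschitz.abs_sub_mul_dilate_le (he : IsWeightedLipschitz c r A L e)
    (hP : IsDecayKernel P C) (hL : 0 ≤ L) (ht : 0 < t) (htr : t ≤ r) (y u : X) :
    |(e y - e u) * dilate t P (u - y)| ≤
      2 * C * L * t * (ballWeight c r y * slowKernel t (u - y)) := by
  have hC := hP.const_nonneg
  have hw := ballWeight_pos c (ht.trans_le htr)
  have hK := fastKernel_pos ht (u - y)
  have hdist : ‖y - u‖ ≤ t * (1 + ‖u - y‖ / t) := by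
    rw [mul_add, mul_div_cancel₀ _ ht.ne', norm_sub_rev]; linarith
  rw [abs_mul]
  calc |e y - e u| * |dilate t P (u - y)|
      ≤ (L * ‖y - u‖ * (ballWeight c r y + ballWeight c r u)) * (C * fastKernel t (u - y)) :=
        mul_le_mul (he.abs_sub_le y u) (hP.abs_dilate_le ht _) (abs_nonneg _)
          (by have := hw y; have := hw u; positivity)
    _ ≤ (L * (t * (1 + ‖u - y‖ / t)) * (ballWeight c r y + ballWeight c r u)) *
          (C * fastKernel t (u - y)) := by
        have := hw y; have := hw u; gcongr
    _ = C * L * t * (ballWeight c r u * ((1 + ‖u - y‖ / t) * fastKernel t (u - y)) +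
          ballWeight c r y * ((1 + ‖u - y‖ / t) * fastKernel t (u - y))) := by ring
    _ ≤ C * L * t * (ballWeight c r y * slowKernel t (u - y) +
          ballWeight c r y * slowKernel t (u - y)) := by
        have := hw y
        gcongr C * L * t * (?_ + _ * ?_)
        · exact ballWeight_mul_one_add_mul_fastKernel_le c ht htr y u
        · exact one_add_mul_fastKernel_le_slowKernel ht _
    _ = _ := by ring

lemma IsWeightedLipschitz.abs_mul_dilate_sub_le (he : IsWeightedLipschitz c r A L e)
    (hP : IsDecayKernel P C) (ht : 0 < t) (htr : t ≤ r) (hht : h ≤ t)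
    (hzu : ∀ u, ‖z u - u‖ ≤ h) (y u : X) :
    |e u * (dilate t P (u - y) - dilate t P (z u - y))| ≤
      C * (1 + shiftConst X) * A * (h / t) * (ballWeight c r y * slowKernel t (u - y)) := by
  have hA := he.bound_nonneg (ht.trans_le htr)
  have hC := hP.const_nonneg
  have hB := shiftConst_pos (X := X)
  have hh : 0 ≤ h := (norm_nonneg _).trans (hzu u)
  have hw := ballWeight_pos c (ht.trans_le htr) u
  have hdiff : |dilate t P (u - y) - dilate t P (z u - y)| ≤
      C * (h / t) * ((1 + shiftConst X) * fastKernel t (u - y)) := by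
    refine (hP.abs_dilate_sub_le ht _ _).trans ?_
    have hshift : ‖u - y - (z u - y)‖ ≤ h := by
      rw [sub_sub_sub_cancel_right, norm_sub_rev]; exact hzu u
    have := fastKernel_shift_le ht (y := y) ((hzu u).trans hht)
    have := fastKernel_pos ht (u - y)
    have := fastKernel_pos ht (z u - y)
    gcongr
    linarith
  rw [abs_mul]
  calc |e u| * |dilate t P (u - y) - dilate t P (z u - y)|
      ≤ (A * ballWeight c r u) * (C * (h / t) * ((1 + shiftConst X) * fastKernel t (u - y))) :=
        mul_le_mul (he.abs_le u) hdiff (abs_nonneg _) (by positivity)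
    _ = C * (1 + shiftConst X) * A * (h / t) * (ballWeight c r u * fastKernel t (u - y)) := by ring
    _ ≤ _ := mul_le_mul_of_nonneg_left (ballWeight_mul_fastKernel_le c ht htr y u) (by positivity)

lemma IsWeightedLipschitz.abs_mul_dilate_sub_dilate_le (he : IsWeightedLipschitz c r A L e)
    (hP : IsDecayKernel P C) (ht : 0 < t) (htr : t ≤ r) (hzu : ∀ u, ‖z u - u‖ ≤ t) (y y' u : X) :
    |e u * (dilate t P (z u - y) - dilate t P (z u - y'))| ≤
      (C * shiftConst X * A / t * ‖y - y'‖) *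
        (ballWeight c r y * slowKernel t (u - y) + ballWeight c r y' * slowKernel t (u - y')) := by
  have hA := he.bound_nonneg (ht.trans_le htr)
  have hC := hP.const_nonneg
  have hB := shiftConst_pos (X := X)
  have hw := ballWeight_pos c (ht.trans_le htr) u
  have hdiff : |dilate t P (z u - y) - dilate t P (z u - y')| ≤
      C * (‖y - y'‖ / t) *
        (shiftConst X * fastKernel t (u - y) + shiftConst X * fastKernel t (u - y')) := by
    refine (hP.abs_dilate_sub_le ht _ _).trans ?_
    have hdiff : z u - y - (z u - y') = y' - y := by abel
    rw [hdiff, norm_sub_rev]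
    gcongr <;> exact fastKernel_shift_le ht (hzu u)
  rw [abs_mul]
  calc |e u| * |dilate t P (z u - y) - dilate t P (z u - y')|
      ≤ (A * ballWeight c r u) * (C * (‖y - y'‖ / t) *
          (shiftConst X * fastKernel t (u - y) + shiftConst X * fastKernel t (u - y'))) :=
        mul_le_mul (he.abs_le u) hdiff (abs_nonneg _) (by positivity)
    _ = (C * shiftConst X * A / t * ‖y - y'‖) *
          (ballWeight c r u * fastKernel t (u - y) + ballWeight c r u * fastKernel t (u - y')) := by
        ring
    _ ≤ _ := mul_le_mul_of_nonneg_left (add_le_add (ballWeight_mul_fastKernel_le c ht htr y u)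
        (ballWeight_mul_fastKernel_le c ht htr y' u)) (by positivity)

variable [FiniteDimensional ℝ X] [BorelSpace X] [(volume : Measure X).IsAddHaarMeasure]

lemma integrable_slowKernel_sub (ht : 0 < t) (y : X) : Integrable fun u => slowKernel t (u - y) :=
  integrable_dilate_sub ht (integrable_decay (by omega)) y

lemma integral_slowKernel_sub (ht : 0 < t) (y : X) :
    ∫ u, slowKernel t (u - y) = slowMass X :=
  integral_dilate_sub ht _ y

lemma IsWeightedLipschitz.integrable_mul_dilate (he : IsWeightedLipschitz c r A L e)
    (hP : IsDecayKernel P C) (hL : 0 ≤ L) (ht : 0 < t) (htr : t ≤ r) (hz : Measurable z)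
    (hzu : ∀ u, ‖z u - u‖ ≤ t) (y : X) : Integrable fun u => e u * dilate t P (z u - y) :=
  ((integrable_slowKernel_sub ht y).const_mul _).mono'
    ((he.continuous (ht.trans_le htr) hL).measurable.mul
      ((hP.continuous_dilate t).measurable.comp (hz.sub_const y))).aestronglyMeasurable
    (Eventually.of_forall fun u => he.abs_mul_dilate_le hP ht htr hzu y u)

lemma IsWeightedLipschitz.abs_sub_discreteConv_le (he : IsWeightedLipschitz c r A L e)
    (hP : IsDecayKernel P C) (hL : 0 ≤ L) (ht : 0 < t) (htr : t ≤ r) (hht : h ≤ t)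
    (hz : Measurable z) (hzu : ∀ u, ‖z u - u‖ ≤ h) (y : X) :
    |e y - discreteConv P t z e y| ≤
      stepConst X C * (L * t + A * (h / t)) * ballWeight c r y := by
  have hA := he.bound_nonneg (ht.trans_le htr)
  have hC := hP.const_nonneg
  have hB := shiftConst_pos (X := X)
  have hw := ballWeight_pos c (ht.trans_le htr) y
  have hh : 0 ≤ h := (norm_nonneg _).trans (hzu y)
  have hint := he.integrable_mul_dilate hP hL ht htr hz (fun u => (hzu u).trans hht) y
  have : Integrable fun u => e u * dilate t P (u - y) :=
    he.integrable_mul_dilate hP hL ht htr measurable_id (fun u => by simpa using ht.le) y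
  have hint_const := (integrable_dilate_sub ht hP.integrable y).const_mul (e y)
  have hrepr : e y - discreteConv P t z e y = ∫ u, ((e y - e u) * dilate t P (u - y) +
      e u * (dilate t P (u - y) - dilate t P (z u - y))) := by
    calc e y - discreteConv P t z e y
        = ∫ u, (e y * dilate t P (u - y) - e u * dilate t P (z u - y)) := by
          rw [integral_sub hint_const hint, integral_const_mul,
            hP.integral_dilate_sub_eq_one ht, mul_one, discreteConv]
      _ = _ := by congr 1 with u; ring
  have hbound : ∀ u, ‖(e y - e u) * dilate t P (u - y) +
      e u * (dilate t P (u - y) - dilate t P (z u - y))‖ ≤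
      2 * C * (1 + shiftConst X) * (L * t + A * (h / t)) * ballWeight c r y *
        slowKernel t (u - y) := by
    intro u
    refine (abs_add_le _ _).trans ((add_le_add (he.abs_sub_mul_dilate_le hP hL ht htr y u)
      (he.abs_mul_dilate_sub_le hP ht htr hht hzu y u)).trans ?_)
    have hk := slowKernel_pos ht (u - y)
    have h1 : 0 ≤ 2 * C * (L * t) * shiftConst X * (ballWeight c r y * slowKernel t (u - y)) := by
      positivity
    have h2 : 0 ≤ C * (1 + shiftConst X) * A * (h / t) *
      (ballWeight c r y * slowKernel t (u - y)) := by positivity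
    linarith
  rw [hrepr, ← Real.norm_eq_abs]
  refine (norm_integral_le_of_norm_le ((integrable_slowKernel_sub ht y).const_mul _)
    (Eventually.of_forall hbound)).trans ?_
  rw [integral_const_mul, integral_slowKernel_sub ht, stepConst]
  have : 0 ≤ (L * t + A * (h / t)) * ballWeight c r y := by positivity
  linarith

lemma IsWeightedLipschitz.abs_discreteConv_sub_le (he : IsWeightedLipschitz c r A L e)
    (hP : IsDecayKernel P C) (hL : 0 ≤ L) (ht : 0 < t) (htr : t ≤ r)
    (hz : Measurable z) (hzu : ∀ u, ‖z u - u‖ ≤ t) (y y' : X) :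
    |discreteConv P t z e y - discreteConv P t z e y'| ≤
      stepConst X C * A / t * ‖y - y'‖ * (ballWeight c r y + ballWeight c r y') := by
  have hA := he.bound_nonneg (ht.trans_le htr)
  have hC := hP.const_nonneg
  have hB := shiftConst_pos (X := X)
  have hI := slowMass_nonneg (X := X)
  have hw := ballWeight_pos c (ht.trans_le htr)
  have hint := he.integrable_mul_dilate hP hL ht htr hz hzu
  have hk := fun y => (integrable_slowKernel_sub ht y).const_mul (ballWeight c r y)
  simp only [discreteConv]
  rw [← integral_sub (hint y) (hint y'), ← Real.norm_eq_abs]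
  simp only [← mul_sub]
  refine (norm_integral_le_of_norm_le (((hk y).add (hk y')).const_mul _) (Eventually.of_forall
    fun u => he.abs_mul_dilate_sub_dilate_le hP ht htr hzu y y' u)).trans ?_
  rw [integral_const_mul, integral_add' (hk y) (hk y'), integral_const_mul, integral_const_mul,
    integral_slowKernel_sub ht, integral_slowKernel_sub ht]
  have hconst : C * shiftConst X * slowMass X ≤ stepConst X C := by
    have : 0 ≤ C * shiftConst X * slowMass X := by positivity
    have : 0 ≤ 2 * C * slowMass X := by positivity
    unfold stepConst; linarith
  have hpos : 0 ≤ A / t * ‖y - y'‖ * (ballWeight c r y + ballWeight c r y') := by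
    have := hw y; have := hw y'; positivity
  calc _ = C * shiftConst X * slowMass X *
        (A / t * ‖y - y'‖ * (ballWeight c r y + ballWeight c r y')) := by ring
    _ ≤ stepConst X C * (A / t * ‖y - y'‖ * (ballWeight c r y + ballWeight c r y')) := by gcongr
    _ = _ := by ring

theorem IsWeightedLipschitz.sub_discreteConv (he : IsWeightedLipschitz c r A L e)
    (hP : IsDecayKernel P C) (hL : 0 ≤ L) (ht : 0 < t) (htr : t ≤ r) (hht : h ≤ t)
    (hz : Measurable z) (hzu : ∀ u, ‖z u - u‖ ≤ h) :
    IsWeightedLipschitz c r (stepConst X C * (L * t + A * (h / t))) (L + stepConst X C * A / t)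
      fun y => e y - discreteConv P t z e y where
  abs_le := he.abs_sub_discreteConv_le hP hL ht htr hht hz hzu
  abs_sub_le y y' := by
    rw [sub_sub_sub_comm]
    refine (abs_sub _ _).trans ((add_le_add (he.abs_sub_le y y')
      (he.abs_discreteConv_sub_le hP hL ht htr hz (fun u => (hzu u).trans hht) y y')).trans_eq ?_)
    ring

end Discretisation

section SlidingBalls

variable {X : Type*} [PseudoMetricSpace X] [MeasureSpace X] [OpensMeasurableSpace X]

lemma setLIntegral_ball_eq_indicator (W : X → ℝ≥0∞) (u : X) (h : ℝ) :
    ∫⁻ y in ball u h, W y =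
      ∫⁻ y, {q : X × X | dist q.1 q.2 < h}.indicator (fun q => W q.2) (u, y) := by
  rw [← lintegral_indicator measurableSet_ball]
  congr 1 with y
  simp only [Set.indicator, mem_ball, Set.mem_ofPred_eq, dist_comm]

variable [SecondCountableTopology X]

lemma measurableSet_dist_lt (h : ℝ) : MeasurableSet {q : X × X | dist q.1 q.2 < h} :=
  measurableSet_lt (by fun_prop) measurable_const

lemma measurable_setLIntegral_ball [SFinite (volume : Measure X)] {W : X → ℝ≥0∞}
    (hW : Measurable W) (h : ℝ) :
    Measurable fun u => ∫⁻ y in ball u h, W y := by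
  simp_rw [setLIntegral_ball_eq_indicator W]
  exact Measurable.lintegral_prod_right
    ((hW.comp measurable_snd).indicator (measurableSet_dist_lt h))

end SlidingBalls

section UnitBall

variable {X : Type*} [NormedAddCommGroup X] [MeasureSpace X]

/-- The Lebesgue measure of the unit ball. -/
def unitBallVol (X : Type*) [NormedAddCommGroup X] [MeasureSpace X] : ℝ :=
  volume.real (ball (0 : X) 1)

lemma unitBallVol_pos [ProperSpace X] [(volume : Measure X).IsAddHaarMeasure] : 0 < unitBallVol X :=
  ENNReal.toReal_pos (measure_ball_pos volume _ one_pos).ne' measure_ball_lt_top.ne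

/-- The constant in the bound for the sampled weighted integral. -/
def selectionConst (X : Type*) [NormedAddCommGroup X] [NormedSpace ℝ X] [MeasureSpace X]
    (p : ℝ) : ℝ :=
  4 ^ (Module.finrank ℝ X + 1) * 2 ^ Module.finrank ℝ X *
    (4 ^ (Module.finrank ℝ X + 1) * 2 ^ Module.finrank ℝ X / unitBallVol X) ^ (p - 1)

lemma selectionConst_pos [NormedSpace ℝ X] [ProperSpace X]
    [(volume : Measure X).IsAddHaarMeasure] (p : ℝ) : 0 < selectionConst X p := by
  have := unitBallVol_pos (X := X)
  unfold selectionConst; positivity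

end UnitBall

section Weighted

variable {X : Type*} [NormedAddCommGroup X] [NormedSpace ℝ X]

/-- The weighted function `w F`, with `w` the weight of the ball `B(c, r)`. -/
def weighted (c : X) (r : ℝ) (F : X → ℝ≥0∞) (y : X) : ℝ≥0∞ :=
  ENNReal.ofReal (ballWeight c r y) * F y

lemma weighted_rpow_le_of_mem_ball {p : ℝ} (hp : 1 ≤ p) (c : X) {r : ℝ} (F : X → ℝ≥0∞) {u y : X}
    (hy : y ∈ ball u r) : ENNReal.ofReal (ballWeight c r u) ^ p⁻¹ * F y ^ p⁻¹ ≤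
      ENNReal.ofReal (4 ^ (Module.finrank ℝ X + 1)) * weighted c r F y ^ p⁻¹ := by
  have hp' : 0 ≤ p⁻¹ := by positivity
  have hone : (1 : ℝ≥0∞) ≤ ENNReal.ofReal (4 ^ (Module.finrank ℝ X + 1)) := by
    rw [ENNReal.one_le_ofReal]; exact one_le_pow₀ (by norm_num)
  rw [weighted, ENNReal.mul_rpow_of_nonneg _ _ hp', ← mul_assoc]
  gcongr
  calc ENNReal.ofReal (ballWeight c r u) ^ p⁻¹
      ≤ (ENNReal.ofReal (4 ^ (Module.finrank ℝ X + 1)) *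
          ENNReal.ofReal (ballWeight c r y)) ^ p⁻¹ := by
        rw [← ENNReal.ofReal_mul (by positivity)]
        gcongr
        exact ballWeight_le_of_mem_ball c hy
    _ ≤ _ := by
        rw [ENNReal.mul_rpow_of_nonneg _ _ hp']
        gcongr
        simpa using ENNReal.rpow_le_rpow_of_exponent_le hone (inv_le_one_of_one_le₀ hp)

variable [MeasureSpace X] [BorelSpace X]

lemma measurable_weighted (c : X) {r : ℝ} (hr : 0 < r) {F : X → ℝ≥0∞} (hF : Measurable F) :
    Measurable (weighted c r F) :=
  (continuous_ballWeight c hr).measurable.ennreal_ofReal.mul hF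

lemma weighted_selection_rpow_le {p : ℝ} (hp : 1 ≤ p) {F : X → ℝ≥0∞} (hF : Measurable F) (c : X)
    {r h : ℝ} (hhr : h ≤ r) (hr : 0 < r) {u z : X}
    (hz : F z ^ p⁻¹ ≤ (volume (ball (0 : X) (h / 2)))⁻¹ * ∫⁻ y in ball u h, F y ^ p⁻¹) :
    (ENNReal.ofReal (ballWeight c r u) * F z) ^ p⁻¹ ≤
      ENNReal.ofReal (4 ^ (Module.finrank ℝ X + 1)) * (volume (ball (0 : X) (h / 2)))⁻¹ *
        ∫⁻ y in ball u h, weighted c r F y ^ p⁻¹ := by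
  rw [ENNReal.mul_rpow_of_nonneg _ _ (by positivity)]
  calc _ ≤ ENNReal.ofReal (ballWeight c r u) ^ p⁻¹ *
        ((volume (ball (0 : X) (h / 2)))⁻¹ * ∫⁻ y in ball u h, F y ^ p⁻¹) := by gcongr
    _ = (volume (ball (0 : X) (h / 2)))⁻¹ *
        ∫⁻ y in ball u h, ENNReal.ofReal (ballWeight c r u) ^ p⁻¹ * F y ^ p⁻¹ := by
        rw [lintegral_const_mul _ (hF.pow_const _), mul_left_comm]
    _ ≤ (volume (ball (0 : X) (h / 2)))⁻¹ *
        ∫⁻ y in ball u h, ENNReal.ofReal (4 ^ (Module.finrank ℝ X + 1)) *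
          weighted c r F y ^ p⁻¹ := by
        gcongr _ * ?_
        exact setLIntegral_mono (((measurable_weighted c hr hF).pow_const _).const_mul _)
          fun y hy => weighted_rpow_le_of_mem_ball hp c F (ball_subset_ball hhr hy)
    _ = _ := by
        rw [lintegral_const_mul _ ((measurable_weighted c hr hF).pow_const _), ← mul_assoc,
          mul_comm (volume _)⁻¹]

end Weighted

lemma ennreal_rpow_eq_mul_rpow_sub_one {p : ℝ} (hp : 1 ≤ p) (a : ℝ≥0∞) :
    a ^ p = a * a ^ (p - 1) := by
  conv_lhs => rw [← add_sub_cancel 1 p]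
  rw [ENNReal.rpow_add_of_nonneg _ _ zero_le_one (by linarith), ENNReal.rpow_one]

section Selection

variable {X : Type*} [NormedAddCommGroup X] [NormedSpace ℝ X] [FiniteDimensional ℝ X]
  [MeasureSpace X] [BorelSpace X] [(volume : Measure X).IsAddHaarMeasure]

lemma lintegral_setLIntegral_ball {W : X → ℝ≥0∞} (hW : Measurable W) (h : ℝ) :
    ∫⁻ u, ∫⁻ y in ball u h, W y = volume (ball (0 : X) h) * ∫⁻ y, W y := by
  have hinner : ∀ y,
      ∫⁻ u, {q : X × X | dist q.1 q.2 < h}.indicator (fun q => W q.2) (u, y) =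
        volume (ball (0 : X) h) * W y := by
    intro y
    have hslice : ∀ u, {q : X × X | dist q.1 q.2 < h}.indicator (fun q => W q.2) (u, y) =
        (ball y h).indicator (fun _ => W y) u := fun u => by
      simp only [Set.indicator, mem_ball, Set.mem_ofPred_eq]
    simp_rw [hslice]
    rw [lintegral_indicator measurableSet_ball, lintegral_const, Measure.restrict_apply_univ,
      Measure.addHaar_ball_center, mul_comm]
  simp_rw [setLIntegral_ball_eq_indicator W]
  rw [lintegral_lintegral_swap (f := fun u y =>
    {q : X × X | dist q.1 q.2 < h}.indicator (fun q => W q.2) (u, y))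
    (((hW.comp measurable_snd).indicator (measurableSet_dist_lt h)).aemeasurable)]
  simp_rw [hinner]
  exact lintegral_const_mul _ hW

lemma volume_ball_eq (c : X) {r : ℝ} (hr : 0 < r) :
    volume (ball c r) = ENNReal.ofReal (r ^ Module.finrank ℝ X * unitBallVol X) := by
  rw [Measure.addHaar_ball_of_pos volume c hr, ENNReal.ofReal_mul (by positivity), unitBallVol,
    ofReal_measureReal measure_ball_lt_top.ne]

lemma exists_measurable_selection_le_average {H : X → ℝ≥0∞} (hH : Measurable H) {h : ℝ}
    (hh : 0 < h) : ∃ z : X → X, Measurable z ∧ (∀ u, ‖z u - u‖ ≤ h) ∧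
      ∀ u, H (z u) ≤ (volume (ball (0 : X) (h / 2)))⁻¹ * ∫⁻ y in ball u h, H y := by
  classical
  have hh2 : 0 < h / 2 := by positivity
  set e := TopologicalSpace.denseSeq X
  have hgood : ∀ n, ∃ x ∈ ball (e n) (h / 2),
      H x ≤ (volume (ball (0 : X) (h / 2)))⁻¹ * ∫⁻ y in ball (e n) (h / 2), H y := by
    intro n
    obtain ⟨x, hx, hx'⟩ := exists_le_setLAverage (μ := volume) (f := H) (s := ball (e n) (h / 2))
      (measure_ball_pos volume _ hh2).ne' measure_ball_lt_top.ne hH.aemeasurable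
    rw [setLAverage_eq, Measure.addHaar_ball_center, ENNReal.div_eq_inv_mul] at hx'
    exact ⟨x, hx, hx'⟩
  choose p hp hp_le using hgood
  have hdense : ∀ u, ∃ n, dist u (e n) < h / 2 := fun u =>
    (TopologicalSpace.denseRange_denseSeq X).exists_dist_lt u hh2
  have hmeas : Measurable fun u => Nat.find (hdense u) :=
    measurable_find _ fun k => measurableSet_lt (by fun_prop) measurable_const
  refine ⟨fun u => p (Nat.find (hdense u)), measurable_from_nat.comp hmeas, fun u => ?_,
    fun u => (hp_le _).trans ?_⟩
  · have hp' := mem_ball.1 (hp (Nat.find (hdense u)))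
    have hu := Nat.find_spec (hdense u)
    rw [← dist_eq_norm]
    linarith [dist_triangle_right (p (Nat.find (hdense u))) u (e (Nat.find (hdense u)))]
  · gcongr
    refine ball_subset_ball' ?_
    have hu := Nat.find_spec (hdense u)
    rw [dist_comm] at hu
    linarith

variable {p : ℝ}

-- One factor of `G = G^{1/p} (G^{1/p})^{p - 1}` is integrated, the others are bounded uniformly.
lemma lintegral_le_of_rpow_inv_le_setLIntegral_ball (hp : 1 ≤ p) {W : X → ℝ≥0∞}
    (hW : Measurable W) {G : X → ℝ≥0∞} {D : ℝ≥0∞} {h : ℝ}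
    (hG : ∀ u, G u ^ p⁻¹ ≤ D * ∫⁻ y in ball u h, W y) :
    ∫⁻ u, G u ≤ D ^ p * volume (ball (0 : X) h) * (∫⁻ y, W y) ^ p := by
  have hp1 : 0 ≤ p - 1 := by linarith
  have hGle : ∀ u, G u ≤ (D * ∫⁻ y in ball u h, W y) * (D * ∫⁻ y, W y) ^ (p - 1) := by
    intro u
    have hglobal : D * ∫⁻ y in ball u h, W y ≤ D * ∫⁻ y, W y := by
      gcongr; exact Measure.restrict_le_self
    calc G u = (G u ^ p⁻¹) ^ p := by
          rw [← ENNReal.rpow_mul, inv_mul_cancel₀ (by positivity), ENNReal.rpow_one]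
      _ = G u ^ p⁻¹ * (G u ^ p⁻¹) ^ (p - 1) := ennreal_rpow_eq_mul_rpow_sub_one hp _
      _ ≤ _ := by
          gcongr
          · exact hG u
          · exact (hG u).trans hglobal
  have hmeas := measurable_setLIntegral_ball hW h
  calc ∫⁻ u, G u
      ≤ ∫⁻ u, (D * ∫⁻ y in ball u h, W y) * (D * ∫⁻ y, W y) ^ (p - 1) := lintegral_mono hGle
    _ = (D * (volume (ball (0 : X) h) * ∫⁻ y, W y)) * (D * ∫⁻ y, W y) ^ (p - 1) := by
        rw [lintegral_mul_const _ (hmeas.const_mul _), lintegral_const_mul _ hmeas,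
          lintegral_setLIntegral_ball hW]
    _ = _ := by
        rw [ENNReal.mul_rpow_of_nonneg _ _ hp1, ennreal_rpow_eq_mul_rpow_sub_one hp D,
          ennreal_rpow_eq_mul_rpow_sub_one hp (∫⁻ y, W y)]
        ring

lemma rpow_inv_volume_half_ball_mul_volume_ball {h : ℝ} (hh : 0 < h) :
    (ENNReal.ofReal (4 ^ (Module.finrank ℝ X + 1)) * (volume (ball (0 : X) (h / 2)))⁻¹) ^ p *
        volume (ball (0 : X) h) =
      ENNReal.ofReal (selectionConst X p * h ^ (-(Module.finrank ℝ X * (p - 1)))) := by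
  have hω := unitBallVol_pos (X := X)
  have hscale : 4 ^ (Module.finrank ℝ X + 1) *
      ((h / 2) ^ Module.finrank ℝ X * unitBallVol X)⁻¹ =
      4 ^ (Module.finrank ℝ X + 1) * 2 ^ Module.finrank ℝ X / unitBallVol X *
        (h ^ Module.finrank ℝ X)⁻¹ := by
    rw [div_pow]; field_simp
  rw [volume_ball_eq _ (half_pos hh), volume_ball_eq _ hh,
    ← ENNReal.ofReal_inv_of_pos (by positivity), ← ENNReal.ofReal_mul (by positivity),
    ENNReal.ofReal_rpow_of_pos (by positivity), ← ENNReal.ofReal_mul (by positivity), hscale]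
  congr 1
  set a := (4 : ℝ) ^ (Module.finrank ℝ X + 1) * 2 ^ Module.finrank ℝ X with ha
  have hsplit : ∀ b : ℝ, 0 < b → b ^ p = b * b ^ (p - 1) := fun b hb => by
    rw [Real.rpow_sub_one hb.ne', mul_div_cancel₀ _ hb.ne']
  have hpow : ((h ^ Module.finrank ℝ X)⁻¹) ^ (p - 1) = h ^ (-(Module.finrank ℝ X * (p - 1))) := by
    rw [← Real.rpow_natCast, ← Real.rpow_neg hh.le, ← Real.rpow_mul hh.le, neg_mul]
  rw [hsplit _ (by positivity), Real.mul_rpow (by positivity) (by positivity), hpow,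
    selectionConst, ← ha]
  field_simp

theorem exists_selection_lintegral_weighted_le (hp : 1 ≤ p) {F : X → ℝ≥0∞} (hF : Measurable F)
    (c : X) {r h : ℝ} (hh : 0 < h) (hhr : h ≤ r) :
    ∃ z : X → X, Measurable z ∧ (∀ u, ‖z u - u‖ ≤ h) ∧
      ∫⁻ u, ENNReal.ofReal (ballWeight c r u) * F (z u) ≤
        ENNReal.ofReal (selectionConst X p * h ^ (-(Module.finrank ℝ X * (p - 1)))) *
          (∫⁻ y, weighted c r F y ^ p⁻¹) ^ p := by
  have hr : 0 < r := hh.trans_le hhr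
  obtain ⟨z, hz, hzu, hzF⟩ := exists_measurable_selection_le_average (hF.pow_const p⁻¹) hh
  refine ⟨z, hz, hzu, ?_⟩
  rw [← rpow_inv_volume_half_ball_mul_volume_ball hh]
  exact lintegral_le_of_rpow_inv_le_setLIntegral_ball hp
    ((measurable_weighted c hr hF).pow_const _)
    fun u => weighted_selection_rpow_le hp hF c hhr hr (hzF u)

end Selection

section LocalMaximal

variable {X : Type*} [NormedAddCommGroup X] [NormedSpace ℝ X] [MeasureSpace X]

/-- The local maximal function `sup_{0 < t < R} |P_t * f|`. -/
def localMaximal (P : X → ℝ) (R : ℝ) (f : X → ℝ) (x : X) : ℝ≥0∞ :=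
  ⨆ (t : ℝ) (_ : 0 < t ∧ t < R), ENNReal.ofReal |∫ y, dilate t P (x - y) * f y|

lemma ofReal_abs_integral_le_localMaximal (P : X → ℝ) {t R : ℝ} (ht : 0 < t) (htR : t < R)
    (f : X → ℝ) (x : X) :
    ENNReal.ofReal |∫ y, dilate t P (x - y) * f y| ≤ localMaximal P R f x :=
  le_iSup₂_of_le (f := fun (t : ℝ) (_ : 0 < t ∧ t < R) =>
    ENNReal.ofReal |∫ y, dilate t P (x - y) * f y|) t ⟨ht, htR⟩ le_rfl

lemma mul_discreteConv_eq (P f e : X → ℝ) (t : ℝ) (z : X → X) (y : X) :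
    f y * discreteConv P t z e y = ∫ u, (f y * e u) * dilate t P (z u - y) := by
  simp_rw [discreteConv, ← integral_const_mul, mul_assoc]

variable [BorelSpace X] {P : X → ℝ} {C : ℝ} {f e : X → ℝ} {t : ℝ}

lemma IsDecayKernel.continuous_integral_dilate_sub_mul (hP : IsDecayKernel P C) (ht : 0 < t)
    (hf : Integrable f) : Continuous fun x => ∫ y, dilate t P (x - y) * f y := by
  have hcont := hP.continuous_dilate t
  refine continuous_of_dominated (bound := fun y => C * (t ^ Module.finrank ℝ X)⁻¹ * ‖f y‖)
    (fun x => ?_) (fun x => Eventually.of_forall fun y => ?_) (hf.norm.const_mul _)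
    (Eventually.of_forall fun y => by fun_prop)
  · exact (hcont.comp (continuous_const.sub continuous_id)).aestronglyMeasurable.mul hf.1
  · rw [norm_mul]
    exact mul_le_mul_of_nonneg_right (hP.abs_dilate_le_const ht _) (norm_nonneg _)

lemma IsDecayKernel.measurable_localMaximal (hP : IsDecayKernel P C) (R : ℝ) (hf : Integrable f) :
    Measurable (localMaximal P R f) :=
  (lowerSemicontinuous_iSup fun _ => lowerSemicontinuous_iSup fun ht =>
    (ENNReal.continuous_ofReal.comp
      (hP.continuous_integral_dilate_sub_mul ht.1 hf).abs).lowerSemicontinuous).measurable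

variable [FiniteDimensional ℝ X] {z : X → X}

lemma IsDecayKernel.integrable_prod_mul_dilate (hP : IsDecayKernel P C) (ht : 0 < t)
    (hf : Integrable f) (he : Integrable e) (hz : Measurable z) :
    Integrable (fun q : X × X => (f q.1 * e q.2) * dilate t P (z q.2 - q.1))
      (volume.prod volume) :=
  (hf.mul_prod he).mul_bdd
    ((hP.continuous_dilate t).measurable.comp
      ((hz.comp measurable_snd).sub measurable_fst)).aestronglyMeasurable
    (Eventually.of_forall fun _ => hP.abs_dilate_le_const ht _)

variable [(volume : Measure X).IsAddHaarMeasure]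

lemma IsDecayKernel.integrable_mul_discreteConv (hP : IsDecayKernel P C) (ht : 0 < t)
    (hf : Integrable f) (he : Integrable e) (hz : Measurable z) :
    Integrable fun y => f y * discreteConv P t z e y := by
  simp_rw [mul_discreteConv_eq]
  exact (hP.integrable_prod_mul_dilate ht hf he hz).integral_prod_left

lemma IsDecayKernel.integral_mul_discreteConv (hP : IsDecayKernel P C) (ht : 0 < t)
    (hf : Integrable f) (he : Integrable e) (hz : Measurable z) :
    ∫ y, f y * discreteConv P t z e y = ∫ u, e u * ∫ y, dilate t P (z u - y) * f y := by
  simp_rw [mul_discreteConv_eq]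
  rw [integral_integral_swap (hP.integrable_prod_mul_dilate ht hf he hz)]
  congr 1 with u
  rw [← integral_const_mul]
  congr 1 with y
  ring

lemma IsDecayKernel.ofReal_abs_integral_mul_discreteConv_le (hP : IsDecayKernel P C) {R : ℝ}
    (ht : 0 < t) (htR : t < R) (hf : Integrable f) (he : Integrable e) (hz : Measurable z) :
    ENNReal.ofReal |∫ y, f y * discreteConv P t z e y| ≤
      ∫⁻ u, ENNReal.ofReal |e u| * localMaximal P R f (z u) := by
  rw [hP.integral_mul_discreteConv ht hf he hz, ← Real.norm_eq_abs, ofReal_norm]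
  refine (enorm_integral_le_lintegral_enorm _).trans (lintegral_mono fun u => ?_)
  rw [enorm_mul, Real.enorm_eq_ofReal_abs, Real.enorm_eq_ofReal_abs]
  gcongr
  exact ofReal_abs_integral_le_localMaximal P ht htR f (z u)

end LocalMaximal

section TestFunction

/-- The exponent `p > 1` with `dim X * (p - 1) = 1 / 4`; the maximal function enters the estimates
through averages of its power `1 / p`. -/
def maxExp (X : Type*) [NormedAddCommGroup X] [NormedSpace ℝ X] : ℝ :=
  1 + (4 * (Module.finrank ℝ X : ℝ))⁻¹

lemma one_le_maxExp (X : Type*) [NormedAddCommGroup X] [NormedSpace ℝ X] : 1 ≤ maxExp X := by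
  unfold maxExp
  linarith [show 0 ≤ (4 * (Module.finrank ℝ X : ℝ))⁻¹ by positivity]

lemma finrank_mul_maxExp_sub_one (X : Type*) [NormedAddCommGroup X] [NormedSpace ℝ X]
    [FiniteDimensional ℝ X] [Nontrivial X] :
    (Module.finrank ℝ X : ℝ) * (maxExp X - 1) = 1 / 4 := by
  have : (0 : ℝ) < Module.finrank ℝ X := by exact_mod_cast Module.finrank_pos
  unfold maxExp
  field_simp
  ring

lemma one_lt_maxExp (X : Type*) [NormedAddCommGroup X] [NormedSpace ℝ X]
    [FiniteDimensional ℝ X] [Nontrivial X] : 1 < maxExp X := by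
  have : (0 : ℝ) < Module.finrank ℝ X := by exact_mod_cast Module.finrank_pos
  exact lt_add_of_pos_right 1 (by positivity)

variable {X : Type*} [NormedAddCommGroup X] [NormedSpace ℝ X] [MeasureSpace X]

/-- The quasi-norm of `w F` in `L^{1/p}`, with `w` the weight of `B(c, r)` and `p = maxExp X`. -/
def weightedNorm (c : X) (r : ℝ) (F : X → ℝ≥0∞) : ℝ≥0∞ :=
  (∫⁻ y, weighted c r F y ^ (maxExp X)⁻¹) ^ maxExp X

variable {P f e : X → ℝ} {C r A L : ℝ} {c : X}

lemma IsWeightedLipschitz.abs_integral_mul_le (he : IsWeightedLipschitz c r A L e) (hr : 0 < r)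
    (hf : Integrable f) : |∫ y, f y * e y| ≤ (∫ y, ‖f y‖) * A := by
  rw [← integral_mul_const, ← Real.norm_eq_abs]
  refine norm_integral_le_of_norm_le (hf.norm.mul_const _) (Eventually.of_forall fun y => ?_)
  rw [norm_mul]
  gcongr
  exact (he.abs_le y).trans
    (mul_le_of_le_one_right (he.bound_nonneg hr) (ballWeight_le_one c hr y))

variable [BorelSpace X]

lemma IsWeightedLipschitz.integrable_mul (he : IsWeightedLipschitz c r A L e) (hr : 0 < r)
    (hL : 0 ≤ L) (hf : Integrable f) : Integrable fun y => f y * e y :=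
  hf.mul_bdd (c := A) (he.continuous hr hL).aestronglyMeasurable (Eventually.of_forall fun y =>
    (he.abs_le y).trans (mul_le_of_le_one_right (he.bound_nonneg hr) (ballWeight_le_one c hr y)))

lemma IsWeightedLipschitz.lintegral_ofReal_abs_mul_le (he : IsWeightedLipschitz c r A L e)
    (hr : 0 < r) {F : X → ℝ≥0∞} (hF : Measurable F) :
    ∫⁻ u, ENNReal.ofReal |e u| * F u ≤
      ENNReal.ofReal A * ∫⁻ u, ENNReal.ofReal (ballWeight c r u) * F u := by
  rw [← lintegral_const_mul (f := fun u => ENNReal.ofReal (ballWeight c r u) * F u) _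
    (measurable_weighted c hr hF)]
  refine lintegral_mono fun u => ?_
  rw [← mul_assoc, ← ENNReal.ofReal_mul (he.bound_nonneg hr)]
  gcongr
  exact he.abs_le u

variable [FiniteDimensional ℝ X] [(volume : Measure X).IsAddHaarMeasure]

-- Subtracting a superposition of kernels sampled where the maximal function is below average
-- leaves a smaller test function, at a cost controlled by the maximal function.
lemma IsWeightedLipschitz.exists_step [Nontrivial X] (he : IsWeightedLipschitz c r A L e)
    (hP : IsDecayKernel P C) (hf : Integrable f) (hL : 0 ≤ L) {h t R : ℝ} (hh : 0 < h)
    (hht : h ≤ t) (htr : t ≤ r) (htR : t < R) :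
    ∃ e', IsWeightedLipschitz c r (stepConst X C * (L * t + A * (h / t)))
        (L + stepConst X C * A / t) e' ∧
      ENNReal.ofReal |∫ y, f y * e y| ≤ ENNReal.ofReal |∫ y, f y * e' y| +
        ENNReal.ofReal (A * (selectionConst X (maxExp X) * h ^ (-(1 / 4) : ℝ))) *
          weightedNorm c r (localMaximal P R f) := by
  have ht : 0 < t := hh.trans_le hht
  have hr : 0 < r := ht.trans_le htr
  have hFm := hP.measurable_localMaximal R hf
  obtain ⟨z, hz, hzu, hzF⟩ := exists_selection_lintegral_weighted_le (one_le_maxExp X) hFm c hh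
    (hht.trans htr)
  have hei := he.integrable hr hL
  have hsplit : ∫ y, f y * e y =
      (∫ y, f y * (e y - discreteConv P t z e y)) + ∫ y, f y * discreteConv P t z e y := by
    simp_rw [mul_sub]
    rw [integral_sub (he.integrable_mul hr hL hf) (hP.integrable_mul_discreteConv ht hf hei hz),
      sub_add_cancel]
  refine ⟨_, he.sub_discreteConv hP hL ht htr hht hz hzu, ?_⟩
  rw [hsplit]
  refine (ENNReal.ofReal_le_ofReal (abs_add_le _ _)).trans ?_
  rw [ENNReal.ofReal_add (abs_nonneg _) (abs_nonneg _)]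
  gcongr
  calc _ ≤ ∫⁻ u, ENNReal.ofReal |e u| * localMaximal P R f (z u) :=
        hP.ofReal_abs_integral_mul_discreteConv_le ht htR hf hei hz
    _ ≤ ENNReal.ofReal A * ∫⁻ u, ENNReal.ofReal (ballWeight c r u) * localMaximal P R f (z u) :=
        he.lintegral_ofReal_abs_mul_le hr (hFm.comp hz)
    _ ≤ _ := by
        rw [finrank_mul_maxExp_sub_one] at hzF
        rw [ENNReal.ofReal_mul (he.bound_nonneg hr), mul_assoc]
        gcongr
        exact hzF

end TestFunction

section Iteration

/-- The scales `t_n = μ ^ (4 n) r / 2` of the iterated discretisation. -/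
def iterScale (μ r : ℝ) (n : ℕ) : ℝ := μ ^ (4 * n) * (r / 2)

/-- The bound for the `n`-th iterated test function. -/
def iterBound (μ : ℝ) (n : ℕ) : ℝ := (μ / 2) ^ n / μ ^ 2

/-- The Lipschitz constant of the `n`-th iterated test function. -/
def iterLip (μ r : ℝ) (n : ℕ) : ℝ := (μ / 2) ^ n / iterScale μ r n

variable {μ r D : ℝ}

lemma iterScale_pos (hμ : 0 < μ) (hr : 0 < r) (n : ℕ) : 0 < iterScale μ r n := by
  unfold iterScale; positivity

lemma iterScale_succ (μ r : ℝ) (n : ℕ) : iterScale μ r (n + 1) = μ ^ 4 * iterScale μ r n := by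
  unfold iterScale; ring

lemma iterScale_succ_le (hμ : 0 < μ) (hμ1 : μ ≤ 1) (hr : 0 < r) (n : ℕ) :
    iterScale μ r (n + 1) ≤ iterScale μ r n :=
  (iterScale_succ μ r n).trans_le
    (mul_le_of_le_one_left (iterScale_pos hμ hr n).le (pow_le_one₀ hμ.le hμ1))

lemma iterScale_lt (hμ : 0 < μ) (hμ1 : μ ≤ 1) (hr : 0 < r) (n : ℕ) : iterScale μ r n < r :=
  (mul_le_of_le_one_left (half_pos hr).le (pow_le_one₀ hμ.le hμ1)).trans_lt (half_lt_self hr)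

lemma iterLip_nonneg (hμ : 0 < μ) (hr : 0 < r) (n : ℕ) : 0 ≤ iterLip μ r n :=
  div_nonneg (by positivity) (iterScale_pos hμ hr n).le

lemma le_iterBound_succ (hμ : 0 < μ) (hμ1 : μ ≤ 1) (hD : D * μ = 1 / 4) (hr : 0 < r) (n : ℕ) :
    D * (iterLip μ r n * iterScale μ r n +
      iterBound μ n * (iterScale μ r (n + 1) / iterScale μ r n)) ≤ iterBound μ (n + 1) := by
  have hscale := iterScale_pos hμ hr n
  have hlhs : D * (iterLip μ r n * iterScale μ r n +
      iterBound μ n * (iterScale μ r (n + 1) / iterScale μ r n)) =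
      (μ / 2) ^ n * μ⁻¹ * (D * μ * (1 + μ ^ 2)) := by
    rw [iterScale_succ, iterLip, iterBound]; field_simp
  have hrhs : iterBound μ (n + 1) = (μ / 2) ^ n * μ⁻¹ * (1 / 2) := by
    rw [iterBound, pow_succ]; field_simp
  rw [hlhs, hrhs, hD]
  gcongr
  nlinarith

lemma le_iterLip_succ (hμ : 0 < μ) (hμ1 : μ ≤ 1) (hD : D * μ = 1 / 4) (hD1 : 1 ≤ D) (hr : 0 < r)
    (n : ℕ) : iterLip μ r n + D * iterBound μ n / iterScale μ r n ≤ iterLip μ r (n + 1) := by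
  have hscale := iterScale_pos hμ hr n
  have hlhs : iterLip μ r n + D * iterBound μ n / iterScale μ r n =
      iterLip μ r n * (1 + D / μ ^ 2) := by
    rw [iterLip, iterBound]; field_simp
  have hrhs : iterLip μ r (n + 1) = iterLip μ r n * (2 * D / μ ^ 2) := by
    have hDμ : D = (4 * μ)⁻¹ := by field_simp; linarith
    rw [iterLip, iterLip, iterScale_succ, pow_succ, hDμ]; field_simp; norm_num
  have hone : 1 ≤ D / μ ^ 2 := by
    rw [le_div_iff₀ (by positivity), one_mul]
    exact (pow_le_one₀ hμ.le hμ1).trans hD1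
  rw [hlhs, hrhs, mul_div_assoc]
  gcongr
  · exact iterLip_nonneg hμ hr n
  · linarith

lemma half_rpow_neg_quarter_le (hr : 0 < r) :
    (r / 2) ^ (-(1 / 4) : ℝ) ≤ 2 * r ^ (-(1 / 4) : ℝ) := by
  rw [Real.div_rpow hr.le zero_le_two, div_eq_inv_mul, ← Real.rpow_neg zero_le_two, neg_neg]
  gcongr
  exact (Real.rpow_le_rpow_of_exponent_le one_le_two (by norm_num)).trans_eq (Real.rpow_one 2)

lemma iterScale_rpow_neg_quarter_le (hμ : 0 < μ) (hr : 0 < r) (n : ℕ) :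
    iterScale μ r n ^ (-(1 / 4) : ℝ) ≤ (μ ^ n)⁻¹ * (2 * r ^ (-(1 / 4) : ℝ)) := by
  have hpow : (μ ^ (4 * n)) ^ (-(1 / 4) : ℝ) = (μ ^ n)⁻¹ := by
    rw [mul_comm 4 n, pow_mul, ← Real.rpow_natCast (μ ^ n) 4, ← Real.rpow_mul (by positivity),
      ← Real.rpow_neg_one]
    norm_num
  rw [iterScale, Real.mul_rpow (by positivity) (by positivity), hpow]
  gcongr
  exact half_rpow_neg_quarter_le hr

lemma iterBound_mul_rpow_le (hμ : 0 < μ) (hr : 0 < r) {S : ℝ} (hS : 0 ≤ S) (n : ℕ) :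
    iterBound μ n * (S * iterScale μ r (n + 1) ^ (-(1 / 4) : ℝ)) ≤
      2 * (μ ^ 3)⁻¹ * S * r ^ (-(1 / 4) : ℝ) * (1 / 2) ^ n := by
  have hbound : 0 ≤ iterBound μ n := by unfold iterBound; positivity
  calc _ ≤ iterBound μ n * (S * ((μ ^ (n + 1))⁻¹ * (2 * r ^ (-(1 / 4) : ℝ)))) := by
        gcongr; exact iterScale_rpow_neg_quarter_le hμ hr _
    _ = _ := by rw [iterBound, div_pow, div_pow, one_pow]; field_simp; ring

lemma tendsto_iterBound (hμ : 0 < μ) (hμ1 : μ ≤ 1) :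
    Tendsto (iterBound μ) atTop (𝓝 0) := by
  simpa only [iterBound, zero_div] using!
    (tendsto_pow_atTop_nhds_zero_of_lt_one (r := μ / 2) (by positivity) (by linarith)).div_const
      (μ ^ 2)

variable {X : Type*} [NormedAddCommGroup X] [NormedSpace ℝ X] [FiniteDimensional ℝ X]
  [MeasureSpace X] [BorelSpace X] [(volume : Measure X).IsAddHaarMeasure] [Nontrivial X]
  {P f φ : X → ℝ} {C R : ℝ} {c : X}

lemma IsWeightedLipschitz.exists_iterate (hφ : IsWeightedLipschitz c r 1 (1 / r) φ)
    (hP : IsDecayKernel P C) (hf : Integrable f) (hr : 0 < r) (hrR : r ≤ R) (hμ : 0 < μ)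
    (hμ1 : μ ≤ 1) (hCμ : stepConst X C * μ = 1 / 4) (n : ℕ) :
    ∃ e, IsWeightedLipschitz c r (iterBound μ n) (iterLip μ r n) e ∧
      ENNReal.ofReal |∫ y, f y * φ y| ≤ ENNReal.ofReal |∫ y, f y * e y| +
        ENNReal.ofReal (2 * (μ ^ 3)⁻¹ * selectionConst X (maxExp X) * r ^ (-(1 / 4) : ℝ) *
          (2 - 2 * (1 / 2) ^ n)) * weightedNorm c r (localMaximal P R f) := by
  have hsel := (selectionConst_pos (X := X) (maxExp X)).le
  induction n with
  | zero =>
    refine ⟨φ, hφ.mono hr ?_ ?_, by simp⟩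
    · rw [iterBound, pow_zero]
      exact one_le_one_div (by positivity) (pow_le_one₀ hμ.le hμ1)
    · simp only [iterLip, iterScale, mul_zero, pow_zero, one_mul]
      exact one_div_le_one_div_of_le (by positivity) (by linarith)
  | succ n ih =>
    obtain ⟨e, he, hle⟩ := ih
    obtain ⟨e', he', hle'⟩ := he.exists_step hP hf (iterLip_nonneg hμ hr n)
      (iterScale_pos hμ hr (n + 1)) (iterScale_succ_le hμ hμ1 hr n) (iterScale_lt hμ hμ1 hr n).le
      ((iterScale_lt hμ hμ1 hr n).trans_le hrR)
    refine ⟨e', he'.mono hr (le_iterBound_succ hμ hμ1 hCμ hr n)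
      (le_iterLip_succ hμ hμ1 hCμ hP.one_le_stepConst hr n), hle.trans ?_⟩
    have hpow : (1 / 2 : ℝ) ^ n ≤ 1 := pow_le_one₀ (by norm_num) (by norm_num)
    have hgeom : (2 : ℝ) - 2 * (1 / 2) ^ (n + 1) = (1 / 2) ^ n + (2 - 2 * (1 / 2) ^ n) := by
      ring
    rw [hgeom, mul_add, ENNReal.ofReal_add (by positivity)
      (mul_nonneg (by positivity) (by linarith)), add_mul, ← add_assoc]
    gcongr
    refine hle'.trans ?_
    gcongr _ + ENNReal.ofReal ?_ * _
    exact iterBound_mul_rpow_le hμ hr hsel n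

/-- The constant in the bound for the pairing with a test function. -/
def testConst (X : Type*) [NormedAddCommGroup X] [NormedSpace ℝ X] [MeasureSpace X] (C : ℝ) : ℝ :=
  4 * (4 * stepConst X C) ^ 3 * selectionConst X (maxExp X)

theorem IsWeightedLipschitz.ofReal_abs_integral_mul_le (hφ : IsWeightedLipschitz c r 1 (1 / r) φ)
    (hP : IsDecayKernel P C) (hf : Integrable f) (hr : 0 < r) (hrR : r ≤ R) :
    ENNReal.ofReal |∫ y, f y * φ y| ≤ ENNReal.ofReal (testConst X C * r ^ (-(1 / 4) : ℝ)) *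
      weightedNorm c r (localMaximal P R f) := by
  have hstep := hP.one_le_stepConst
  have hsel := (selectionConst_pos (X := X) (maxExp X)).le
  obtain ⟨μ, hμdef⟩ : ∃ μ, μ = (4 * stepConst X C)⁻¹ := ⟨_, rfl⟩
  have hμ : 0 < μ := by rw [hμdef]; positivity
  have hμ1 : μ ≤ 1 := by rw [hμdef]; exact inv_le_one_of_one_le₀ (by linarith)
  have hCμ : stepConst X C * μ = 1 / 4 := by rw [hμdef]; field_simp
  set M := weightedNorm c r (localMaximal P R f)
  set K := 2 * (μ ^ 3)⁻¹ * selectionConst X (maxExp X) * r ^ (-(1 / 4) : ℝ) with hK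
  have hbound : ∀ n, ENNReal.ofReal |∫ y, f y * φ y| ≤
      ENNReal.ofReal ((∫ y, ‖f y‖) * iterBound μ n) + ENNReal.ofReal (K * 2) * M := by
    intro n
    obtain ⟨e, he, hle⟩ := hφ.exists_iterate hP hf hr hrR hμ hμ1 hCμ n
    refine hle.trans ?_
    gcongr
    · exact he.abs_integral_mul_le hr hf
    · linarith [show (0 : ℝ) ≤ 2 * (1 / 2) ^ n by positivity]
  have hlim : Tendsto (fun n => ENNReal.ofReal ((∫ y, ‖f y‖) * iterBound μ n) +
      ENNReal.ofReal (K * 2) * M) atTop (𝓝 (ENNReal.ofReal (K * 2) * M)) := by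
    simpa only [mul_zero, ENNReal.ofReal_zero, zero_add] using
      (ENNReal.tendsto_ofReal ((tendsto_iterBound hμ hμ1).const_mul (∫ y, ‖f y‖))).add_const _
  refine (ge_of_tendsto' hlim hbound).trans_eq ?_
  rw [hK, hμdef, testConst, inv_pow, inv_inv]
  congr 2
  ring

end Iteration

section PowLevel

/-- The density in `l` of the layer-cake formula
`a ^ (e + 1) / (e + 1) = ∫₀^∞ 1_{l < a} l ^ e dl`. -/
def powLevel (e : ℝ) (a : ℝ≥0∞) (l : ℝ) : ℝ≥0∞ :=
  {l : ℝ | ENNReal.ofReal l < a}.indicator (fun l => ENNReal.ofReal (l ^ e)) l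

lemma measurable_uncurry_powLevel (e : ℝ) :
    Measurable fun q : ℝ≥0∞ × ℝ => powLevel e q.1 q.2 := by
  have h : (fun q : ℝ≥0∞ × ℝ => powLevel e q.1 q.2) =
      {q : ℝ≥0∞ × ℝ | ENNReal.ofReal q.2 < q.1}.indicator fun q => ENNReal.ofReal (q.2 ^ e) := by
    ext q
    simp only [powLevel, Set.indicator, Set.mem_ofPred_eq]
  rw [h]
  exact Measurable.indicator (by fun_prop) (measurableSet_lt (by fun_prop) (by fun_prop))

lemma lintegral_rpow_Ioo {e b : ℝ} (he : -1 < e) (hb : 0 ≤ b) :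
    ∫⁻ l in Set.Ioo 0 b, ENNReal.ofReal (l ^ e) = ENNReal.ofReal (b ^ (e + 1) / (e + 1)) := by
  have hi : IntegrableOn (fun l : ℝ => l ^ e) (Set.Ioo 0 b) :=
    (intervalIntegrable_iff_integrableOn_Ioo_of_le hb).1
      (intervalIntegral.intervalIntegrable_rpow' he)
  rw [← ofReal_integral_eq_lintegral_ofReal hi, ← integral_Ioc_eq_integral_Ioo,
    ← intervalIntegral.integral_of_le hb, integral_rpow (.inl he), Real.zero_rpow (by linarith),
    sub_zero]
  exact (ae_restrict_iff' measurableSet_Ioo).2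
    (Eventually.of_forall fun l hl => Real.rpow_nonneg hl.1.le _)

lemma lintegral_powLevel_of_ne_top {e : ℝ} (he : -1 < e) {a : ℝ≥0∞} (ha : a ≠ ⊤) :
    ∫⁻ l in Set.Ioi 0, powLevel e a l = ENNReal.ofReal (1 / (e + 1)) * a ^ (e + 1) := by
  have he1 : 0 < e + 1 := by linarith
  have hset : {l : ℝ | ENNReal.ofReal l < a} ∩ Set.Ioi 0 = Set.Ioo 0 a.toReal := by
    ext l
    rw [Set.mem_inter_iff, and_comm, Set.mem_Ioo]
    exact and_congr_right fun h0 => ENNReal.ofReal_lt_iff_lt_toReal (Set.mem_Ioi.1 h0).le ha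
  unfold powLevel
  rw [setLIntegral_indicator (measurableSet_lt ENNReal.measurable_ofReal measurable_const), hset,
    lintegral_rpow_Ioo he ENNReal.toReal_nonneg, div_eq_inv_mul, ← one_div,
    ENNReal.ofReal_mul (by positivity),
    ← ENNReal.ofReal_rpow_of_nonneg ENNReal.toReal_nonneg he1.le, ENNReal.ofReal_toReal ha]

lemma lintegral_powLevel {e : ℝ} (he : -1 < e) (a : ℝ≥0∞) :
    ∫⁻ l in Set.Ioi 0, powLevel e a l = ENNReal.ofReal (1 / (e + 1)) * a ^ (e + 1) := by
  rcases eq_or_ne a ⊤ with rfl | ha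
  · have he1 : 0 < e + 1 := by linarith
    have hle : ∀ n : ℕ, ENNReal.ofReal (1 / (e + 1)) * (n : ℝ≥0∞) ^ (e + 1) ≤
        ∫⁻ l in Set.Ioi 0, powLevel e ⊤ l := fun n => by
      rw [← lintegral_powLevel_of_ne_top he (ENNReal.natCast_ne_top n)]
      refine lintegral_mono fun l => Set.indicator_le_indicator_of_subset ?_ (fun _ => bot_le) l
      exact fun l _ => ENNReal.ofReal_lt_top
    have htop : ENNReal.ofReal (1 / (e + 1)) * ⊤ ^ (e + 1) = ⊤ := by
      rw [ENNReal.top_rpow_of_pos he1, ENNReal.mul_top]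
      exact (ENNReal.ofReal_pos.2 (by positivity)).ne'
    have hlim : Tendsto (fun n : ℕ => ENNReal.ofReal (1 / (e + 1)) * (n : ℝ≥0∞) ^ (e + 1)) atTop
        (𝓝 (ENNReal.ofReal (1 / (e + 1)) * ⊤ ^ (e + 1))) :=
      ENNReal.Tendsto.const_mul ((ENNReal.continuous_rpow_const.tendsto ⊤).comp
        ENNReal.tendsto_nat_nhds_top) (.inr ENNReal.ofReal_ne_top)
    rw [htop] at hlim ⊢
    exact top_le_iff.1 (le_of_tendsto' hlim hle)
  · exact lintegral_powLevel_of_ne_top he ha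

lemma lintegral_lintegral_powLevel_swap {Y : Type*} [MeasurableSpace Y] {μ : Measure Y} [SFinite μ]
    {g H : Y → ℝ≥0∞} (hg : Measurable g) (hH : Measurable H) {e : ℝ} (he : -1 < e) :
    ∫⁻ l in Set.Ioi (0 : ℝ), ∫⁻ x, g x * powLevel e (H x) l ∂μ =
      ENNReal.ofReal (1 / (e + 1)) * ∫⁻ x, g x * H x ^ (e + 1) ∂μ := by
  have hmeas : Measurable fun q : Y × ℝ => g q.1 * powLevel e (H q.1) q.2 :=
    (hg.comp measurable_fst).mul ((measurable_uncurry_powLevel e).comp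
      ((hH.comp measurable_fst).prodMk measurable_snd))
  rw [← lintegral_lintegral_swap hmeas.aemeasurable,
    ← lintegral_const_mul _ (show Measurable fun x => g x * H x ^ (e + 1) by fun_prop)]
  refine lintegral_congr fun x => ?_
  have hlevel : Measurable (powLevel e (H x)) :=
    (measurable_uncurry_powLevel e).comp (measurable_const.prodMk measurable_id)
  rw [lintegral_const_mul _ hlevel, lintegral_powLevel he, mul_left_comm]

lemma lintegral_rpow_eq_lintegral_powLevel {Y : Type*} [MeasurableSpace Y] {μ : Measure Y}
    [SFinite μ] {H : Y → ℝ≥0∞} (hH : Measurable H) {p : ℝ} (hp : 0 < p) :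
    ∫⁻ x, H x ^ p ∂μ =
      ENNReal.ofReal p * ∫⁻ l in Set.Ioi (0 : ℝ), ∫⁻ x, powLevel (p - 1) (H x) l ∂μ := by
  have h := lintegral_lintegral_powLevel_swap (μ := μ) measurable_one hH
    (e := p - 1) (by linarith)
  simp only [Pi.one_apply, one_mul, sub_add_cancel] at h
  rw [h, ← mul_assoc, ← ENNReal.ofReal_mul hp.le, mul_one_div_cancel hp.ne', ENNReal.ofReal_one,
    one_mul]

end PowLevel

lemma exists_lt_setLIntegral_smaller_ball {X : Type*} [PseudoMetricSpace X] [MeasureSpace X]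
    {g : X → ℝ≥0∞} {x : X} {t : ℝ} {b : ℝ≥0∞}
    (h : b < ∫⁻ y in ball x t, g y) : ∃ s < t, b < ∫⁻ y in ball x s, g y := by
  have hunion : ball x t = ⋃ n : ℕ, ball x (t - 1 / (n + 1)) := by
    ext y
    simp only [mem_ball, Set.mem_iUnion]
    constructor
    · intro hy
      obtain ⟨n, hn⟩ := exists_nat_one_div_lt (sub_pos.2 hy)
      exact ⟨n, by linarith⟩
    · rintro ⟨n, hn⟩
      linarith [Nat.one_div_pos_of_nat (α := ℝ) (n := n)]
  have hmono : Monotone fun n : ℕ => ball x (t - 1 / ((n : ℝ) + 1)) := fun m n hmn =>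
    ball_subset_ball (by linarith [Nat.one_div_le_one_div (α := ℝ) hmn])
  rw [hunion, setLIntegral_iUnion_of_directed _ hmono.directed_le, lt_iSup_iff] at h
  obtain ⟨n, hn⟩ := h
  exact ⟨_, by linarith [Nat.one_div_pos_of_nat (α := ℝ) (n := n)], hn⟩

section BallMaximal

variable {X : Type*} [NormedAddCommGroup X] [NormedSpace ℝ X] [MeasureSpace X]

/-- The centred Hardy–Littlewood maximal function, normalised by `t ^ dim X` in place of the measure
of the ball of radius `t`. -/
def ballMaximal (g : X → ℝ≥0∞) (x : X) : ℝ≥0∞ :=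
  ⨆ (t : ℝ) (_ : 0 < t), (ENNReal.ofReal (t ^ Module.finrank ℝ X))⁻¹ * ∫⁻ y in ball x t, g y

lemma ballMaximal_le_iff {g : X → ℝ≥0∞} {x : X} {a : ℝ≥0∞} :
    ballMaximal g x ≤ a ↔
      ∀ t > 0, ∫⁻ y in ball x t, g y ≤ a * ENNReal.ofReal (t ^ Module.finrank ℝ X) := by
  refine iSup₂_le_iff.trans (forall₂_congr fun t ht => ?_)
  have h0 : ENNReal.ofReal (t ^ Module.finrank ℝ X) ≠ 0 := by
    simpa only [ne_eq, ENNReal.ofReal_eq_zero, not_le] using pow_pos ht _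
  rw [mul_comm, ← div_eq_mul_inv, ENNReal.div_le_iff h0 ENNReal.ofReal_ne_top]

lemma setLIntegral_ball_le_ballMaximal (g : X → ℝ≥0∞) (x : X) {t : ℝ} (ht : 0 < t) :
    ∫⁻ y in ball x t, g y ≤ ballMaximal g x * ENNReal.ofReal (t ^ Module.finrank ℝ X) :=
  ballMaximal_le_iff.1 le_rfl t ht

lemma exists_lt_setLIntegral_ball {g : X → ℝ≥0∞} {x : X} {a : ℝ≥0∞} (h : a < ballMaximal g x) :
    ∃ t > 0, a * ENNReal.ofReal (t ^ Module.finrank ℝ X) < ∫⁻ y in ball x t, g y := by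
  simpa only [ballMaximal_le_iff, not_forall, not_le, exists_prop] using h.not_ge

lemma measurable_ballMaximal [OpensMeasurableSpace X] (g : X → ℝ≥0∞) :
    Measurable (ballMaximal g) := by
  refine LowerSemicontinuous.measurable (lowerSemicontinuous_iff_isOpen_preimage.2 fun a =>
    Metric.isOpen_iff.2 fun x hx => ?_)
  obtain ⟨t, ht, hlt⟩ := exists_lt_setLIntegral_ball hx
  obtain ⟨s, hst, hs⟩ := exists_lt_setLIntegral_smaller_ball hlt
  refine ⟨t - s, sub_pos.2 hst, fun z hz => ?_⟩
  rw [Set.mem_preimage, Set.mem_Ioi]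
  by_contra! hle
  have hsub : ball x s ⊆ ball z t := ball_subset_ball' (by
    rw [mem_ball, dist_comm] at hz
    linarith)
  exact (hs.trans_le (lintegral_mono_set hsub)).not_ge (ballMaximal_le_iff.1 hle t ht)

/-- The constant in the weak `(1, 1)` inequality for `ballMaximal`. -/
def weakConst (X : Type*) [NormedAddCommGroup X] [NormedSpace ℝ X] [MeasureSpace X] : ℝ :=
  5 ^ Module.finrank ℝ X * unitBallVol X

variable [FiniteDimensional ℝ X]

lemma radius_le_of_mul_le_lintegral [Nontrivial X] {g : X → ℝ≥0∞} (hg : ∫⁻ y, g y ≠ ⊤)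
    {l t : ℝ} (hl : 0 < l)
    (h : ENNReal.ofReal l * ENNReal.ofReal (t ^ Module.finrank ℝ X) ≤ ∫⁻ y, g y) :
    t ≤ 1 + (∫⁻ y, g y).toReal / l := by
  rw [← ENNReal.ofReal_mul hl.le, ENNReal.ofReal_le_iff_le_toReal hg] at h
  have hpow : t ^ Module.finrank ℝ X ≤ (∫⁻ y, g y).toReal / l := by
    rwa [le_div_iff₀ hl, mul_comm]
  rcases le_total t 1 with h1 | h1
  · linarith [div_nonneg (ENNReal.toReal_nonneg (a := ∫⁻ y, g y)) hl.le]
  · linarith [le_self_pow₀ h1 (Module.finrank_pos (R := ℝ) (M := X)).ne']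

variable [(volume : Measure X).IsAddHaarMeasure]

lemma weakConst_pos : 0 < weakConst X := by
  have := unitBallVol_pos (X := X)
  unfold weakConst; positivity

/-- The constant in the strong `(p, p)` inequality for `ballMaximal`. -/
def strongConst (X : Type*) [NormedAddCommGroup X] [NormedSpace ℝ X] [MeasureSpace X]
    (p : ℝ) : ℝ :=
  p * (2 * weakConst X) * (1 / (p - 1)) * (2 * unitBallVol X) ^ (p - 1)

lemma strongConst_pos {p : ℝ} (hp : 1 < p) : 0 < strongConst X p := by
  have hω := unitBallVol_pos (X := X)
  have hw := weakConst_pos (X := X)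
  have : 0 < p - 1 := by linarith
  unfold strongConst; positivity

variable [BorelSpace X]

lemma mul_volume_lt_ballMaximal_le [Nontrivial X] (g : X → ℝ≥0∞) {l : ℝ} (hl : 0 < l) :
    ENNReal.ofReal l * volume {x | ENNReal.ofReal l < ballMaximal g x} ≤
      ENNReal.ofReal (weakConst X) * ∫⁻ y, g y := by
  by_cases hfin : ∫⁻ y, g y = ⊤
  · rw [hfin, ENNReal.mul_top (ENNReal.ofReal_pos.2 weakConst_pos).ne']
    exact le_top
  choose t ht hlt using fun x : {x | ENNReal.ofReal l < ballMaximal g x} =>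
    exists_lt_setLIntegral_ball x.2
  obtain ⟨u, -, hdisj, hcov⟩ := Vitali.exists_disjoint_subfamily_covering_enlargement_closedBall
    Set.univ (fun a : {x | ENNReal.ofReal l < ballMaximal g x} => a.1) t _
    (fun a _ => radius_le_of_mul_le_lintegral hfin hl
      ((hlt a).le.trans (setLIntegral_le_lintegral _ _))) 5 (by norm_num)
  have hdisj_ball : u.PairwiseDisjoint fun a => ball a.1 (t a) :=
    fun a ha b hb hab => (hdisj ha hb hab).mono ball_subset_closedBall ball_subset_closedBall
  have hcount : u.Countable := hdisj_ball.countable_of_isOpen (fun a _ => isOpen_ball)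
    (fun a _ => ⟨a.1, mem_ball_self (ht a)⟩)
  have hsub : {x | ENNReal.ofReal l < ballMaximal g x} ⊆ ⋃ a ∈ u, closedBall a.1 (5 * t a) := by
    intro x hx
    obtain ⟨b, hb, hs⟩ := hcov ⟨x, hx⟩ (Set.mem_univ _)
    exact Set.mem_biUnion hb (hs (mem_closedBall_self (ht _).le))
  have hvol : ∀ a : u, ENNReal.ofReal l * volume (closedBall (a : X) (5 * t a)) ≤
      ENNReal.ofReal (weakConst X) * ∫⁻ y in ball (a : X) (t a), g y := fun a => by
    rw [Measure.addHaar_closedBall_eq_addHaar_ball volume, volume_ball_eq _ (by linarith [ht a]),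
      show (5 * t a) ^ Module.finrank ℝ X * unitBallVol X = weakConst X * t a ^ Module.finrank ℝ X
        by rw [weakConst, mul_pow]; ring,
      ENNReal.ofReal_mul weakConst_pos.le, mul_left_comm]
    gcongr
    exact (hlt a).le
  calc _ ≤ ENNReal.ofReal l * ∑' a : u, volume (closedBall (a : X) (5 * t a)) := by
        gcongr
        exact (measure_mono hsub).trans (measure_biUnion_le _ hcount _)
    _ ≤ ∑' a : u, ENNReal.ofReal (weakConst X) * ∫⁻ y in ball (a : X) (t a), g y := by
        rw [← ENNReal.tsum_mul_left]
        exact ENNReal.tsum_le_tsum hvol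
    _ = ENNReal.ofReal (weakConst X) * ∫⁻ y in ⋃ a ∈ u, ball (a : X) (t a), g y := by
        rw [ENNReal.tsum_mul_left,
          lintegral_biUnion hcount (fun _ _ => measurableSet_ball) hdisj_ball]
    _ ≤ _ := by gcongr; exact Measure.restrict_le_self

lemma ballMaximal_le_ballMaximal_indicator_add {g : X → ℝ≥0∞} {b : ℝ} (hb : 0 ≤ b) (x : X) :
    ballMaximal g x ≤ ballMaximal ({y | ENNReal.ofReal b < g y}.indicator g) x +
      ENNReal.ofReal (b * unitBallVol X) := by
  set A := {y | ENNReal.ofReal b < g y}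
  have hpt : ∀ y, g y ≤ A.indicator g y + ENNReal.ofReal b := fun y => by
    by_cases hy : y ∈ A
    · rw [Set.indicator_of_mem hy]
      exact le_self_add
    · rw [Set.indicator_of_notMem hy, zero_add]
      exact not_lt.1 hy
  refine ballMaximal_le_iff.2 fun t ht => ?_
  calc ∫⁻ y in ball x t, g y ≤ ∫⁻ y in ball x t, (A.indicator g y + ENNReal.ofReal b) :=
        lintegral_mono hpt
    _ = (∫⁻ y in ball x t, A.indicator g y) +
          ENNReal.ofReal (b * unitBallVol X) * ENNReal.ofReal (t ^ Module.finrank ℝ X) := by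
        rw [lintegral_add_right _ measurable_const, setLIntegral_const, volume_ball_eq x ht,
          ← ENNReal.ofReal_mul hb, ← ENNReal.ofReal_mul (mul_nonneg hb unitBallVol_pos.le)]
        ring_nf
    _ ≤ _ := by
        rw [add_mul]
        gcongr
        exact setLIntegral_ball_le_ballMaximal _ x ht

lemma mul_volume_lt_ballMaximal_le_indicator [Nontrivial X] (g : X → ℝ≥0∞) {l : ℝ} (hl : 0 < l) :
    ENNReal.ofReal (l / 2) * volume {x | ENNReal.ofReal l < ballMaximal g x} ≤
      ENNReal.ofReal (weakConst X) *
        ∫⁻ y, {y | ENNReal.ofReal l < ENNReal.ofReal (2 * unitBallVol X) * g y}.indicator g y := by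
  have hω := unitBallVol_pos (X := X)
  have hset : {y | ENNReal.ofReal l < ENNReal.ofReal (2 * unitBallVol X) * g y} =
      {y | ENNReal.ofReal (l / (2 * unitBallVol X)) < g y} := by
    ext y
    rw [Set.mem_ofPred_eq, Set.mem_ofPred_eq, ENNReal.ofReal_div_of_pos (by positivity),
      ENNReal.div_lt_iff (.inl (ENNReal.ofReal_pos.2 (by positivity)).ne')
        (.inl ENNReal.ofReal_ne_top), mul_comm]
  rw [hset]
  refine le_trans ?_ (mul_volume_lt_ballMaximal_le _ (half_pos hl))
  refine mul_le_mul_right (measure_mono fun x hx => ?_) _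
  rw [Set.mem_ofPred_eq] at hx ⊢
  contrapose! hx
  calc ballMaximal g x ≤ _ :=
        ballMaximal_le_ballMaximal_indicator_add (b := l / (2 * unitBallVol X)) (by positivity) x
    _ ≤ ENNReal.ofReal (l / 2) + ENNReal.ofReal (l / 2) := by
        rw [show l / (2 * unitBallVol X) * unitBallVol X = l / 2 by field_simp]
        gcongr
    _ = ENNReal.ofReal l := by
        rw [← ENNReal.ofReal_add (by positivity) (by positivity), add_halves]

lemma lintegral_powLevel_ballMaximal_le [Nontrivial X] {g : X → ℝ≥0∞} (hg : Measurable g)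
    (p : ℝ) {l : ℝ} (hl : 0 < l) :
    ∫⁻ x, powLevel (p - 1) (ballMaximal g x) l ≤ ENNReal.ofReal (2 * weakConst X) *
      ∫⁻ x, g x * powLevel (p - 2) (ENNReal.ofReal (2 * unitBallVol X) * g x) l := by
  have hlevel : ∫⁻ x, powLevel (p - 1) (ballMaximal g x) l =
      ENNReal.ofReal (l ^ (p - 1)) * volume {x | ENNReal.ofReal l < ballMaximal g x} := by
    rw [← setLIntegral_const, ← lintegral_indicator
      (measurableSet_lt measurable_const (measurable_ballMaximal g))]
    rfl
  have hpow : l ^ (p - 1) = 2 * l ^ (p - 2) * (l / 2) := by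
    rw [show p - 1 = p - 2 + 1 by ring, Real.rpow_add_one hl.ne']
    ring
  have hset : MeasurableSet
      {y | ENNReal.ofReal l < ENNReal.ofReal (2 * unitBallVol X) * g y} :=
    measurableSet_lt measurable_const (hg.const_mul _)
  rw [hlevel, hpow, ENNReal.ofReal_mul (by positivity), mul_assoc]
  calc _ ≤ ENNReal.ofReal (2 * l ^ (p - 2)) * (ENNReal.ofReal (weakConst X) *
        ∫⁻ y, {y | ENNReal.ofReal l < ENNReal.ofReal (2 * unitBallVol X) * g y}.indicator g y) := by
        exact mul_le_mul_right (mul_volume_lt_ballMaximal_le_indicator g hl) _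
    _ = ENNReal.ofReal (2 * weakConst X) * (ENNReal.ofReal (l ^ (p - 2)) *
        ∫⁻ y, {y | ENNReal.ofReal l < ENNReal.ofReal (2 * unitBallVol X) * g y}.indicator g y) := by
        rw [← mul_assoc, ← mul_assoc, ← ENNReal.ofReal_mul (by positivity),
          ← ENNReal.ofReal_mul (by linarith [weakConst_pos (X := X)])]
        ring_nf
    _ = _ := by
        rw [← lintegral_const_mul _ (hg.indicator hset)]
        congr 2 with y
        simp only [powLevel, Set.indicator, Set.mem_ofPred_eq, mul_ite, mul_zero,
          mul_comm (g y), ite_mul, zero_mul]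

theorem lintegral_ballMaximal_rpow_le [Nontrivial X] {g : X → ℝ≥0∞} (hg : Measurable g) {p : ℝ}
    (hp : 1 < p) :
    ∫⁻ x, ballMaximal g x ^ p ≤ ENNReal.ofReal (strongConst X p) * ∫⁻ x, g x ^ p := by
  have hω := unitBallVol_pos (X := X)
  have hw := weakConst_pos (X := X)
  have hp1 : 0 < p - 1 := by linarith
  have hpow : ∀ x, g x * (ENNReal.ofReal (2 * unitBallVol X) * g x) ^ (p - 1) =
      ENNReal.ofReal ((2 * unitBallVol X) ^ (p - 1)) * g x ^ p := fun x => by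
    rw [ENNReal.mul_rpow_of_nonneg _ _ hp1.le, ENNReal.ofReal_rpow_of_pos (by positivity),
      ennreal_rpow_eq_mul_rpow_sub_one hp.le (g x)]
    ring
  have hmeas : Measurable fun l => ∫⁻ x, g x *
      powLevel (p - 2) (ENNReal.ofReal (2 * unitBallVol X) * g x) l :=
    Measurable.lintegral_prod_left' (f := fun q : X × ℝ => g q.1 *
      powLevel (p - 2) (ENNReal.ofReal (2 * unitBallVol X) * g q.1) q.2)
      ((hg.comp measurable_fst).mul ((measurable_uncurry_powLevel _).comp
        (((hg.const_mul _).comp measurable_fst).prodMk measurable_snd)))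
  calc ∫⁻ x, ballMaximal g x ^ p
    _ = ENNReal.ofReal p * ∫⁻ l in Set.Ioi (0 : ℝ), ∫⁻ x, powLevel (p - 1) (ballMaximal g x) l :=
        lintegral_rpow_eq_lintegral_powLevel (measurable_ballMaximal g) (by linarith)
    _ ≤ ENNReal.ofReal p * ∫⁻ l in Set.Ioi (0 : ℝ), ENNReal.ofReal (2 * weakConst X) *
          ∫⁻ x, g x * powLevel (p - 2) (ENNReal.ofReal (2 * unitBallVol X) * g x) l := by
        gcongr ENNReal.ofReal p * ?_
        exact setLIntegral_mono (hmeas.const_mul _)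
          fun l hl => lintegral_powLevel_ballMaximal_le hg p hl
    _ = _ := by
        rw [lintegral_const_mul _ hmeas,
          lintegral_lintegral_powLevel_swap hg (hg.const_mul _) (by linarith),
          show p - 2 + 1 = p - 1 by ring, lintegral_congr hpow,
          lintegral_const_mul _ (hg.pow_const _), ← mul_assoc, ← mul_assoc, ← mul_assoc,
          ← ENNReal.ofReal_mul (by positivity), ← ENNReal.ofReal_mul (by positivity),
          ← ENNReal.ofReal_mul (by positivity), strongConst]

end BallMaximal

section WeightedNorm

lemma maxExp_le_two (X : Type*) [NormedAddCommGroup X] [NormedSpace ℝ X] : maxExp X ≤ 2 := by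
  have h : ((Module.finrank ℝ X : ℝ))⁻¹ ≤ 1 := Nat.cast_inv_le_one _
  rw [maxExp, mul_inv]
  linarith

variable {X : Type*} [NormedAddCommGroup X] [NormedSpace ℝ X]

lemma ofReal_decay_le_tsum_indicator (x : X) {r : ℝ} (hr : 0 < r) (N : ℕ) (y : X) :
    ENNReal.ofReal (decay N (r⁻¹ • (y - x))) ≤
      ∑' k : ℕ, (ball x (2 ^ (k + 1) * r)).indicator
        (fun _ => ENNReal.ofReal ((2 ^ (k * N))⁻¹)) y := by
  have h1 : 1 ≤ 1 + ‖y - x‖ / r := le_add_of_nonneg_right (by positivity)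
  obtain ⟨k, hk, hk'⟩ := exists_nat_pow_near h1 one_lt_two
  have hy : y ∈ ball x (2 ^ (k + 1) * r) := by
    rw [mem_ball, dist_eq_norm, ← div_lt_iff₀ hr]
    linarith
  refine le_trans ?_ (ENNReal.le_tsum k)
  rw [Set.indicator_of_mem hy, decay, norm_inv_smul_eq_div hr, pow_mul]
  exact ENNReal.ofReal_le_ofReal
    (inv_anti₀ (by positivity) (pow_le_pow_left₀ (by positivity) hk N))

lemma ballWeight_rpow_inv_maxExp_le (x : X) {r : ℝ} (hr : 0 < r) (y : X) :
    ballWeight x r y ^ (maxExp X)⁻¹ ≤ decay (Module.finrank ℝ X + 1) (r⁻¹ • (y - x)) := by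
  have hp : 0 < maxExp X := one_pos.trans_le (one_le_maxExp X)
  have hexp : 1 ≤ 2 * (maxExp X)⁻¹ := by
    rw [← div_eq_mul_inv, le_div_iff₀ hp, one_mul]
    exact maxExp_le_two X
  set D := decay (Module.finrank ℝ X + 1) (r⁻¹ • (y - x)) with hD
  have hsq : ballWeight x r y = D ^ 2 := by
    rw [ballWeight_eq_decay x hr, hD, decay, decay, mul_comm, pow_mul, inv_pow]
  have hDpos : 0 < D := decay_pos _ _
  calc ballWeight x r y ^ (maxExp X)⁻¹ = D ^ (2 * (maxExp X)⁻¹) := by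
        rw [hsq, Real.rpow_mul hDpos.le, Real.rpow_ofNat]
    _ ≤ D ^ (1 : ℝ) := Real.rpow_le_rpow_of_exponent_ge hDpos (decay_le_one _ _) hexp
    _ = D := Real.rpow_one D

variable [MeasureSpace X] [BorelSpace X]

lemma lintegral_decay_mul_le_ballMaximal (x : X) {r : ℝ} (hr : 0 < r) {g : X → ℝ≥0∞}
    (hg : Measurable g) :
    ∫⁻ y, ENNReal.ofReal (decay (Module.finrank ℝ X + 1) (r⁻¹ • (y - x))) * g y ≤
      ENNReal.ofReal (2 ^ (Module.finrank ℝ X + 1) * r ^ Module.finrank ℝ X) *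
        ballMaximal g x := by
  set d := Module.finrank ℝ X
  have hshell (k : ℕ) : ENNReal.ofReal ((2 ^ (k * (d + 1)))⁻¹) *
      ∫⁻ y in ball x (2 ^ (k + 1) * r), g y ≤
        ENNReal.ofReal (2 ^ d * r ^ d) * ballMaximal g x * 2⁻¹ ^ k := by
    have hscale : (2 ^ (k * (d + 1)))⁻¹ * (2 ^ (k + 1) * r) ^ d = 2 ^ d * r ^ d * 2⁻¹ ^ k := by
      rw [mul_pow, ← pow_mul, mul_add_one, add_one_mul, pow_add, pow_add, inv_pow]
      field_simp
    calc _ ≤ _ := mul_le_mul_right (setLIntegral_ball_le_ballMaximal g x (by positivity)) _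
      _ = ENNReal.ofReal ((2 ^ (k * (d + 1)))⁻¹ * (2 ^ (k + 1) * r) ^ d) * ballMaximal g x := by
        rw [ENNReal.ofReal_mul (by positivity), mul_comm (ballMaximal g x), mul_assoc]
      _ = _ := by
        rw [hscale, ENNReal.ofReal_mul (by positivity), ENNReal.ofReal_pow (by positivity),
          ENNReal.ofReal_inv_of_pos two_pos, ENNReal.ofReal_ofNat, mul_right_comm]
  calc _ ≤ ∫⁻ y, ∑' k : ℕ, ENNReal.ofReal ((2 ^ (k * (d + 1)))⁻¹) *
          (ball x (2 ^ (k + 1) * r)).indicator g y := by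
        refine lintegral_mono fun y => ?_
        refine (mul_le_mul_left (ofReal_decay_le_tsum_indicator x hr _ y) _).trans_eq ?_
        rw [← ENNReal.tsum_mul_right]
        refine tsum_congr fun k => ?_
        by_cases hy : y ∈ ball x (2 ^ (k + 1) * r)
        · simp only [Set.indicator_of_mem hy]
        · simp only [Set.indicator_of_notMem hy, zero_mul, mul_zero]
    _ = ∑' k : ℕ, ENNReal.ofReal ((2 ^ (k * (d + 1)))⁻¹) *
          ∫⁻ y in ball x (2 ^ (k + 1) * r), g y := by
        have hind (k : ℕ) : Measurable ((ball x (2 ^ (k + 1) * r)).indicator g) :=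
          hg.indicator measurableSet_ball
        rw [lintegral_tsum fun k => ((hind k).const_mul _).aemeasurable]
        simp_rw [lintegral_const_mul _ (hind _), lintegral_indicator measurableSet_ball]
    _ ≤ ∑' k : ℕ, ENNReal.ofReal (2 ^ d * r ^ d) * ballMaximal g x * 2⁻¹ ^ k :=
        ENNReal.tsum_le_tsum hshell
    _ = _ := by
        rw [ENNReal.tsum_mul_left, ENNReal.tsum_geometric, ENNReal.one_sub_inv_two, inv_inv,
          pow_succ, mul_right_comm _ (2 : ℝ), ENNReal.ofReal_mul' zero_le_two,
          ENNReal.ofReal_ofNat, mul_right_comm]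

lemma weightedNorm_le_ballMaximal (x : X) {r : ℝ} (hr : 0 < r) {F : X → ℝ≥0∞}
    (hF : Measurable F) :
    weightedNorm x r F ≤
      ENNReal.ofReal ((2 ^ (Module.finrank ℝ X + 1) * r ^ Module.finrank ℝ X) ^ maxExp X) *
        ballMaximal (fun y => F y ^ (maxExp X)⁻¹) x ^ maxExp X := by
  have hp : 0 < maxExp X := one_pos.trans_le (one_le_maxExp X)
  rw [← ENNReal.ofReal_rpow_of_pos (by positivity), ← ENNReal.mul_rpow_of_nonneg _ _ hp.le]
  refine ENNReal.rpow_le_rpow (le_trans (lintegral_mono fun y => ?_)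
    (lintegral_decay_mul_le_ballMaximal x hr (hF.pow_const _))) hp.le
  rw [weighted, ENNReal.mul_rpow_of_nonneg _ _ (inv_nonneg.2 hp.le),
    ENNReal.ofReal_rpow_of_pos (ballWeight_pos x hr y)]
  exact mul_le_mul_left (ENNReal.ofReal_le_ofReal (ballWeight_rpow_inv_maxExp_le x hr y)) _

end WeightedNorm

section Bump

variable {X : Type*} [NormedAddCommGroup X]

/-- `φ` is a normalised test function for the ball `B(c, r)`, with scaled Lipschitz constant `Λ`. -/
structure IsBump (c : X) (r Λ : ℝ) (φ : X → ℝ) : Prop where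
  support_subset : Function.support φ ⊆ ball c r
  abs_le_one : ∀ y, |φ y| ≤ 1
  abs_sub_le : ∀ y y', |φ y - φ y'| ≤ Λ / r * ‖y - y'‖

namespace IsBump

variable {c : X} {r Λ : ℝ} {φ : X → ℝ}

lemma eq_zero (hφ : IsBump c r Λ φ) {y : X} (hy : y ∉ ball c r) : φ y = 0 :=
  Function.notMem_support.1 fun h => hy (hφ.support_subset h)

lemma continuous (hφ : IsBump c r Λ φ) : Continuous φ :=
  (LipschitzWith.of_dist_le_mul (K := (Λ / r).toNNReal) fun y y' => by
    rw [Real.dist_eq, dist_eq_norm]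
    exact (hφ.abs_sub_le y y').trans
      (mul_le_mul_of_nonneg_right (le_coe_toNNReal _) (norm_nonneg _))).continuous

lemma inv_mul (hφ : IsBump c r Λ φ) (hΛ : 1 ≤ Λ) : IsBump c r 1 fun y => Λ⁻¹ * φ y where
  support_subset := fun y hy => hφ.support_subset (right_ne_zero_of_mul hy)
  abs_le_one y := by
    rw [abs_mul, abs_of_pos (by positivity)]
    exact mul_le_one₀ (inv_le_one_of_one_le₀ hΛ) (abs_nonneg _) (hφ.abs_le_one y)
  abs_sub_le y y' := by
    rw [← mul_sub, abs_mul, abs_of_pos (by positivity), inv_mul_le_iff₀ (by positivity)]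
    exact (hφ.abs_sub_le y y').trans_eq (by ring)

variable [MeasureSpace X] [BorelSpace X]

lemma integrable_mul (hφ : IsBump c r Λ φ) {f : X → ℝ} (hf : Integrable f) :
    Integrable fun y => f y * φ y :=
  hf.mul_bdd (c := 1) hφ.continuous.aestronglyMeasurable (Eventually.of_forall hφ.abs_le_one)

lemma integrable [ProperSpace X] [IsFiniteMeasureOnCompacts (volume : Measure X)]
    (hφ : IsBump c r Λ φ) :
    Integrable φ :=
  hφ.continuous.integrable_of_hasCompactSupport <|
    HasCompactSupport.intro (isCompact_closedBall c r) fun _ hy =>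
      hφ.eq_zero fun h => hy (ball_subset_closedBall h)

end IsBump

lemma one_le_mul_ballWeight [NormedSpace ℝ X] {c x y : X} {r : ℝ} (hx : x ∈ ball c r)
    (hy : y ∈ ball c r) : 1 ≤ 9 ^ (Module.finrank ℝ X + 1) * ballWeight x r y := by
  have hr : 0 < r := pos_of_mem_ball hx
  have hdist : ‖y - x‖ / r ≤ 2 := by
    rw [div_le_iff₀ hr, ← dist_eq_norm]
    linarith [dist_triangle_right y x c, mem_ball.1 hx, mem_ball.1 hy]
  rw [ballWeight, ← div_eq_mul_inv, le_div_iff₀ (by positivity), one_mul]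
  calc (1 + ‖y - x‖ / r) ^ (2 * (Module.finrank ℝ X + 1))
      ≤ 3 ^ (2 * (Module.finrank ℝ X + 1)) := by gcongr; linarith
    _ = 9 ^ (Module.finrank ℝ X + 1) := by rw [pow_mul]; norm_num

lemma IsBump.isWeightedLipschitz [NormedSpace ℝ X] {c x : X} {r : ℝ} {φ : X → ℝ}
    (hφ : IsBump c r 1 φ) (hx : x ∈ ball c r) :
    IsWeightedLipschitz x r 1 (1 / r) fun y => (9 ^ (Module.finrank ℝ X + 1))⁻¹ * φ y := by
  have hr : 0 < r := pos_of_mem_ball hx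
  have hw := ballWeight_pos x hr
  refine ⟨fun y => ?_, fun y y' => ?_⟩
  · rw [abs_mul, abs_of_pos (by positivity), inv_mul_le_iff₀ (by positivity), one_mul]
    by_cases hy : y ∈ ball c r
    · exact (hφ.abs_le_one y).trans (one_le_mul_ballWeight hx hy)
    · rw [hφ.eq_zero hy, abs_zero]
      have := hw y
      positivity
  · rw [← mul_sub, abs_mul, abs_of_pos (by positivity), inv_mul_le_iff₀ (by positivity),
      mul_left_comm]
    by_cases hy : y ∈ ball c r ∨ y' ∈ ball c r
    · refine (hφ.abs_sub_le y y').trans (le_mul_of_one_le_right (by positivity) ?_)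
      rw [mul_add]
      have h9 : (0 : ℝ) < 9 ^ (Module.finrank ℝ X + 1) := by positivity
      have := mul_pos h9 (hw y)
      have := mul_pos h9 (hw y')
      rcases hy with hy | hy <;> linarith [one_le_mul_ballWeight hx hy]
    · rw [not_or] at hy
      rw [hφ.eq_zero hy.1, hφ.eq_zero hy.2, sub_zero, abs_zero]
      have := hw y
      have := hw y'
      positivity

end Bump

section Plateau

variable {X : Type*} [NormedAddCommGroup X]

/-- The cut-off equal to `1` on `B(c, r)`, vanishing off `B(c, 2r)` and linear in `‖y - c‖` in
between. -/
def plateau (c : X) (r : ℝ) (y : X) : ℝ := max 0 (min 1 (2 - ‖y - c‖ / r))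

lemma plateau_nonneg (c : X) (r : ℝ) (y : X) : 0 ≤ plateau c r y := le_max_left _ _

lemma plateau_le_one (c : X) (r : ℝ) (y : X) : plateau c r y ≤ 1 :=
  max_le zero_le_one (min_le_left _ _)

lemma plateau_eq_one {c : X} {r : ℝ} (hr : 0 < r) {y : X} (hy : y ∈ closedBall c r) :
    plateau c r y = 1 := by
  rw [mem_closedBall, dist_eq_norm, ← div_le_one hr] at hy
  rw [plateau, min_eq_left (by linarith), max_eq_right zero_le_one]

lemma plateau_eq_zero {c : X} {r : ℝ} (hr : 0 < r) {y : X} (hy : y ∉ ball c (2 * r)) :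
    plateau c r y = 0 := by
  rw [mem_ball, not_lt, dist_eq_norm, ← le_div_iff₀ hr] at hy
  exact max_eq_left ((min_le_right _ _).trans (by linarith))

lemma abs_plateau_sub_le (c : X) {r : ℝ} (hr : 0 < r) (y y' : X) :
    |plateau c r y - plateau c r y'| ≤ 1 / r * ‖y - y'‖ := by
  have hclip : |plateau c r y - plateau c r y'| ≤ |2 - ‖y - c‖ / r - (2 - ‖y' - c‖ / r)| := by
    rw [plateau, plateau, max_comm 0, max_comm 0]
    refine (abs_max_sub_max_le_abs _ _ _).trans ?_
    rw [min_comm 1, min_comm 1]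
    refine (abs_min_sub_min_le_max _ _ _ _).trans_eq ?_
    rw [sub_self, abs_zero, max_eq_left (abs_nonneg _)]
  refine hclip.trans ?_
  have heq : 2 - ‖y - c‖ / r - (2 - ‖y' - c‖ / r) = 1 / r * (‖y' - c‖ - ‖y - c‖) := by ring
  rw [heq, abs_mul, abs_of_pos (by positivity), norm_sub_rev y y']
  gcongr
  simpa only [sub_sub_sub_cancel_right] using abs_norm_sub_norm_le (y' - c) (y - c)

lemma isBump_plateau (c : X) {r : ℝ} (hr : 0 < r) : IsBump c (2 * r) 2 (plateau c r) where
  support_subset y hy := by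
    by_contra h
    exact hy (plateau_eq_zero hr h)
  abs_le_one y := by
    rw [abs_of_nonneg (plateau_nonneg c r y)]
    exact plateau_le_one c r y
  abs_sub_le y y' := by
    rw [← div_div, div_self two_ne_zero]
    exact abs_plateau_sub_le c hr y y'

lemma le_integral_plateau [NormedSpace ℝ X] [FiniteDimensional ℝ X] [MeasureSpace X] [BorelSpace X]
    [(volume : Measure X).IsAddHaarMeasure] (c : X) {r : ℝ} (hr : 0 < r) :
    r ^ Module.finrank ℝ X * unitBallVol X ≤ ∫ y, plateau c r y := by
  have hω := unitBallVol_pos (X := X)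
  have hind : ∫ y, (ball c r).indicator (fun _ => (1 : ℝ)) y ≤ ∫ y, plateau c r y := by
    refine integral_mono ?_ (isBump_plateau c hr).integrable fun y => ?_
    · exact (integrable_indicator_iff measurableSet_ball).2
        (integrableOn_const measure_ball_lt_top.ne)
    · refine Set.indicator_le' (fun y hy => ?_) (fun y _ => plateau_nonneg c r y) y
      rw [plateau_eq_one hr (ball_subset_closedBall hy)]
  refine le_trans (le_of_eq ?_) hind
  rw [integral_indicator measurableSet_ball, setIntegral_const, measureReal_def,
    volume_ball_eq c hr, ENNReal.toReal_ofReal (by positivity), smul_eq_mul, mul_one]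

end Plateau

section GrandMaximal

lemma pow_finrank_rpow_maxExp (X : Type*) [NormedAddCommGroup X] [NormedSpace ℝ X]
    [FiniteDimensional ℝ X] [Nontrivial X] {r : ℝ} (hr : 0 < r) :
    (r ^ Module.finrank ℝ X) ^ maxExp X = r ^ Module.finrank ℝ X * r ^ (1 / 4 : ℝ) := by
  rw [← Real.rpow_natCast, ← Real.rpow_mul hr.le, ← Real.rpow_add hr]
  congr 1
  linarith [finrank_mul_maxExp_sub_one X]

variable {X : Type*} [NormedAddCommGroup X] [NormedSpace ℝ X] [MeasureSpace X]

/-- The grand maximal function: the supremum of the normalised pairings of `f` with all test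
functions of balls of radius at most `R` containing the point. -/
def grandMaximal (R : ℝ) (f : X → ℝ) (x : X) : ℝ≥0∞ :=
  ⨆ (q : X × ℝ × (X → ℝ)) (_ : q.2.1 ≤ R ∧ x ∈ ball q.1 q.2.1 ∧ IsBump q.1 q.2.1 1 q.2.2),
    ENNReal.ofReal (|∫ y, f y * q.2.2 y| / q.2.1 ^ Module.finrank ℝ X)

variable {c x : X} {r R Λ : ℝ} {φ f g : X → ℝ}

lemma IsBump.ofReal_div_le_grandMaximal (hφ : IsBump c r 1 φ) (hrR : r ≤ R) (hx : x ∈ ball c r) :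
    ENNReal.ofReal (|∫ y, f y * φ y| / r ^ Module.finrank ℝ X) ≤ grandMaximal R f x :=
  le_iSup₂_of_le (f := fun (q : X × ℝ × (X → ℝ))
    (_ : q.2.1 ≤ R ∧ x ∈ ball q.1 q.2.1 ∧ IsBump q.1 q.2.1 1 q.2.2) =>
    ENNReal.ofReal (|∫ y, f y * q.2.2 y| / q.2.1 ^ Module.finrank ℝ X))
    (c, r, φ) ⟨hrR, hx, hφ⟩ le_rfl

lemma IsBump.ofReal_abs_integral_le_grandMaximal (hφ : IsBump c r Λ φ) (hΛ : 1 ≤ Λ) (hrR : r ≤ R)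
    (hx : x ∈ ball c r) :
    ENNReal.ofReal |∫ y, f y * φ y| ≤
      ENNReal.ofReal (Λ * r ^ Module.finrank ℝ X) * grandMaximal R f x := by
  have hr : 0 < r := pos_of_mem_ball hx
  have hscale : |∫ y, f y * φ y| = Λ * r ^ Module.finrank ℝ X *
      (|∫ y, f y * (Λ⁻¹ * φ y)| / r ^ Module.finrank ℝ X) := by
    simp_rw [mul_left_comm (f _), integral_const_mul]
    rw [abs_mul, abs_of_pos (by positivity : 0 < Λ⁻¹)]
    field_simp
  rw [hscale, ENNReal.ofReal_mul (by positivity)]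
  gcongr
  exact (hφ.inv_mul hΛ).ofReal_div_le_grandMaximal hrR hx

lemma isOpen_lt_grandMaximal (R : ℝ) (f : X → ℝ) (l : ℝ≥0∞) :
    IsOpen {x | l < grandMaximal R f x} := by
  refine isOpen_iff_mem_nhds.2 fun x hx => ?_
  obtain ⟨q, hq⟩ := lt_iSup_iff.1 (Set.mem_ofPred_eq ▸ hx)
  obtain ⟨⟨hqR, hxq, hφ⟩, hlt⟩ := lt_iSup_iff.1 hq
  filter_upwards [isOpen_ball.mem_nhds hxq] with y hy
  exact hlt.trans_le (hφ.ofReal_div_le_grandMaximal hqR hy)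

lemma measurable_grandMaximal [OpensMeasurableSpace X] (R : ℝ) (f : X → ℝ) :
    Measurable (grandMaximal R f) :=
  measurable_of_Ioi fun l => (isOpen_lt_grandMaximal R f l).measurableSet

lemma grandMaximal_congr (R : ℝ) (hfg : f =ᵐ[volume] g) : grandMaximal R f = grandMaximal R g := by
  funext x
  refine iSup_congr fun q => iSup_congr fun _ => ?_
  rw [integral_congr_ae (hfg.mono fun y hy => show f y * _ = g y * _ by rw [hy])]

variable [FiniteDimensional ℝ X] [(volume : Measure X).IsAddHaarMeasure]

/-- The constant in the pointwise bound of the grand maximal function. -/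
def grandConst (X : Type*) [NormedAddCommGroup X] [NormedSpace ℝ X] [MeasureSpace X] (C : ℝ) : ℝ :=
  9 ^ (Module.finrank ℝ X + 1) * testConst X C * (2 ^ (Module.finrank ℝ X + 1)) ^ maxExp X

variable {P : X → ℝ} {C : ℝ}

lemma IsDecayKernel.testConst_pos (hP : IsDecayKernel P C) : 0 < testConst X C := by
  have := hP.one_le_stepConst
  have := selectionConst_pos (X := X) (maxExp X)
  unfold testConst
  positivity

lemma IsDecayKernel.grandConst_pos (hP : IsDecayKernel P C) : 0 < grandConst X C := by
  have := hP.testConst_pos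
  unfold grandConst
  positivity

variable [BorelSpace X]

theorem IsDecayKernel.grandMaximal_le_ballMaximal [Nontrivial X] (hP : IsDecayKernel P C)
    (hf : Integrable f) (x : X) :
    grandMaximal R f x ≤ ENNReal.ofReal (grandConst X C) *
      ballMaximal (fun y => localMaximal P R f y ^ (maxExp X)⁻¹) x ^ maxExp X := by
  refine iSup₂_le ?_
  rintro ⟨c, r, φ⟩ ⟨hrR, hx, hφ⟩
  have hr : 0 < r := pos_of_mem_ball hx
  have htest := hP.testConst_pos
  set H := ballMaximal (fun y => localMaximal P R f y ^ (maxExp X)⁻¹) x ^ maxExp X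
  set N := (9 : ℝ) ^ (Module.finrank ℝ X + 1) with hN
  have hNpos : 0 < N := by positivity
  have hpair : ENNReal.ofReal |∫ y, f y * (N⁻¹ * φ y)| ≤
      ENNReal.ofReal (testConst X C * r ^ (-(1 / 4) : ℝ)) *
        (ENNReal.ofReal ((2 ^ (Module.finrank ℝ X + 1) * r ^ Module.finrank ℝ X) ^ maxExp X) * H) :=
    ((hφ.isWeightedLipschitz hx).ofReal_abs_integral_mul_le hP hf hr hrR).trans
      (mul_le_mul_right (weightedNorm_le_ballMaximal x hr (hP.measurable_localMaximal R hf)) _)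
  have hscale : |∫ y, f y * φ y| / r ^ Module.finrank ℝ X =
      N / r ^ Module.finrank ℝ X * |∫ y, f y * (N⁻¹ * φ y)| := by
    simp_rw [mul_left_comm (f _), integral_const_mul]
    rw [abs_mul, abs_of_pos (by positivity : 0 < N⁻¹)]
    field_simp
  dsimp only
  rw [hscale, ENNReal.ofReal_mul (by positivity)]
  refine (mul_le_mul_right hpair _).trans_eq ?_
  rw [← mul_assoc, ← mul_assoc, ← ENNReal.ofReal_mul (by positivity),
    ← ENNReal.ofReal_mul (by positivity)]
  congr 2
  have hcancel : r ^ (-(1 / 4) : ℝ) * r ^ (1 / 4 : ℝ) = 1 := by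
    rw [← Real.rpow_add hr, neg_add_cancel, Real.rpow_zero]
  rw [Real.mul_rpow (by positivity) (by positivity), pow_finrank_rpow_maxExp X hr, grandConst, ← hN]
  calc _ = N * testConst X C * (2 ^ (Module.finrank ℝ X + 1)) ^ maxExp X *
        (r ^ Module.finrank ℝ X / r ^ Module.finrank ℝ X) *
          (r ^ (-(1 / 4) : ℝ) * r ^ (1 / 4 : ℝ)) := by ring
    _ = _ := by rw [hcancel, div_self (by positivity), mul_one, mul_one]

theorem IsDecayKernel.lintegral_grandMaximal_le [Nontrivial X] (hP : IsDecayKernel P C)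
    (hf : Integrable f) :
    ∫⁻ x, grandMaximal R f x ≤
      ENNReal.ofReal (grandConst X C * strongConst X (maxExp X)) * ∫⁻ x, localMaximal P R f x := by
  have hp := one_lt_maxExp X
  have hroot : ∀ x, (localMaximal P R f x ^ (maxExp X)⁻¹) ^ maxExp X = localMaximal P R f x :=
    fun x => ENNReal.rpow_inv_rpow (one_pos.trans hp).ne' _
  have hstrong := lintegral_ballMaximal_rpow_le
    ((hP.measurable_localMaximal R hf).pow_const (maxExp X)⁻¹) hp
  simp_rw [hroot] at hstrong
  refine (lintegral_mono (hP.grandMaximal_le_ballMaximal hf)).trans ?_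
  rw [lintegral_const_mul _ ((measurable_ballMaximal _).pow_const _),
    ENNReal.ofReal_mul hP.grandConst_pos.le, mul_assoc]
  gcongr

end GrandMaximal

section Differentiation

variable {X : Type*} [NormedAddCommGroup X] [NormedSpace ℝ X] [FiniteDimensional ℝ X]
  [MeasureSpace X] [BorelSpace X] [(volume : Measure X).IsAddHaarMeasure] [Nontrivial X]
  {f : X → ℝ} {R : ℝ}

lemma abs_integral_sub_mul_plateau_le (hf : Integrable f) (x : X) {r : ℝ} (hr : 0 < r) :
    |∫ y, (f y - f x) * plateau x r y| ≤
      (2 * r) ^ Module.finrank ℝ X * unitBallVol X * ⨍ y in closedBall x (2 * r), ‖f y - f x‖ := by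
  have hω := unitBallVol_pos (X := X)
  rw [setAverage_eq, measureReal_def, Measure.addHaar_closedBall_eq_addHaar_ball volume,
    volume_ball_eq x (by positivity), ENNReal.toReal_ofReal (by positivity), smul_eq_mul,
    ← mul_assoc, mul_inv_cancel₀ (by positivity), one_mul,
    ← integral_indicator measurableSet_closedBall, ← Real.norm_eq_abs]
  refine norm_integral_le_of_norm_le ?_ (Eventually.of_forall fun y => ?_)
  · rw [integrable_indicator_iff measurableSet_closedBall]
    exact (hf.integrableOn.sub (integrableOn_const measure_closedBall_lt_top.ne)).norm
  · by_cases hy : y ∈ closedBall x (2 * r)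
    · rw [Set.indicator_of_mem hy, norm_mul, Real.norm_of_nonneg (plateau_nonneg x r y)]
      exact mul_le_of_le_one_right (norm_nonneg _) (plateau_le_one x r y)
    · rw [Set.indicator_of_notMem hy, plateau_eq_zero hr fun h => hy (ball_subset_closedBall h),
        mul_zero, norm_zero]

lemma abs_le_grandMaximal_add_average (hf : Integrable f) {x : X} (hG : grandMaximal R f x ≠ ⊤)
    {r : ℝ} (hr : 0 < r) (hrR : 2 * r ≤ R) :
    |f x| ≤ 2 ^ (Module.finrank ℝ X + 1) / unitBallVol X * (grandMaximal R f x).toReal +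
      2 ^ Module.finrank ℝ X * ⨍ y in closedBall x (2 * r), ‖f y - f x‖ := by
  have hω := unitBallVol_pos (X := X)
  have hbump := isBump_plateau x hr
  have hsplit : f x * ∫ y, plateau x r y =
      (∫ y, f y * plateau x r y) - ∫ y, (f y - f x) * plateau x r y := by
    simp_rw [sub_mul]
    rw [integral_sub (hbump.integrable_mul hf) (hbump.integrable.const_mul _), integral_const_mul]
    ring
  have hgrand := hbump.ofReal_abs_integral_le_grandMaximal (f := f) one_le_two hrR
    (mem_ball_self (by positivity))
  rw [ENNReal.ofReal_le_iff_le_toReal (ENNReal.mul_ne_top ENNReal.ofReal_ne_top hG),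
    ENNReal.toReal_mul, ENNReal.toReal_ofReal (by positivity)] at hgrand
  have hbound : |f x| * (r ^ Module.finrank ℝ X * unitBallVol X) ≤
      2 * (2 * r) ^ Module.finrank ℝ X * (grandMaximal R f x).toReal +
        (2 * r) ^ Module.finrank ℝ X * unitBallVol X *
          ⨍ y in closedBall x (2 * r), ‖f y - f x‖ := by
    refine (mul_le_mul_of_nonneg_left (le_integral_plateau x hr) (abs_nonneg _)).trans ?_
    rw [← abs_of_nonneg (integral_nonneg (plateau_nonneg x r)), ← abs_mul, hsplit]
    exact (abs_sub _ _).trans (add_le_add hgrand (abs_integral_sub_mul_plateau_le hf x hr))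
  rw [← le_div_iff₀ (by positivity)] at hbound
  refine hbound.trans_eq ?_
  rw [mul_pow, pow_succ]
  field_simp

theorem ae_ofReal_abs_le_grandMaximal (hR : 0 < R) (hf : Integrable f) :
    ∀ᵐ x, ENNReal.ofReal |f x| ≤
      ENNReal.ofReal (2 ^ (Module.finrank ℝ X + 1) / unitBallVol X) * grandMaximal R f x := by
  have hω := unitBallVol_pos (X := X)
  filter_upwards [IsUnifLocDoublingMeasure.ae_tendsto_average_norm_sub (μ := (volume : Measure X))
    hf.locallyIntegrable 1] with x hx
  by_cases hG : grandMaximal R f x = ⊤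
  · rw [hG, ENNReal.mul_top (ENNReal.ofReal_pos.2 (by positivity)).ne']
    exact le_top
  set s : ℕ → ℝ := fun n => 2 * (R / 2 * (1 / (n + 1)))
  have hs : Tendsto s atTop (𝓝 0) := by
    simpa only [mul_zero] using
      ((tendsto_one_div_add_atTop_nhds_zero_nat (𝕜 := ℝ)).const_mul (R / 2)).const_mul 2
  have hspos : ∀ n, 0 < s n := fun n => by positivity
  have hsR : ∀ n : ℕ, s n ≤ R := fun n => by
    have : 1 / ((n : ℝ) + 1) ≤ 1 := by
      rw [div_le_one (by positivity)]
      linarith [Nat.cast_nonneg (α := ℝ) n]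
    have := mul_le_mul_of_nonneg_left this hR.le
    calc s n = R * (1 / (n + 1)) := by ring
      _ ≤ R := by linarith
  have havg := hx (l := atTop) (fun _ => x) s
    (tendsto_nhdsWithin_iff.2 ⟨hs, Eventually.of_forall hspos⟩)
    (Eventually.of_forall fun n => by rw [one_mul]; exact mem_closedBall_self (hspos n).le)
  have hlim := ge_of_tendsto' ((havg.const_mul (2 ^ Module.finrank ℝ X)).const_add
    (2 ^ (Module.finrank ℝ X + 1) / unitBallVol X * (grandMaximal R f x).toReal)) fun n =>
      abs_le_grandMaximal_add_average hf hG (by positivity) (hsR n)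
  rw [mul_zero, add_zero] at hlim
  refine (ENNReal.ofReal_le_ofReal hlim).trans_eq ?_
  rw [ENNReal.ofReal_mul (by positivity), ENNReal.ofReal_toReal hG]

end Differentiation

section Whitney

variable {X : Type*} [NormedAddCommGroup X] {O s : Set X}

/-- The radius of the Whitney ball of the open set `O` centred at `y`. -/
def whitneyRadius (O : Set X) (y : X) : ℝ := infDist y Oᶜ / 10

/-- The balls `B(y, whitneyRadius O y)`, `y ∈ s`, form a Whitney covering of the open set `O`. -/
structure IsWhitneyFamily (O s : Set X) : Prop where
  isOpen : IsOpen O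
  nonempty_compl : Oᶜ.Nonempty
  subset : s ⊆ O
  pairwiseDisjoint : s.PairwiseDisjoint fun y => ball y (whitneyRadius O y / 5)
  exists_mem_closedBall : ∀ x ∈ O, ∃ y ∈ s, x ∈ closedBall y (whitneyRadius O y)

lemma whitneyRadius_le_add (O : Set X) (x y : X) :
    whitneyRadius O x ≤ whitneyRadius O y + dist x y / 10 := by
  rw [whitneyRadius, whitneyRadius, ← add_div]
  exact div_le_div_of_nonneg_right infDist_le_infDist_add_dist (by norm_num)

lemma whitneyRadius_nonneg (O : Set X) (y : X) : 0 ≤ whitneyRadius O y :=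
  div_nonneg infDist_nonneg (by norm_num)

lemma ball_whitneyRadius_subset (O : Set X) (y : X) : ball y (10 * whitneyRadius O y) ⊆ O := by
  intro x hx
  by_contra h
  have := infDist_le_dist_of_mem (x := y) (Set.mem_compl h)
  rw [mem_ball', whitneyRadius, mul_div_cancel₀ _ (by norm_num)] at hx
  linarith

lemma whitneyRadius_le_of_mem_ball {x y : X} (hx : x ∈ ball y (2 * whitneyRadius O y)) :
    whitneyRadius O x ≤ 6 / 5 * whitneyRadius O y := by
  linarith [whitneyRadius_le_add O x y, mem_ball.1 hx]

lemma le_whitneyRadius_of_mem_ball {x y : X} (hx : x ∈ ball y (2 * whitneyRadius O y)) :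
    4 / 5 * whitneyRadius O y ≤ whitneyRadius O x := by
  linarith [whitneyRadius_le_add O y x, mem_ball'.1 hx]

namespace IsWhitneyFamily

lemma whitneyRadius_pos_of_mem (hs : IsWhitneyFamily O s) {x : X} (hx : x ∈ O) :
    0 < whitneyRadius O x :=
  div_pos ((hs.isOpen.isClosed_compl.notMem_iff_infDist_pos hs.nonempty_compl).1
    (Set.notMem_compl_iff.2 hx)) (by norm_num)

lemma whitneyRadius_pos (hs : IsWhitneyFamily O s) (i : s) : 0 < whitneyRadius O (i : X) :=
  hs.whitneyRadius_pos_of_mem (hs.subset i.2)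

lemma disjoint_ball (hs : IsWhitneyFamily O s) : Pairwise fun i j : s =>
    Disjoint (ball (i : X) (whitneyRadius O i / 5)) (ball (j : X) (whitneyRadius O j / 5)) :=
  fun i j hij => hs.pairwiseDisjoint i.2 j.2 fun h => hij (Subtype.ext h)

lemma countable [TopologicalSpace.SeparableSpace X] (hs : IsWhitneyFamily O s) : Countable s :=
  (hs.pairwiseDisjoint.countable_of_isOpen (fun _ _ => isOpen_ball) fun y hy =>
    ⟨y, mem_ball_self (div_pos (hs.whitneyRadius_pos ⟨y, hy⟩) (by norm_num))⟩).to_subtype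

lemma exists_notMem_dist_lt (hs : IsWhitneyFamily O s) (i : s) :
    ∃ p ∉ O, dist p (i : X) < 11 * whitneyRadius O i := by
  have hpos := hs.whitneyRadius_pos i
  obtain ⟨p, hp, hlt⟩ := (infDist_lt_iff hs.nonempty_compl).1
    (show infDist (i : X) Oᶜ < 11 * whitneyRadius O i by unfold whitneyRadius at hpos ⊢; linarith)
  exact ⟨p, hp, by rwa [dist_comm]⟩

end IsWhitneyFamily

theorem exists_isWhitneyFamily (hO : IsOpen O) (hOc : Oᶜ.Nonempty) {D : ℝ}
    (hD : ∀ x ∈ O, whitneyRadius O x ≤ D) : ∃ s, IsWhitneyFamily O s := by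
  obtain ⟨u, hu, hdisj, hcov⟩ := Vitali.exists_disjoint_subfamily_covering_enlargement_closedBall
    O id (fun y => whitneyRadius O y / 5) (D / 5)
    (fun y hy => div_le_div_of_nonneg_right (hD y hy) (by norm_num)) 5 (by norm_num)
  refine ⟨u, hO, hOc, hu, hdisj.mono fun y => ball_subset_closedBall, fun x hx => ?_⟩
  obtain ⟨y, hy, hsub⟩ := hcov x hx
  rw [mul_div_cancel₀ _ (by norm_num)] at hsub
  exact ⟨y, hy, hsub (mem_closedBall_self (div_nonneg (whitneyRadius_nonneg O x) (by norm_num)))⟩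

end Whitney

section Partition

variable {X : Type*} [NormedAddCommGroup X] {O s : Set X}

/-- The sum of the cut-offs of all Whitney balls. -/
def cutoffSum (O s : Set X) (x : X) : ℝ := ∑' i : s, plateau (i : X) (whitneyRadius O i) x

/-- The partition of unity subordinate to the doubled Whitney balls. -/
def partitionFn (O : Set X) {s : Set X} (i : s) (x : X) : ℝ :=
  plateau (i : X) (whitneyRadius O i) x / cutoffSum O s x

lemma cutoffSum_nonneg (O s : Set X) (x : X) : 0 ≤ cutoffSum O s x :=
  tsum_nonneg fun _ => plateau_nonneg _ _ _

lemma partitionFn_nonneg (O : Set X) (i : s) (x : X) : 0 ≤ partitionFn O i x :=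
  div_nonneg (plateau_nonneg _ _ _) (cutoffSum_nonneg O s x)

namespace IsWhitneyFamily

lemma mem_ball_of_plateau_ne_zero (hs : IsWhitneyFamily O s) {i : s} {x : X}
    (hx : plateau (i : X) (whitneyRadius O i) x ≠ 0) :
    x ∈ ball (i : X) (2 * whitneyRadius O i) := by
  by_contra h
  exact hx (plateau_eq_zero (hs.whitneyRadius_pos i) h)

lemma mem_ball_of_partitionFn_ne_zero (hs : IsWhitneyFamily O s) {i : s} {x : X}
    (hx : partitionFn O i x ≠ 0) : x ∈ ball (i : X) (2 * whitneyRadius O i) :=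
  hs.mem_ball_of_plateau_ne_zero (div_ne_zero_iff.1 hx).1

lemma partitionFn_eq_zero (hs : IsWhitneyFamily O s) {x : X} (hx : x ∉ O) (i : s) :
    partitionFn O i x = 0 := by
  by_contra h
  exact hx (ball_whitneyRadius_subset O i (ball_subset_ball
    (by linarith [hs.whitneyRadius_pos i]) (hs.mem_ball_of_partitionFn_ne_zero h)))

end IsWhitneyFamily

section Counting

variable [NormedSpace ℝ X] [FiniteDimensional ℝ X] [MeasureSpace X] [BorelSpace X]
  [(volume : Measure X).IsAddHaarMeasure]

lemma card_le_of_pairwiseDisjoint_ball {ι : Type*} {y : ι → X} {ρ : ι → ℝ} {S : Finset ι} {x : X}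
    {a b : ℝ} (ha : 0 < a) (hb : 0 < b) (hρ : ∀ i ∈ S, a ≤ ρ i)
    (hdisj : (S : Set ι).PairwiseDisjoint fun i => ball (y i) (ρ i))
    (hsub : ∀ i ∈ S, ball (y i) (ρ i) ⊆ ball x b) :
    (S.card : ℝ) ≤ (b / a) ^ Module.finrank ℝ X := by
  have hω := unitBallVol_pos (X := X)
  have hsum : ∑ _i ∈ S, ENNReal.ofReal (a ^ Module.finrank ℝ X * unitBallVol X) ≤
      volume (ball x b) :=
    calc _ ≤ ∑ i ∈ S, volume (ball (y i) (ρ i)) := Finset.sum_le_sum fun i hi => by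
          rw [← volume_ball_eq (y i) ha]
          exact measure_mono (ball_subset_ball (hρ i hi))
      _ = volume (⋃ i ∈ S, ball (y i) (ρ i)) :=
          (measure_biUnion_finset hdisj fun _ _ => measurableSet_ball).symm
      _ ≤ _ := measure_mono (Set.iUnion₂_subset hsub)
  rw [Finset.sum_const, volume_ball_eq x hb, nsmul_eq_mul, ← ENNReal.ofReal_natCast,
    ← ENNReal.ofReal_mul (by positivity), ENNReal.ofReal_le_ofReal_iff (by positivity),
    ← mul_assoc] at hsum
  rw [div_pow, le_div_iff₀ (by positivity)]
  exact le_of_mul_le_mul_right hsum hω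

/-- The bound for the overlap of the doubled Whitney balls. -/
def overlapConst (X : Type*) [NormedAddCommGroup X] [NormedSpace ℝ X] : ℝ :=
  17 ^ Module.finrank ℝ X

/-- The scaled Lipschitz constant of the partition of unity. -/
def partitionConst (X : Type*) [NormedAddCommGroup X] [NormedSpace ℝ X] : ℝ :=
  2 + 8 * overlapConst X

lemma one_le_overlapConst (X : Type*) [NormedAddCommGroup X] [NormedSpace ℝ X] :
    1 ≤ overlapConst X := one_le_pow₀ (by norm_num)

namespace IsWhitneyFamily

lemma card_le_overlapConst (hs : IsWhitneyFamily O s) {x : X} {S : Finset s}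
    (hS : ∀ i ∈ S, plateau (i : X) (whitneyRadius O i) x ≠ 0) : (S.card : ℝ) ≤ overlapConst X := by
  rcases S.eq_empty_or_nonempty with rfl | ⟨i₀, hi₀⟩
  · simpa only [Finset.card_empty, Nat.cast_zero] using
      zero_le_one.trans (one_le_overlapConst X)
  have hmem := fun i hi => hs.mem_ball_of_plateau_ne_zero (hS i hi)
  have ht : 0 < whitneyRadius O x := by
    linarith [le_whitneyRadius_of_mem_ball (hmem i₀ hi₀), hs.whitneyRadius_pos i₀]
  have hcard := card_le_of_pairwiseDisjoint_ball (y := fun i : s => (i : X))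
    (ρ := fun i : s => whitneyRadius O i / 5) (S := S) (x := x) (a := whitneyRadius O x / 6)
    (b := 17 * (whitneyRadius O x / 6)) (by positivity) (by positivity)
    (fun i hi => by linarith [whitneyRadius_le_of_mem_ball (hmem i hi)])
    (fun i _ j _ hij => hs.disjoint_ball hij)
    (fun i hi => ball_subset_ball' <| by
      linarith [le_whitneyRadius_of_mem_ball (hmem i hi), mem_ball'.1 (hmem i hi)])
  rwa [mul_div_cancel_right₀ _ (by positivity)] at hcard

lemma finite_plateau_ne_zero (hs : IsWhitneyFamily O s) (x : X) :
    {i : s | plateau (i : X) (whitneyRadius O i) x ≠ 0}.Finite := by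
  by_contra hinf
  obtain ⟨S, hS, hcard⟩ := Set.Infinite.exists_subset_card_eq hinf (⌊overlapConst X⌋₊ + 1)
  have := hs.card_le_overlapConst fun i hi => hS hi
  rw [hcard, Nat.cast_add_one] at this
  exact (Nat.lt_floor_add_one _).not_ge this

lemma finite_partitionFn_ne_zero (hs : IsWhitneyFamily O s) (x : X) :
    {i : s | partitionFn O i x ≠ 0}.Finite :=
  (hs.finite_plateau_ne_zero x).subset fun _ hi => (div_ne_zero_iff.1 hi).1

lemma hasSum_cutoffSum (hs : IsWhitneyFamily O s) (x : X) :
    HasSum (fun i : s => plateau (i : X) (whitneyRadius O i) x) (cutoffSum O s x) :=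
  (summable_of_hasFiniteSupport (hs.finite_plateau_ne_zero x)).hasSum

lemma plateau_le_cutoffSum (hs : IsWhitneyFamily O s) (i : s) (x : X) :
    plateau (i : X) (whitneyRadius O i) x ≤ cutoffSum O s x :=
  le_hasSum (hs.hasSum_cutoffSum x) i fun _ _ => plateau_nonneg _ _ _

lemma one_le_cutoffSum (hs : IsWhitneyFamily O s) {x : X} (hx : x ∈ O) : 1 ≤ cutoffSum O s x := by
  obtain ⟨y, hy, hxy⟩ := hs.exists_mem_closedBall x hx
  rw [← plateau_eq_one (hs.whitneyRadius_pos ⟨y, hy⟩) hxy]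
  exact hs.plateau_le_cutoffSum ⟨y, hy⟩ x

lemma cutoffSum_eq_sum (hs : IsWhitneyFamily O s) {x : X} {S : Finset s}
    (hS : (hs.finite_plateau_ne_zero x).toFinset ⊆ S) :
    cutoffSum O s x = ∑ i ∈ S, plateau (i : X) (whitneyRadius O i) x :=
  tsum_eq_sum fun i hi => by
    by_contra h
    exact hi (hS ((hs.finite_plateau_ne_zero x).mem_toFinset.2 h))

lemma card_toFinset_le (hs : IsWhitneyFamily O s) (x : X) :
    ((hs.finite_plateau_ne_zero x).toFinset.card : ℝ) ≤ overlapConst X :=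
  hs.card_le_overlapConst fun _ hi => (hs.finite_plateau_ne_zero x).mem_toFinset.1 hi

lemma cutoffSum_le (hs : IsWhitneyFamily O s) (x : X) : cutoffSum O s x ≤ overlapConst X := by
  rw [hs.cutoffSum_eq_sum subset_rfl]
  refine (Finset.sum_le_card_nsmul _ _ 1 fun i _ => plateau_le_one _ _ _).trans ?_
  rw [nsmul_one]
  exact hs.card_toFinset_le x

lemma partitionFn_le_one (hs : IsWhitneyFamily O s) (i : s) (x : X) : partitionFn O i x ≤ 1 :=
  div_le_one_of_le₀ (hs.plateau_le_cutoffSum i x) (cutoffSum_nonneg O s x)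

lemma hasSum_partitionFn (hs : IsWhitneyFamily O s) {x : X} (hx : x ∈ O) :
    HasSum (fun i : s => partitionFn O i x) 1 := by
  have := (hs.hasSum_cutoffSum x).div_const (cutoffSum O s x)
  rwa [div_self (one_pos.trans_le (hs.one_le_cutoffSum hx)).ne'] at this

lemma abs_cutoffSum_sub_le (hs : IsWhitneyFamily O s) {x x' : X} {m : ℝ} (hm : 0 < m)
    (hx : ∀ i : s, plateau (i : X) (whitneyRadius O i) x ≠ 0 → m ≤ whitneyRadius O i)
    (hx' : ∀ i : s, plateau (i : X) (whitneyRadius O i) x' ≠ 0 → m ≤ whitneyRadius O i) :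
    |cutoffSum O s x - cutoffSum O s x'| ≤ 2 * overlapConst X / m * ‖x - x'‖ := by
  classical
  set S := (hs.finite_plateau_ne_zero x).toFinset ∪ (hs.finite_plateau_ne_zero x').toFinset
  have hm_le : ∀ i ∈ S, m ≤ whitneyRadius O i := fun i hi =>
    (Finset.mem_union.1 hi).elim (fun h => hx i ((Set.Finite.mem_toFinset _).1 h))
      fun h => hx' i ((Set.Finite.mem_toFinset _).1 h)
  have hcard : (S.card : ℝ) ≤ 2 * overlapConst X := by
    refine (Nat.cast_le.2 (Finset.card_union_le _ _)).trans ?_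
    rw [Nat.cast_add, two_mul]
    exact add_le_add (hs.card_toFinset_le x) (hs.card_toFinset_le x')
  rw [hs.cutoffSum_eq_sum (S := S) Finset.subset_union_left,
    hs.cutoffSum_eq_sum (S := S) Finset.subset_union_right, ← Finset.sum_sub_distrib]
  calc _ ≤ ∑ i ∈ S,
        |plateau (i : X) (whitneyRadius O i) x - plateau (i : X) (whitneyRadius O i) x'| :=
        Finset.abs_sum_le_sum_abs _ _
    _ ≤ ∑ i ∈ S, 1 / m * ‖x - x'‖ := Finset.sum_le_sum fun i hi =>
        (abs_plateau_sub_le _ (hs.whitneyRadius_pos i) x x').trans <| by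
          gcongr
          exact hm_le i hi
    _ = S.card * (1 / m * ‖x - x'‖) := by rw [Finset.sum_const, nsmul_eq_mul]
    _ ≤ 2 * overlapConst X * (1 / m * ‖x - x'‖) := by gcongr
    _ = _ := by ring

lemma abs_cutoffSum_sub_le_of_mem_ball (hs : IsWhitneyFamily O s) {i : s} {x x' : X}
    (hxi : x ∈ ball (i : X) (2 * whitneyRadius O i)) (hxx' : ‖x - x'‖ < whitneyRadius O i) :
    |cutoffSum O s x - cutoffSum O s x'| ≤
      2 * overlapConst X / (whitneyRadius O i / 2) * ‖x - x'‖ := by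
  have hρ := hs.whitneyRadius_pos i
  have hρx := le_whitneyRadius_of_mem_ball hxi
  refine hs.abs_cutoffSum_sub_le (by positivity) (fun j hj => ?_) fun j hj => ?_
  · linarith [whitneyRadius_le_of_mem_ball (hs.mem_ball_of_plateau_ne_zero hj)]
  · linarith [whitneyRadius_le_of_mem_ball (hs.mem_ball_of_plateau_ne_zero hj),
      whitneyRadius_le_add O x x', dist_eq_norm x x']

lemma abs_partitionFn_sub_le_of_ne_zero (hs : IsWhitneyFamily O s) {i : s} {x x' : X}
    (hx : partitionFn O i x ≠ 0) : |partitionFn O i x - partitionFn O i x'| ≤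
      (1 + 4 * overlapConst X) / whitneyRadius O i * ‖x - x'‖ := by
  have hN := one_le_overlapConst X
  have hρ := hs.whitneyRadius_pos i
  have hxi := hs.mem_ball_of_partitionFn_ne_zero hx
  set ρ := whitneyRadius O i
  have hη := partitionFn_nonneg O i x'
  have hη1 := hs.partitionFn_le_one i x'
  by_cases hfar : ρ ≤ ‖x - x'‖
  · have hone : |partitionFn O i x - partitionFn O i x'| ≤ 1 :=
      abs_le.2 ⟨by linarith [partitionFn_nonneg O i x], by linarith [hs.partitionFn_le_one i x]⟩
    refine hone.trans ?_
    rw [div_mul_eq_mul_div, le_div_iff₀ hρ, one_mul]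
    exact hfar.trans (le_mul_of_one_le_left (norm_nonneg _) (by linarith))
  have hdist : dist x' x < ρ := by rwa [dist_comm, dist_eq_norm, ← not_le]
  have hx'i : x' ∈ ball (i : X) (10 * ρ) := by
    rw [mem_ball]
    linarith [dist_triangle x' x i, mem_ball.1 hxi]
  have hZx := hs.one_le_cutoffSum (ball_whitneyRadius_subset O i
    (ball_subset_ball (by linarith) hxi))
  have hZx' := hs.one_le_cutoffSum (ball_whitneyRadius_subset O i hx'i)
  have hZ : |cutoffSum O s x - cutoffSum O s x'| ≤ 2 * overlapConst X / (ρ / 2) * ‖x - x'‖ :=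
    hs.abs_cutoffSum_sub_le_of_mem_ball hxi (not_le.1 hfar)
  have hsplit : partitionFn O i x - partitionFn O i x' =
      (plateau (i : X) ρ x - plateau (i : X) ρ x') / cutoffSum O s x -
        partitionFn O i x' * ((cutoffSum O s x - cutoffSum O s x') / cutoffSum O s x) := by
    unfold partitionFn
    field_simp
    ring
  rw [hsplit]
  refine (abs_sub _ _).trans ?_
  rw [abs_mul, abs_div, abs_div, abs_of_nonneg hη, abs_of_pos (one_pos.trans_le hZx)]
  have hplateau := (div_le_self (abs_nonneg _) hZx).trans (abs_plateau_sub_le (i : X) hρ x x')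
  have hsum := (mul_le_of_le_one_left (by positivity) hη1).trans
    ((div_le_self (abs_nonneg _) hZx).trans hZ)
  exact (add_le_add hplateau hsum).trans_eq (by field_simp; ring)

lemma isBump_partitionFn (hs : IsWhitneyFamily O s) (i : s) :
    IsBump (i : X) (2 * whitneyRadius O i) (partitionConst X) (partitionFn O i) where
  support_subset _ hx := hs.mem_ball_of_partitionFn_ne_zero hx
  abs_le_one x := by
    rw [abs_of_nonneg (partitionFn_nonneg O i x)]
    exact hs.partitionFn_le_one i x
  abs_sub_le x x' := by
    have hN := one_le_overlapConst X
    have hρ := hs.whitneyRadius_pos i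
    have hconst : partitionConst X / (2 * whitneyRadius O i) =
        (1 + 4 * overlapConst X) / whitneyRadius O i := by
      unfold partitionConst
      field_simp
      ring
    rw [hconst]
    by_cases hx : partitionFn O i x = 0
    · by_cases hx' : partitionFn O i x' = 0
      · rw [hx, hx', sub_zero, abs_zero]
        positivity
      · rw [abs_sub_comm, norm_sub_rev]
        exact hs.abs_partitionFn_sub_le_of_ne_zero hx'
    · exact hs.abs_partitionFn_sub_le_of_ne_zero hx

lemma le_integral_partitionFn (hs : IsWhitneyFamily O s) (i : s) :
    whitneyRadius O i ^ Module.finrank ℝ X * unitBallVol X / overlapConst X ≤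
      ∫ x, partitionFn O i x := by
  have hρ := hs.whitneyRadius_pos i
  have hN := one_pos.trans_le (one_le_overlapConst X)
  refine (div_le_div_of_nonneg_right (le_integral_plateau (i : X) hρ) hN.le).trans ?_
  rw [← integral_div]
  refine integral_mono ((isBump_plateau (i : X) hρ).integrable.div_const _)
    (hs.isBump_partitionFn i).integrable fun x => ?_
  dsimp only
  by_cases hx : plateau (i : X) (whitneyRadius O i) x = 0
  · rw [hx, zero_div]
    exact partitionFn_nonneg O i x
  · have hpos := ((plateau_nonneg _ _ _).lt_of_ne' hx).trans_le (hs.plateau_le_cutoffSum i x)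
    exact div_le_div_of_nonneg_left (plateau_nonneg _ _ _) hpos (hs.cutoffSum_le x)

lemma integral_partitionFn_pos (hs : IsWhitneyFamily O s) (i : s) :
    0 < ∫ x, partitionFn O i x := by
  have := hs.whitneyRadius_pos i
  have := unitBallVol_pos (X := X)
  have := one_pos.trans_le (one_le_overlapConst X)
  exact lt_of_lt_of_le (by positivity) (hs.le_integral_partitionFn i)

lemma tsum_whitneyRadius_pow_le (hs : IsWhitneyFamily O s) :
    ∑' i : s, ENNReal.ofReal (whitneyRadius O i ^ Module.finrank ℝ X) ≤
      ENNReal.ofReal (5 ^ Module.finrank ℝ X / unitBallVol X) * volume O := by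
  have hω := unitBallVol_pos (X := X)
  have := hs.countable
  have hvol : ∑' i : s, volume (ball (i : X) (whitneyRadius O i / 5)) ≤ volume O := by
    rw [← measure_iUnion hs.disjoint_ball fun i => measurableSet_ball]
    refine measure_mono (Set.iUnion_subset fun i => ?_)
    exact (ball_subset_ball (by linarith [hs.whitneyRadius_pos i])).trans
      (ball_whitneyRadius_subset O i)
  refine le_trans (le_of_eq ?_) (mul_le_mul_right hvol _)
  rw [← ENNReal.tsum_mul_left]
  refine tsum_congr fun i => ?_
  have hρ := hs.whitneyRadius_pos i
  rw [volume_ball_eq _ (by positivity), ← ENNReal.ofReal_mul (by positivity), div_pow]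
  congr 1
  field_simp

end IsWhitneyFamily

end Counting

end Partition

section NormSummableSeries

variable {ι α : Type*} [Countable ι] [MeasurableSpace α] {μ : Measure α} {F : ι → α → ℝ}
  {U : α → ℝ}

lemma hasSum_integral_of_hasSum (hF : ∀ i, Integrable (F i) μ)
    (hsum : Summable fun i => ∫ a, ‖F i a‖ ∂μ) (hU : ∀ a, HasSum (fun i => F i a) (U a)) :
    HasSum (fun i => ∫ a, F i a ∂μ) (∫ a, U a ∂μ) := by
  have := hasSum_integral_of_summable_integral_norm hF hsum
  rwa [funext fun a => (hU a).tsum_eq] at this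

lemma integrable_of_hasSum (hF : ∀ i, Integrable (F i) μ)
    (hsum : Summable fun i => ∫ a, ‖F i a‖ ∂μ) (hU : ∀ a, HasSum (fun i => F i a) (U a)) :
    Integrable U μ := by
  refine ⟨aestronglyMeasurable_of_tendsto_ae atTop
    (fun S => (integrable_finsetSum S fun i _ => hF i).aestronglyMeasurable)
    (Eventually.of_forall hU), lt_of_le_of_lt ?_ hsum.tsum_ofReal_lt_top⟩
  calc ∫⁻ a, ‖U a‖ₑ ∂μ ≤ ∫⁻ a, ∑' i, ‖F i a‖ₑ ∂μ := lintegral_mono fun a => by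
        rw [← (hU a).tsum_eq]
        exact enorm_tsum_le_tsum_enorm
    _ = ∑' i, ∫⁻ a, ‖F i a‖ₑ ∂μ := lintegral_tsum fun i => (hF i).aestronglyMeasurable.enorm
    _ = ∑' i, ENNReal.ofReal (∫ a, ‖F i a‖ ∂μ) :=
        tsum_congr fun i => (ofReal_integral_norm_eq_lintegral_enorm (hF i)).symm

end NormSummableSeries

section CalderonZygmund

variable {X : Type*} [NormedAddCommGroup X] {O s : Set X}

/-- The superposition of the partition of unity with coefficients `c`. -/
def partitionSum (O : Set X) {s : Set X} (c : s → ℝ) (x : X) : ℝ := ∑' i, c i * partitionFn O i x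

lemma IsWhitneyFamily.partitionSum_eq_zero (hs : IsWhitneyFamily O s) (c : s → ℝ) {x : X}
    (hx : x ∉ O) :
    partitionSum O c x = 0 := by
  simp only [partitionSum, hs.partitionFn_eq_zero hx, mul_zero, tsum_zero]

section Definitions

variable [MeasureSpace X] {u : X → ℝ}

/-- The average of `u` with respect to the `i`-th function of the partition of unity. -/
def partitionMean (O : Set X) {s : Set X} (u : X → ℝ) (i : s) : ℝ :=
  (∫ x, u x * partitionFn O i x) / ∫ x, partitionFn O i x

/-- The Calderón–Zygmund good part of `u`: on `O`, the function is replaced by its averages. -/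
def goodPart (O s : Set X) (u : X → ℝ) (x : X) : ℝ :=
  Oᶜ.indicator u x + partitionSum O (partitionMean (s := s) O u) x

/-- The piece of the Calderón–Zygmund bad part of `u` that lives near the `i`-th Whitney ball. -/
def badPart (O : Set X) {s : Set X} (u : X → ℝ) (i : s) (x : X) : ℝ :=
  (u x - partitionMean O u i) * partitionFn O i x

lemma badPart_eq (O : Set X) {s : Set X} (u : X → ℝ) (i : s) (x : X) :
    badPart O u i x = u x * partitionFn O i x - partitionMean O u i * partitionFn O i x :=
  sub_mul _ _ _

lemma partitionMean_eq_zero {i : s} (hu : ∀ x, u x * partitionFn O i x = 0) :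
    partitionMean O u i = 0 := by
  simp only [partitionMean, hu, integral_zero, zero_div]

lemma badPart_eq_zero {i : s} (hu : ∀ x, u x * partitionFn O i x = 0) (x : X) :
    badPart O u i x = 0 := by
  rw [badPart_eq, hu, partitionMean_eq_zero hu, zero_mul, sub_zero]

lemma goodPart_zero (O s : Set X) (x : X) : goodPart O s 0 x = 0 := by
  simp only [goodPart, partitionSum, partitionMean, Pi.zero_apply, zero_mul, integral_zero,
    zero_div, tsum_zero, Set.indicator_zero', add_zero]

lemma goodPart_of_mem (u : X → ℝ) {x : X} (hx : x ∈ O) :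
    goodPart O s u x = partitionSum O (partitionMean (s := s) O u) x := by
  rw [goodPart, Set.indicator_of_notMem (Set.notMem_compl_iff.2 hx), zero_add]

lemma IsWhitneyFamily.goodPart_of_notMem (hs : IsWhitneyFamily O s) (u : X → ℝ) {x : X}
    (hx : x ∉ O) :
    goodPart O s u x = u x := by
  rw [goodPart, Set.indicator_of_mem hx, hs.partitionSum_eq_zero _ hx, add_zero]

end Definitions

variable [NormedSpace ℝ X] [FiniteDimensional ℝ X] [MeasureSpace X] [BorelSpace X]
  [(volume : Measure X).IsAddHaarMeasure] {u : X → ℝ}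

namespace IsWhitneyFamily

lemma measurable_partitionFn (hs : IsWhitneyFamily O s) (i : s) : Measurable (partitionFn O i) :=
  (hs.isBump_partitionFn i).continuous.measurable

lemma abs_partitionFn_le_one (hs : IsWhitneyFamily O s) (i : s) (x : X) :
    |partitionFn O i x| ≤ 1 :=
  (hs.isBump_partitionFn i).abs_le_one x

lemma hasSum_partitionSum (hs : IsWhitneyFamily O s) (c : s → ℝ) (x : X) :
    HasSum (fun i => c i * partitionFn O i x) (partitionSum O c x) :=
  (summable_of_hasFiniteSupport ((hs.finite_partitionFn_ne_zero x).subset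
    fun _ hi => right_ne_zero_of_mul hi)).hasSum

lemma hasSum_mul_partitionFn (hs : IsWhitneyFamily O s) (u : X → ℝ) (x : X) :
    HasSum (fun i : s => u x * partitionFn O i x) (O.indicator u x) := by
  by_cases hx : x ∈ O
  · simpa only [Set.indicator_of_mem hx, mul_one] using (hs.hasSum_partitionFn hx).mul_left (u x)
  · simpa only [Set.indicator_of_notMem hx, hs.partitionFn_eq_zero hx, mul_zero] using hasSum_zero

lemma measurable_partitionSum (hs : IsWhitneyFamily O s) (c : s → ℝ) :
    Measurable (partitionSum O c) := by
  have := hs.countable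
  exact measurable_of_tendsto_metrizable' atTop
    (fun S => Finset.measurable_sum S fun i _ => (hs.measurable_partitionFn i).const_mul (c i))
    (tendsto_pi_nhds.2 (hs.hasSum_partitionSum c))

lemma sum_partitionFn_le_one (hs : IsWhitneyFamily O s) (S : Finset s) (x : X) :
    ∑ i ∈ S, partitionFn O i x ≤ 1 := by
  by_cases hx : x ∈ O
  · exact sum_le_hasSum S (fun i _ => partitionFn_nonneg O i x) (hs.hasSum_partitionFn hx)
  · simp only [hs.partitionFn_eq_zero hx, Finset.sum_const_zero, zero_le_one]

lemma abs_partitionSum_le (hs : IsWhitneyFamily O s) {c : s → ℝ} {M : ℝ} (hM : 0 ≤ M)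
    (hc : ∀ i, |c i| ≤ M) (x : X) : |partitionSum O c x| ≤ M := by
  refine le_of_tendsto (hs.hasSum_partitionSum c x).abs (Eventually.of_forall fun S => ?_)
  calc _ ≤ ∑ i ∈ S, |c i * partitionFn O i x| := Finset.abs_sum_le_sum_abs _ _
    _ ≤ ∑ i ∈ S, M * partitionFn O i x := Finset.sum_le_sum fun i _ => by
        rw [abs_mul, abs_of_nonneg (partitionFn_nonneg O i x)]
        exact mul_le_mul_of_nonneg_right (hc i) (partitionFn_nonneg O i x)
    _ = M * ∑ i ∈ S, partitionFn O i x := (Finset.mul_sum _ _ _).symm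
    _ ≤ M := mul_le_of_le_one_right hM (hs.sum_partitionFn_le_one S x)

lemma abs_goodPart_le (hs : IsWhitneyFamily O s) {M : ℝ} (hM : 0 ≤ M) (hu : ∀ x ∉ O, |u x| ≤ M)
    (hmean : ∀ i : s, |partitionMean O u i| ≤ M) (x : X) : |goodPart O s u x| ≤ M := by
  by_cases hx : x ∈ O
  · rw [goodPart_of_mem u hx]
    exact hs.abs_partitionSum_le hM hmean x
  · rw [hs.goodPart_of_notMem u hx]
    exact hu x hx

lemma measurable_goodPart (hs : IsWhitneyFamily O s) (hu : Measurable u) :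
    Measurable (goodPart O s u) :=
  (hu.indicator hs.isOpen.measurableSet.compl).add (hs.measurable_partitionSum _)

lemma measurable_badPart (hs : IsWhitneyFamily O s) (hu : Measurable u) (i : s) :
    Measurable (badPart O u i) :=
  (hu.sub_const _).mul (hs.measurable_partitionFn i)

lemma abs_badPart_le (hs : IsWhitneyFamily O s) {M : ℝ} {i : s} {x : X} (hu : |u x| ≤ M)
    (hmean : |partitionMean O u i| ≤ M) : |badPart O u i x| ≤ 2 * M := by
  rw [badPart, abs_mul]
  refine (mul_le_of_le_one_right (abs_nonneg _) (hs.abs_partitionFn_le_one i x)).trans ?_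
  linarith [abs_sub (u x) (partitionMean O u i)]

lemma hasSum_badPart (hs : IsWhitneyFamily O s) (u : X → ℝ) (x : X) :
    HasSum (fun i : s => badPart O u i x) (u x - goodPart O s u x) := by
  have h := (hs.hasSum_mul_partitionFn u x).sub (hs.hasSum_partitionSum (partitionMean O u) x)
  have hval : O.indicator u x - partitionSum O (partitionMean (s := s) O u) x =
      u x - goodPart O s u x := by
    rw [goodPart, ← Set.indicator_self_add_compl_apply O u x]
    ring
  rw [hval] at h
  simpa only [badPart_eq] using h

lemma integral_partitionMean_mul (hs : IsWhitneyFamily O s) (u : X → ℝ) (i : s) :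
    ∫ x, partitionMean O u i * partitionFn O i x = ∫ x, u x * partitionFn O i x := by
  rw [integral_const_mul, partitionMean, div_mul_cancel₀ _ (hs.integral_partitionFn_pos i).ne']

lemma integrable_mul_partitionFn (hs : IsWhitneyFamily O s) (hu : Integrable u) (i : s) :
    Integrable fun x => u x * partitionFn O i x :=
  (hs.isBump_partitionFn i).integrable_mul hu

lemma integrable_const_mul_partitionFn (hs : IsWhitneyFamily O s) (c : ℝ) (i : s) :
    Integrable fun x => c * partitionFn O i x :=
  (hs.isBump_partitionFn i).integrable.const_mul c

lemma integrable_badPart (hs : IsWhitneyFamily O s) (hu : Integrable u) (i : s) :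
    Integrable (badPart O u i) := by
  rw [funext (badPart_eq O u i)]
  exact (hs.integrable_mul_partitionFn hu i).sub (hs.integrable_const_mul_partitionFn _ i)

lemma integral_badPart (hs : IsWhitneyFamily O s) (hu : Integrable u) (i : s) :
    ∫ x, badPart O u i x = 0 := by
  simp only [badPart_eq]
  rw [integral_sub (hs.integrable_mul_partitionFn hu i) (hs.integrable_const_mul_partitionFn _ i),
    hs.integral_partitionMean_mul, sub_self]

lemma abs_partitionMean_le_div (hs : IsWhitneyFamily O s) (u : X → ℝ) (i : s) :
    |partitionMean O u i| ≤ (∫ x, |u x| * partitionFn O i x) / ∫ x, partitionFn O i x := by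
  rw [partitionMean, abs_div, abs_of_pos (hs.integral_partitionFn_pos i)]
  refine div_le_div_of_nonneg_right ?_ (hs.integral_partitionFn_pos i).le
  refine (abs_integral_le_integral_abs).trans_eq ?_
  simp only [abs_mul, abs_of_nonneg (partitionFn_nonneg O i _)]

lemma abs_partitionMean_le (hs : IsWhitneyFamily O s) {M : ℝ} (hu : ∀ x, |u x| ≤ M) (i : s) :
    |partitionMean O u i| ≤ M := by
  have hpos := hs.integral_partitionFn_pos i
  refine (hs.abs_partitionMean_le_div u i).trans ((div_le_iff₀ hpos).2 ?_)
  rw [← integral_const_mul]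
  exact integral_mono_of_nonneg
    (ae_of_all _ fun x => mul_nonneg (abs_nonneg _) (partitionFn_nonneg O i x))
    (hs.integrable_const_mul_partitionFn M i)
    (ae_of_all _ fun x => mul_le_mul_of_nonneg_right (hu x) (partitionFn_nonneg O i x))

lemma integral_norm_badPart_le (hs : IsWhitneyFamily O s) (hu : Integrable u) (i : s) :
    ∫ x, ‖badPart O u i x‖ ≤ 2 * ∫ x, |u x| * partitionFn O i x := by
  have hpos := hs.integral_partitionFn_pos i
  have h1 := hs.integrable_mul_partitionFn hu.abs i
  have h2 := hs.integrable_const_mul_partitionFn |partitionMean O u i| i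
  calc ∫ x, ‖badPart O u i x‖
      ≤ ∫ x, (|u x| * partitionFn O i x + |partitionMean O u i| * partitionFn O i x) := by
        refine integral_mono (hs.integrable_badPart hu i).norm (h1.add h2) fun x => ?_
        dsimp only
        rw [badPart, norm_mul, Real.norm_of_nonneg (partitionFn_nonneg O i x), ← add_mul]
        exact mul_le_mul_of_nonneg_right (abs_sub _ _) (partitionFn_nonneg O i x)
    _ = (∫ x, |u x| * partitionFn O i x) + |partitionMean O u i| * ∫ x, partitionFn O i x := by
        rw [integral_add h1 h2, integral_const_mul]
    _ ≤ 2 * ∫ x, |u x| * partitionFn O i x := by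
        linarith [(le_div_iff₀ hpos).1 (hs.abs_partitionMean_le_div u i)]

lemma summable_integral_mul_partitionFn (hs : IsWhitneyFamily O s) (hu : Integrable u)
    (hu0 : ∀ x, 0 ≤ u x) : Summable fun i : s => ∫ x, u x * partitionFn O i x := by
  refine summable_of_sum_le (c := ∫ x, u x)
    (fun i => integral_nonneg fun x => mul_nonneg (hu0 x) (partitionFn_nonneg O i x)) fun S => ?_
  rw [← integral_finsetSum _ fun i _ => hs.integrable_mul_partitionFn hu i]
  refine integral_mono (integrable_finsetSum _ fun i _ => hs.integrable_mul_partitionFn hu i) hu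
    fun x => ?_
  dsimp only
  rw [← Finset.mul_sum]
  exact mul_le_of_le_one_right (hu0 x) (hs.sum_partitionFn_le_one S x)

lemma summable_integral_norm_badPart (hs : IsWhitneyFamily O s) (hu : Integrable u) :
    Summable fun i : s => ∫ x, ‖badPart O u i x‖ :=
  .of_nonneg_of_le (fun _ => integral_nonneg fun _ => norm_nonneg _)
    (hs.integral_norm_badPart_le hu)
    ((hs.summable_integral_mul_partitionFn hu.abs fun _ => abs_nonneg _).mul_left 2)

lemma integrable_sub_goodPart (hs : IsWhitneyFamily O s) (hu : Integrable u) :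
    Integrable fun x => u x - goodPart O s u x :=
  have := hs.countable
  integrable_of_hasSum (hs.integrable_badPart hu) (hs.summable_integral_norm_badPart hu)
    (hs.hasSum_badPart u)

lemma integrable_goodPart (hs : IsWhitneyFamily O s) (hu : Integrable u) :
    Integrable (goodPart O s u) := by
  refine (hu.sub (hs.integrable_sub_goodPart hu)).congr (ae_of_all _ fun x => ?_)
  exact sub_sub_cancel _ _

lemma integral_goodPart (hs : IsWhitneyFamily O s) (hu : Integrable u) :
    ∫ x, goodPart O s u x = ∫ x, u x := by
  have := hs.countable
  have h := hasSum_integral_of_hasSum (hs.integrable_badPart hu)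
    (hs.summable_integral_norm_badPart hu) (hs.hasSum_badPart u)
  simp only [hs.integral_badPart hu] at h
  rw [integral_sub hu (hs.integrable_goodPart hu)] at h
  linarith [h.unique hasSum_zero]

lemma hasSum_partitionMean (hs : IsWhitneyFamily O s) {ι : Type*} [Countable ι]
    {F : ι → X → ℝ} (hF : ∀ j, Integrable (F j)) (hsum : Summable fun j => ∫ x, ‖F j x‖)
    (hu : ∀ x, HasSum (fun j => F j x) (u x)) (i : s) :
    HasSum (fun j => partitionMean O (F j) i) (partitionMean O u i) := by
  refine (hasSum_integral_of_hasSum (fun j => hs.integrable_mul_partitionFn (hF j) i)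
    (.of_nonneg_of_le (fun j => integral_nonneg fun x => norm_nonneg _) (fun j => ?_) hsum)
    fun x => (hu x).mul_right _).div_const _
  refine integral_mono (hs.integrable_mul_partitionFn (hF j) i).norm (hF j).norm fun x => ?_
  dsimp only
  rw [norm_mul]
  exact mul_le_of_le_one_right (norm_nonneg _) (hs.abs_partitionFn_le_one i x)

lemma hasSum_goodPart (hs : IsWhitneyFamily O s) {ι : Type*} [Countable ι]
    {F : ι → X → ℝ} (hF : ∀ j, Integrable (F j)) (hsum : Summable fun j => ∫ x, ‖F j x‖)
    (hu : ∀ x, HasSum (fun j => F j x) (u x)) (x : X) :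
    HasSum (fun j => goodPart O s (F j) x) (goodPart O s u x) := by
  by_cases hx : x ∈ O
  · have hfinite : ∀ c : s → ℝ, partitionSum O c x =
        ∑ i ∈ (hs.finite_partitionFn_ne_zero x).toFinset, c i * partitionFn O i x := fun c =>
      tsum_eq_sum fun i hi => by
        rw [Set.Finite.mem_toFinset, Set.mem_ofPred_eq, not_not] at hi
        rw [hi, mul_zero]
    simp only [goodPart_of_mem _ hx, hfinite]
    exact hasSum_sum fun i _ => (hs.hasSum_partitionMean hF hsum hu i).mul_right _
  · simpa only [hs.goodPart_of_notMem _ hx] using hu x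

lemma goodPart_sub (hs : IsWhitneyFamily O s) {v : X → ℝ} (hu : Integrable u) (hv : Integrable v)
    (x : X) : goodPart O s (fun x => u x - v x) x = goodPart O s u x - goodPart O s v x := by
  have hmean : ∀ i : s, partitionMean O (fun x => u x - v x) i =
      partitionMean O u i - partitionMean O v i := fun i => by
    simp only [partitionMean, sub_mul]
    rw [integral_sub (hs.integrable_mul_partitionFn hu i) (hs.integrable_mul_partitionFn hv i),
      _root_.sub_div]
  by_cases hx : x ∈ O
  · simp only [goodPart_of_mem _ hx]
    refine (hs.hasSum_partitionSum _ x).unique ?_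
    simpa only [hmean, sub_mul] using
      (hs.hasSum_partitionSum (partitionMean O u) x).sub (hs.hasSum_partitionSum _ x)
  · simp only [hs.goodPart_of_notMem _ hx]

-- For the good part operators `G`, `G'` this is `G' u - G u = G' (u - G u) - (G u - G' (G u))`.
theorem hasSum_goodPart_sub_goodPart {O' t : Set X} (hs : IsWhitneyFamily O s)
    (ht : IsWhitneyFamily O' t) (hu : Integrable u) (x : X) :
    HasSum (Sum.elim (fun j : s => goodPart O' t (badPart O u j) x)
      fun i : t => -badPart O' (goodPart O s u) i x) (goodPart O' t u x - goodPart O s u x) := by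
  have := hs.countable
  have h1 := ht.hasSum_goodPart (hs.integrable_badPart hu) (hs.summable_integral_norm_badPart hu)
    (hs.hasSum_badPart u) x
  rw [ht.goodPart_sub hu (hs.integrable_goodPart hu)] at h1
  have h2 := (ht.hasSum_badPart (goodPart O s u) x).neg
  convert HasSum.sum (f := Sum.elim (fun j : s => goodPart O' t (badPart O u j) x)
      fun i : t => -badPart O' (goodPart O s u) i x) h1 h2 using 1
  ring

end IsWhitneyFamily

end CalderonZygmund

section BumpProducts

variable {X : Type*} [NormedAddCommGroup X] {c c' c₁ : X} {r r' r₁ Λ Λ' Λ₁ : ℝ} {φ ψ : X → ℝ}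

lemma IsBump.mono (hφ : IsBump c r Λ φ) (hball : ball c r ⊆ ball c' r') (hΛ : Λ / r ≤ Λ' / r') :
    IsBump c' r' Λ' φ where
  support_subset := hφ.support_subset.trans hball
  abs_le_one := hφ.abs_le_one
  abs_sub_le y y' :=
    (hφ.abs_sub_le y y').trans (mul_le_mul_of_nonneg_right hΛ (norm_nonneg _))

lemma IsBump.mul (hφ : IsBump c r Λ φ) (hψ : IsBump c' r' Λ' ψ) (hball : ball c r ⊆ ball c₁ r₁)
    (hΛ : Λ / r + Λ' / r' ≤ Λ₁ / r₁) : IsBump c₁ r₁ Λ₁ fun y => φ y * ψ y where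
  support_subset y hy := hball (hφ.support_subset (left_ne_zero_of_mul hy))
  abs_le_one y := by
    rw [abs_mul]
    exact mul_le_one₀ (hφ.abs_le_one y) (abs_nonneg _) (hψ.abs_le_one y)
  abs_sub_le y y' := by
    calc |φ y * ψ y - φ y' * ψ y'|
        = |(φ y - φ y') * ψ y + φ y' * (ψ y - ψ y')| := by ring_nf
      _ ≤ |φ y - φ y'| * |ψ y| + |φ y'| * |ψ y - ψ y'| := by
        rw [← abs_mul, ← abs_mul]
        exact abs_add_le _ _
      _ ≤ |φ y - φ y'| + |ψ y - ψ y'| :=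
        add_le_add (mul_le_of_le_one_right (abs_nonneg _) (hψ.abs_le_one y))
          (mul_le_of_le_one_left (abs_nonneg _) (hφ.abs_le_one y'))
      _ ≤ (Λ / r + Λ' / r') * ‖y - y'‖ := by
        rw [add_mul]
        exact add_le_add (hφ.abs_sub_le y y') (hψ.abs_sub_le y y')
      _ ≤ Λ₁ / r₁ * ‖y - y'‖ := mul_le_mul_of_nonneg_right hΛ (norm_nonneg _)

end BumpProducts

section Localized

/-- `u` is measurable, bounded by `M` and supported in the ball `B(c, r)`. -/
structure IsLocalized {X : Type*} [PseudoMetricSpace X] [MeasurableSpace X] (c : X) (r M : ℝ)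
    (u : X → ℝ) : Prop where
  measurable : Measurable u
  abs_le : ∀ x, |u x| ≤ M
  support_subset : Function.support u ⊆ ball c r

variable {X : Type*} [PseudoMetricSpace X] [MeasurableSpace X] {c : X} {r M : ℝ} {u : X → ℝ}

lemma IsLocalized.bound_nonneg (hu : IsLocalized c r M u) : 0 ≤ M :=
  (abs_nonneg _).trans (hu.abs_le c)

lemma IsLocalized.neg (hu : IsLocalized c r M u) : IsLocalized c r M fun x => -u x :=
  ⟨hu.measurable.neg, fun x => (abs_neg _).trans_le (hu.abs_le x), fun _ hx =>
    hu.support_subset (neg_ne_zero.1 hx)⟩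

end Localized

section ExceptionalSets

variable {X : Type*} [NormedAddCommGroup X] {O O' s t : Set X}

lemma whitneyRadius_mono (hsub : O' ⊆ O) (hOc : Oᶜ.Nonempty) (x : X) :
    whitneyRadius O' x ≤ whitneyRadius O x :=
  div_le_div_of_nonneg_right
    (infDist_le_infDist_of_subset (Set.compl_subset_compl.2 hsub) hOc) (by norm_num)

lemma IsWhitneyFamily.whitneyRadius_le_of_partitionFn_ne_zero (hs : IsWhitneyFamily O s)
    (ht : IsWhitneyFamily O' t) (hsub : O' ⊆ O) {j : s} {i : t} {z : X}
    (hj : partitionFn O j z ≠ 0) (hi : partitionFn O' i z ≠ 0) :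
    whitneyRadius O' i ≤ 3 / 2 * whitneyRadius O j := by
  linarith [le_whitneyRadius_of_mem_ball (ht.mem_ball_of_partitionFn_ne_zero hi),
    whitneyRadius_le_of_mem_ball (hs.mem_ball_of_partitionFn_ne_zero hj),
    whitneyRadius_mono hsub hs.nonempty_compl z]

variable [MeasureSpace X] {f u : X → ℝ}

lemma IsWhitneyFamily.support_badPart_subset (hs : IsWhitneyFamily O s) (u : X → ℝ) (i : s) :
    Function.support (badPart O u i) ⊆ ball (i : X) (2 * whitneyRadius O i) := fun _ hx =>
  hs.mem_ball_of_partitionFn_ne_zero (right_ne_zero_of_mul hx)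

lemma IsWhitneyFamily.exists_mem_ball_of_badPart_ne_zero (hs : IsWhitneyFamily O s) {u : X → ℝ}
    {i : s} {x : X} {r : ℝ} (hu : Function.support u ⊆ ball x r) (hne : badPart O u i ≠ 0) :
    ∃ w ∈ ball (i : X) (2 * whitneyRadius O i), w ∈ ball x r := by
  contrapose! hne
  refine funext (badPart_eq_zero fun w => ?_)
  by_cases hw : partitionFn O i w = 0
  · rw [hw, mul_zero]
  · rw [Function.notMem_support.1 fun h => hne w (hs.mem_ball_of_partitionFn_ne_zero hw) (hu h),
      zero_mul]

lemma exists_partitionFn_ne_zero_of_goodPart_ne_zero {x : X} (hx : x ∈ O)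
    (h : goodPart O s u x ≠ 0) :
    ∃ i : s, partitionFn O i x ≠ 0 ∧ ∃ z, u z ≠ 0 ∧ partitionFn O i z ≠ 0 := by
  contrapose! h
  rw [goodPart_of_mem u hx, partitionSum]
  refine (tsum_congr fun i => ?_).trans tsum_zero
  by_cases hi : partitionFn O i x = 0
  · rw [hi, mul_zero]
  · rw [partitionMean_eq_zero fun z => ?_, zero_mul]
    by_cases hz : u z = 0
    · rw [hz, zero_mul]
    · rw [h i hi z hz, mul_zero]

lemma IsWhitneyFamily.support_goodPart_badPart_subset (hs : IsWhitneyFamily O s)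
    (ht : IsWhitneyFamily O' t) (hsub : O' ⊆ O) (u : X → ℝ) (j : s) :
    Function.support (goodPart O' t (badPart O u j)) ⊆ ball (j : X) (10 * whitneyRadius O j) := by
  intro x hx
  have hpos := hs.whitneyRadius_pos j
  by_cases hxO : x ∈ O'
  · obtain ⟨i, hix, z, hz, hiz⟩ := exists_partitionFn_ne_zero_of_goodPart_ne_zero hxO hx
    have hradius :=
      hs.whitneyRadius_le_of_partitionFn_ne_zero ht hsub (right_ne_zero_of_mul hz) hiz
    have hxi := mem_ball.1 (ht.mem_ball_of_partitionFn_ne_zero hix)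
    have hzi := mem_ball.1 (ht.mem_ball_of_partitionFn_ne_zero hiz)
    have hzj := mem_ball.1 (hs.support_badPart_subset u j hz)
    rw [mem_ball]
    linarith [dist_triangle_right x z (i : X), dist_triangle x z (j : X)]
  · rw [Function.mem_support, ht.goodPart_of_notMem _ hxO] at hx
    exact ball_subset_ball (by linarith) (hs.support_badPart_subset u j hx)

variable [NormedSpace ℝ X]

/-- The constant comparing averages over Whitney balls with the values of the grand maximal
function off the open set. -/
def meanConst (X : Type*) [NormedAddCommGroup X] [NormedSpace ℝ X] [MeasureSpace X] : ℝ :=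
  15 * partitionConst X * 12 ^ Module.finrank ℝ X * overlapConst X / unitBallVol X

/-- `O` is an exceptional set for `f` at height `l` and scale `R`: off `O`, the function and its
grand maximal function are controlled by `l`, and the Whitney balls of `O` are small compared with
`R`. -/
structure IsExceptionalSet (R l : ℝ) (f : X → ℝ) (O : Set X) : Prop where
  height_nonneg : 0 ≤ l
  radius_le : ∀ y, 12 * whitneyRadius O y ≤ R
  grandMaximal_le : ∀ x ∉ O, grandMaximal R f x ≤ ENNReal.ofReal l
  abs_le : ∀ x ∉ O, |f x| ≤ meanConst X * l

variable {R l l' : ℝ}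

variable [FiniteDimensional ℝ X] [BorelSpace X] [(volume : Measure X).IsAddHaarMeasure]

lemma one_le_partitionConst (X : Type*) [NormedAddCommGroup X] [NormedSpace ℝ X] :
    1 ≤ partitionConst X := by
  have := one_le_overlapConst X
  unfold partitionConst
  linarith

lemma meanConst_pos (X : Type*) [NormedAddCommGroup X] [NormedSpace ℝ X] [FiniteDimensional ℝ X]
    [MeasureSpace X] [BorelSpace X] [(volume : Measure X).IsAddHaarMeasure] : 0 < meanConst X := by
  have := unitBallVol_pos (X := X)
  have := one_le_partitionConst X
  have := one_le_overlapConst X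
  unfold meanConst
  positivity

namespace IsExceptionalSet

lemma mono (hO : IsExceptionalSet R l f O) (h : l ≤ l') : IsExceptionalSet R l' f O where
  height_nonneg := hO.height_nonneg.trans h
  radius_le := hO.radius_le
  grandMaximal_le x hx := (hO.grandMaximal_le x hx).trans (ENNReal.ofReal_le_ofReal h)
  abs_le x hx := (hO.abs_le x hx).trans (mul_le_mul_of_nonneg_left h (meanConst_pos X).le)

lemma bound_nonneg (hO : IsExceptionalSet R l f O) : 0 ≤ meanConst X * l :=
  mul_nonneg (meanConst_pos X).le hO.height_nonneg

-- The test function lives on a dilate of the Whitney ball that reaches outside `O`, where the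
-- grand maximal function is small.
lemma abs_integral_mul_div_le (hO : IsExceptionalSet R l f O) (hs : IsWhitneyFamily O s) {i : s}
    {ψ : X → ℝ} (hψ : IsBump (i : X) (12 * whitneyRadius O i) (15 * partitionConst X) ψ) :
    |(∫ x, f x * ψ x) / ∫ x, partitionFn O i x| ≤ meanConst X * l := by
  have hΛ := one_le_partitionConst X
  have hov := one_le_overlapConst X
  have hω := unitBallVol_pos (X := X)
  have hρ := hs.whitneyRadius_pos i
  have hl := hO.height_nonneg
  obtain ⟨p, hp, hdist⟩ := hs.exists_notMem_dist_lt i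
  have hint : |∫ x, f x * ψ x| ≤
      15 * partitionConst X * (12 * whitneyRadius O i) ^ Module.finrank ℝ X * l := by
    rw [← ENNReal.ofReal_le_ofReal_iff (by positivity), ENNReal.ofReal_mul (by positivity)]
    exact (hψ.ofReal_abs_integral_le_grandMaximal (by linarith) (hO.radius_le i)
      (mem_ball.2 (by linarith))).trans (mul_le_mul_right (hO.grandMaximal_le p hp) _)
  have hpos := hs.integral_partitionFn_pos i
  rw [abs_div, abs_of_pos hpos, div_le_iff₀ hpos]
  calc _ ≤ _ := hint
    _ = meanConst X * l *
        (whitneyRadius O i ^ Module.finrank ℝ X * unitBallVol X / overlapConst X) := by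
      rw [meanConst, mul_pow]
      field_simp
    _ ≤ _ := mul_le_mul_of_nonneg_left (hs.le_integral_partitionFn i) hO.bound_nonneg

lemma abs_partitionMean_le (hO : IsExceptionalSet R l f O) (hs : IsWhitneyFamily O s) (i : s) :
    |partitionMean O f i| ≤ meanConst X * l := by
  have hρ := hs.whitneyRadius_pos i
  have hΛ := one_le_partitionConst X
  refine hO.abs_integral_mul_div_le hs ((hs.isBump_partitionFn i).mono
    (ball_subset_ball (by linarith)) ?_)
  rw [div_le_div_iff₀ (by positivity) (by positivity)]
  nlinarith [mul_pos hρ (one_pos.trans_le hΛ)]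

lemma abs_partitionMean_mul_partitionFn_le (hO' : IsExceptionalSet R l f O')
    (hs : IsWhitneyFamily O s) (ht : IsWhitneyFamily O' t) (hsub : O' ⊆ O) (j : s) (i : t) :
    |partitionMean O' (fun x => f x * partitionFn O j x) i| ≤ meanConst X * l := by
  by_cases hmeet : ∃ z, partitionFn O j z ≠ 0 ∧ partitionFn O' i z ≠ 0
  · obtain ⟨z, hj, hi⟩ := hmeet
    have hradius := hs.whitneyRadius_le_of_partitionFn_ne_zero ht hsub hj hi
    have hρi := ht.whitneyRadius_pos i
    have hρj := hs.whitneyRadius_pos j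
    have hΛ := one_le_partitionConst X
    have hbump : IsBump (i : X) (12 * whitneyRadius O' i) (15 * partitionConst X)
        fun x => partitionFn O' i x * partitionFn O j x := by
      refine (ht.isBump_partitionFn i).mul (hs.isBump_partitionFn j)
        (ball_subset_ball (by linarith)) ?_
      have : partitionConst X / (2 * whitneyRadius O j) ≤
          3 / 2 * (partitionConst X / (2 * whitneyRadius O' i)) := by
        rw [← mul_div_assoc, div_le_div_iff₀ (by positivity) (by positivity)]
        nlinarith
      refine (add_le_add_right this _).trans_eq ?_
      field_simp
      norm_num
    simpa only [partitionMean, mul_assoc, mul_comm (partitionFn O j _)] using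
      hO'.abs_integral_mul_div_le ht hbump
  · push Not at hmeet
    rw [partitionMean_eq_zero fun x => ?_, abs_zero]
    · exact hO'.bound_nonneg
    · by_cases hx : partitionFn O j x = 0
      · rw [hx, mul_zero, zero_mul]
      · rw [hmeet x hx, mul_zero]

lemma abs_partitionMean_badPart_le (hO : IsExceptionalSet R l f O)
    (hO' : IsExceptionalSet R l f O') (hs : IsWhitneyFamily O s) (ht : IsWhitneyFamily O' t)
    (hsub : O' ⊆ O) (hf : Integrable f) (j : s) (i : t) :
    |partitionMean O' (badPart O f j) i| ≤ 2 * (meanConst X * l) := by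
  have hmean : partitionMean O' (badPart O f j) i =
      partitionMean O' (fun x => f x * partitionFn O j x) i -
        partitionMean O f j * partitionMean O' (partitionFn O j) i := by
    simp only [partitionMean, badPart_eq, sub_mul, mul_assoc]
    rw [integral_sub, integral_const_mul, _root_.sub_div, mul_div_assoc]
    · simpa only [mul_assoc] using
        ht.integrable_mul_partitionFn (hs.integrable_mul_partitionFn hf j) i
    · exact (ht.integrable_mul_partitionFn (hs.isBump_partitionFn j).integrable i).const_mul _
  rw [hmean, two_mul]
  refine (abs_sub _ _).trans
    (add_le_add (hO'.abs_partitionMean_mul_partitionFn_le hs ht hsub j i) ?_)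
  rw [abs_mul]
  exact (mul_le_of_le_one_right (abs_nonneg _)
    (ht.abs_partitionMean_le (hs.abs_partitionFn_le_one j) i)).trans (hO.abs_partitionMean_le hs j)

lemma isLocalized_goodPart_badPart (hO : IsExceptionalSet R l f O)
    (hO' : IsExceptionalSet R l f O') (hs : IsWhitneyFamily O s) (ht : IsWhitneyFamily O' t)
    (hsub : O' ⊆ O) (hf : Integrable f) (hfm : Measurable f) (j : s) :
    IsLocalized (j : X) (10 * whitneyRadius O j) (2 * (meanConst X * l))
      (goodPart O' t (badPart O f j)) where
  measurable := ht.measurable_goodPart (hs.measurable_badPart hfm j)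
  abs_le := ht.abs_goodPart_le (mul_nonneg zero_le_two hO.bound_nonneg)
    (fun x hx => hs.abs_badPart_le (hO'.abs_le x hx) (hO.abs_partitionMean_le hs j))
    (hO.abs_partitionMean_badPart_le hO' hs ht hsub hf j)
  support_subset := hs.support_goodPart_badPart_subset ht hsub f j

lemma abs_goodPart_le (hO : IsExceptionalSet R l f O) (hs : IsWhitneyFamily O s) (x : X) :
    |goodPart O s f x| ≤ meanConst X * l :=
  hs.abs_goodPart_le hO.bound_nonneg hO.abs_le (hO.abs_partitionMean_le hs) x

lemma isLocalized_badPart_goodPart (hO : IsExceptionalSet R l f O) (hs : IsWhitneyFamily O s)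
    (ht : IsWhitneyFamily O' t) (hfm : Measurable f) (i : t) :
    IsLocalized (i : X) (10 * whitneyRadius O' i) (2 * (meanConst X * l))
      (badPart O' (goodPart O s f) i) where
  measurable := ht.measurable_badPart (hs.measurable_goodPart hfm) i
  abs_le x := ht.abs_badPart_le (hO.abs_goodPart_le hs x)
    (ht.abs_partitionMean_le (hO.abs_goodPart_le hs) i)
  support_subset := (ht.support_badPart_subset _ i).trans
    (ball_subset_ball (by linarith [ht.whitneyRadius_pos i]))

end IsExceptionalSet

end ExceptionalSets

section LevelSums

variable {α : Type*} [MeasurableSpace α] {μ : Measure α} {g : α → ℝ≥0∞} {L : ℝ}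

lemma sum_range_ofReal_two_pow_le (hL : 0 ≤ L) (N : ℕ) :
    ∑ k ∈ Finset.range N, ENNReal.ofReal (L * 2 ^ k) ≤ ENNReal.ofReal (L * 2 ^ N) := by
  rw [← ENNReal.ofReal_sum_of_nonneg fun k _ => by positivity, ← Finset.mul_sum,
    geom_sum_eq (by norm_num)]
  exact ENNReal.ofReal_le_ofReal (mul_le_mul_of_nonneg_left (by norm_num) hL)

lemma tsum_indicator_two_pow_le (hL : 0 ≤ L) (a : ℝ≥0∞) :
    ∑' k : ℕ, (Set.Ioi (ENNReal.ofReal (L * 2 ^ k))).indicator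
      (fun _ => ENNReal.ofReal (L * 2 ^ k)) a ≤ 2 * a := by
  rw [ENNReal.tsum_eq_iSup_nat]
  refine iSup_le fun N => ?_
  induction N with
  | zero => simp only [Finset.range_zero, Finset.sum_empty, zero_le]
  | succ N ih =>
    by_cases ha : a ∈ Set.Ioi (ENNReal.ofReal (L * 2 ^ N))
    · calc _ ≤ ∑ k ∈ Finset.range (N + 1), ENNReal.ofReal (L * 2 ^ k) :=
            Finset.sum_le_sum fun k _ => Set.indicator_le_self' (fun _ _ => zero_le) a
        _ ≤ ENNReal.ofReal (2 * (L * 2 ^ N)) :=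
            (sum_range_ofReal_two_pow_le hL (N + 1)).trans_eq (by ring_nf)
        _ ≤ 2 * a := by
            rw [ENNReal.ofReal_mul zero_le_two, ENNReal.ofReal_ofNat]
            exact mul_le_mul_right ha.le 2
    · rw [Finset.sum_range_succ, Set.indicator_of_notMem ha, add_zero]
      exact ih

lemma tsum_two_pow_mul_measure_lt_le (hg : Measurable g) (hL : 0 ≤ L) :
    ∑' k : ℕ, ENNReal.ofReal (L * 2 ^ k) * μ {x | ENNReal.ofReal (L * 2 ^ k) < g x} ≤
      2 * ∫⁻ x, g x ∂μ := by
  have hterm : ∀ k : ℕ, ENNReal.ofReal (L * 2 ^ k) * μ {x | ENNReal.ofReal (L * 2 ^ k) < g x} =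
      ∫⁻ x, (Set.Ioi (ENNReal.ofReal (L * 2 ^ k))).indicator
        (fun _ => ENNReal.ofReal (L * 2 ^ k)) (g x) ∂μ := fun k =>
    (lintegral_indicator_const (measurableSet_lt measurable_const hg) _).symm
  have hmeas : ∀ k : ℕ, Measurable fun x => (Set.Ioi (ENNReal.ofReal (L * 2 ^ k))).indicator
      (fun _ => ENNReal.ofReal (L * 2 ^ k)) (g x) := fun k =>
    (measurable_const.indicator measurableSet_Ioi).comp hg
  rw [tsum_congr hterm, ← lintegral_tsum fun k => (hmeas k).aemeasurable,
    ← lintegral_const_mul _ hg]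
  exact lintegral_mono fun x => tsum_indicator_two_pow_le hL (g x)

end LevelSums

section Pieces

variable {X : Type*} [NormedAddCommGroup X] [MeasureSpace X] {x c y : X} {r R M ρ : ℝ} {u : X → ℝ}

/-- A piece of the decomposition of a function supported in `B(x, 2R)`: a localized function of
mean zero, or the coarse piece on `B(x, 3R)`. -/
structure IsPiece (x : X) (R : ℝ) (c : X) (r M : ℝ) (u : X → ℝ) : Prop
    extends IsLocalized c r M u where
  radius_pos : 0 < r
  radius_le : r ≤ 3 * R
  ball_subset : ball c r ⊆ ball x (4 * R)
  integral_eq_zero_or : ∫ z, u z = 0 ∨ c = x ∧ r = 3 * R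

lemma isPiece_zero (x : X) (hR : 0 < R) : IsPiece x R x (3 * R) 0 0 where
  measurable := measurable_zero
  abs_le _ := by simp only [Pi.zero_apply, abs_zero, le_refl]
  support_subset := by simp only [Function.support_zero, Set.empty_subset]
  radius_pos := by positivity
  radius_le := le_rfl
  ball_subset := ball_subset_ball (by linarith)
  integral_eq_zero_or := Or.inr ⟨rfl, rfl⟩

variable [NormedSpace ℝ X]

lemma IsLocalized.exists_isPiece (hu : IsLocalized y (10 * ρ) M u) (hρ : 0 < ρ) (hR : 100 * ρ ≤ R)
    (hint : ∫ z, u z = 0)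
    (hmeet : u ≠ 0 → ∃ w ∈ ball y (2 * ρ), w ∈ ball x (2 * R + R / 25)) :
    ∃ c r M', IsPiece x R c r M' u ∧
      M' * r ^ Module.finrank ℝ X ≤ M * (10 * ρ) ^ Module.finrank ℝ X := by
  by_cases h : u = 0
  · refine ⟨x, 3 * R, 0, h ▸ isPiece_zero x (by linarith), ?_⟩
    have := hu.bound_nonneg
    rw [zero_mul]
    positivity
  · obtain ⟨w, hwy, hwx⟩ := hmeet h
    refine ⟨y, 10 * ρ, M, ⟨hu, by positivity, by linarith, fun z hz => ?_, Or.inl hint⟩, le_rfl⟩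
    rw [mem_ball] at *
    linarith [dist_triangle z y x, dist_triangle_left y x w]

variable [FiniteDimensional ℝ X] [BorelSpace X] [(volume : Measure X).IsAddHaarMeasure]

lemma IsLocalized.lintegral_enorm_le (hu : IsLocalized c r M u) (hr : 0 < r) :
    ∫⁻ z, ‖u z‖ₑ ≤
      ENNReal.ofReal (unitBallVol X) * ENNReal.ofReal (M * r ^ Module.finrank ℝ X) := by
  have hpoint : ∀ z, ‖u z‖ₑ ≤ (ball c r).indicator (fun _ => ENNReal.ofReal M) z := fun z => by
    by_cases hz : z ∈ ball c r
    · rw [Set.indicator_of_mem hz, enorm_eq_ofReal_abs]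
      exact ENNReal.ofReal_le_ofReal (hu.abs_le z)
    · rw [Function.notMem_support.1 fun h => hz (hu.support_subset h), enorm_zero]
      exact zero_le
  refine (lintegral_mono hpoint).trans_eq ?_
  rw [lintegral_indicator_const measurableSet_ball, volume_ball_eq c hr,
    ← ENNReal.ofReal_mul hu.bound_nonneg, ← ENNReal.ofReal_mul unitBallVol_pos.le]
  ring_nf

section Series

variable {ι : Type*} {u : ι → X → ℝ} {c : ι → X} {r M : ι → ℝ}

lemma tsum_lintegral_enorm_ne_top_of_isLocalized (hu : ∀ k, IsLocalized (c k) (r k) (M k) (u k))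
    (hr : ∀ k, 0 < r k)
    (hcost : ∑' k, ENNReal.ofReal (M k * r k ^ Module.finrank ℝ X) ≠ ⊤) :
    ∑' k, ∫⁻ z, ‖u k z‖ₑ ≠ ⊤ := by
  refine ne_top_of_le_ne_top (ENNReal.mul_ne_top
    (ENNReal.ofReal_ne_top (r := unitBallVol X)) hcost) ?_
  rw [← ENNReal.tsum_mul_left]
  exact ENNReal.tsum_le_tsum fun k => (hu k).lintegral_enorm_le (hr k)

lemma ae_summable_of_isLocalized [Countable ι] (hu : ∀ k, IsLocalized (c k) (r k) (M k) (u k))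
    (hr : ∀ k, 0 < r k)
    (hcost : ∑' k, ENNReal.ofReal (M k * r k ^ Module.finrank ℝ X) ≠ ⊤) :
    ∀ᵐ z, Summable fun k => u k z := by
  have hnorm : ∑' k, eLpNorm (u k) 1 volume ≠ ⊤ := by
    simpa only [eLpNorm_one_eq_lintegral_enorm] using
      tsum_lintegral_enorm_ne_top_of_isLocalized hu hr hcost
  filter_upwards [summable_norm_of_tsum_eLpNorm_ne_top le_rfl
    (fun k => (hu k).measurable.aestronglyMeasurable) hnorm] with z hz
  exact hz.of_norm

end Series

end Pieces

section Tower

variable {X : Type*} [NormedAddCommGroup X] {O s : Set X} {R : ℝ}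

lemma IsWhitneyFamily.support_goodPart_subset [MeasureSpace X] (hs : IsWhitneyFamily O s)
    (hradius : ∀ y, 100 * whitneyRadius O y ≤ R) {f : X → ℝ} {x : X} {r : ℝ} (hR : 0 ≤ R)
    (hf : Function.support f ⊆ ball x r) :
    Function.support (goodPart O s f) ⊆ ball x (r + R / 25) := by
  intro z hz
  by_cases hzO : z ∈ O
  · obtain ⟨i, hiz, w, hw, hiw⟩ := exists_partitionFn_ne_zero_of_goodPart_ne_zero hzO hz
    have hzi := mem_ball.1 (hs.mem_ball_of_partitionFn_ne_zero hiz)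
    have hwi := mem_ball.1 (hs.mem_ball_of_partitionFn_ne_zero hiw)
    have hwx := mem_ball.1 (hf hw)
    rw [mem_ball]
    linarith [dist_triangle_right z w (i : X), dist_triangle z w x, hradius i]
  · rw [Function.mem_support, hs.goodPart_of_notMem _ hzO] at hz
    exact ball_subset_ball (by linarith) (hf hz)

variable [NormedSpace ℝ X] [MeasureSpace X] {L : ℝ} {f : X → ℝ}

/-- The set where the grand maximal function exceeds the dyadic height `2 ^ k * L`. -/
def dyadicLevelSet (R L : ℝ) (f : X → ℝ) (k : ℕ) : Set X :=
  {z | ENNReal.ofReal (L * 2 ^ k) < grandMaximal R f z}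

lemma isOpen_dyadicLevelSet (R L : ℝ) (f : X → ℝ) (k : ℕ) : IsOpen (dyadicLevelSet R L f k) :=
  isOpen_lt_grandMaximal R f _

lemma dyadicLevelSet_succ_subset (hL : 0 ≤ L) (f : X → ℝ) (k : ℕ) :
    dyadicLevelSet R L f (k + 1) ⊆ dyadicLevelSet R L f k := fun _ hz =>
  lt_of_le_of_lt (ENNReal.ofReal_le_ofReal (mul_le_mul_of_nonneg_left
    (pow_le_pow_right₀ one_le_two k.le_succ) hL)) hz

lemma volume_dyadicLevelSet_le [OpensMeasurableSpace X] {v : ℝ} (hL : 0 < L)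
    (hG : ∫⁻ z, grandMaximal R f z = ENNReal.ofReal (L * v)) (k : ℕ) :
    volume (dyadicLevelSet R L f k) ≤ ENNReal.ofReal v := by
  have hmarkov := meas_ge_le_lintegral_div (measurable_grandMaximal R f).aemeasurable
    (ENNReal.ofReal_pos.2 hL).ne' ENNReal.ofReal_ne_top (μ := volume)
  rw [hG, ← ENNReal.ofReal_div_of_pos hL, mul_div_cancel_left₀ _ hL.ne'] at hmarkov
  refine (measure_mono fun z hz => ?_).trans hmarkov
  exact (ENNReal.ofReal_le_ofReal (le_mul_of_one_le_right hL.le (one_le_pow₀ one_le_two))).trans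
    (le_of_lt hz)

/-- Whitney families of the dyadic level sets whose radii are small compared with `R`, all levels
being exceptional for `f`. -/
structure IsWhitneyTower (R L : ℝ) (f : X → ℝ) (s : ℕ → Set X) : Prop where
  isWhitneyFamily : ∀ k, IsWhitneyFamily (dyadicLevelSet R L f k) (s k)
  isExceptionalSet : ∀ k, IsExceptionalSet R (L * 2 ^ k) f (dyadicLevelSet R L f k)
  radius_le : ∀ k y, 100 * whitneyRadius (dyadicLevelSet R L f k) y ≤ R

variable [FiniteDimensional ℝ X] [BorelSpace X] [(volume : Measure X).IsAddHaarMeasure]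
  [Nontrivial X]

lemma whitneyRadius_le_of_volume_le {y : X} (hR : 0 ≤ R)
    (hO : volume O ≤ ENNReal.ofReal ((R / 10) ^ Module.finrank ℝ X * unitBallVol X)) :
    100 * whitneyRadius O y ≤ R := by
  rcases (whitneyRadius_nonneg O y).eq_or_lt with h | h
  · rwa [← h, mul_zero]
  have hω := unitBallVol_pos (X := X)
  have hvol := (measure_mono (ball_whitneyRadius_subset O y)).trans hO
  rw [volume_ball_eq y (by positivity), ENNReal.ofReal_le_ofReal_iff (by positivity)] at hvol
  have := (pow_le_pow_iff_left₀ (by positivity) (by positivity) Module.finrank_pos.ne').1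
    (le_of_mul_le_mul_right hvol hω)
  linarith

lemma nonempty_compl_of_volume_ne_top (hO : volume O ≠ ⊤) : Oᶜ.Nonempty := by
  by_contra h
  rw [Set.not_nonempty_iff_eq_empty, Set.compl_empty_iff] at h
  have : NoncompactSpace X := NormedSpace.noncompactSpace ℝ X
  exact hO (h ▸ measure_univ_of_isAddLeftInvariant volume)

end Tower

section TowerPieces

variable {X : Type*} [NormedAddCommGroup X] [NormedSpace ℝ X] [MeasureSpace X] {R L : ℝ}
  {f : X → ℝ} {s : ℕ → Set X}

/-- Index set of the pieces: the coarse piece, and for every level the Whitney balls of this level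
and of the next one. -/
abbrev TowerIndex (s : ℕ → Set X) : Type _ := Unit ⊕ Σ k, s k ⊕ s (k + 1)

/-- The pieces of `f`: the coarse good part, and the regrouped differences of consecutive good
parts. -/
def towerPiece (R L : ℝ) (f : X → ℝ) (s : ℕ → Set X) : TowerIndex s → X → ℝ
  | .inl _ => goodPart (dyadicLevelSet R L f 0) (s 0) f
  | .inr ⟨k, .inl j⟩ => goodPart (dyadicLevelSet R L f (k + 1)) (s (k + 1))
      (badPart (dyadicLevelSet R L f k) f j)
  | .inr ⟨k, .inr i⟩ => fun z => -badPart (dyadicLevelSet R L f (k + 1))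
      (goodPart (dyadicLevelSet R L f k) (s k) f) i z

/-- The bound for (height of the piece) times (radius of its ball) to the power of the dimension. -/
def towerCost (R L : ℝ) (f : X → ℝ) (s : ℕ → Set X) : TowerIndex s → ℝ
  | .inl _ => meanConst X * L * (3 * R) ^ Module.finrank ℝ X
  | .inr ⟨k, .inl j⟩ => 2 * (meanConst X * (L * 2 ^ (k + 1))) *
      (10 * whitneyRadius (dyadicLevelSet R L f k) j) ^ Module.finrank ℝ X
  | .inr ⟨k, .inr i⟩ => 2 * (meanConst X * (L * 2 ^ (k + 1))) *
      (10 * whitneyRadius (dyadicLevelSet R L f (k + 1)) i) ^ Module.finrank ℝ X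

/-- The ratio between the total cost of the pieces and the integral of the grand maximal
function. -/
def pieceConst (X : Type*) [NormedAddCommGroup X] [NormedSpace ℝ X] [MeasureSpace X] : ℝ :=
  13 * (meanConst X * 50 ^ Module.finrank ℝ X / unitBallVol X)

lemma IsWhitneyTower.tendsto_goodPart (hT : IsWhitneyTower R L f s) (hL : 0 < L) {z : X}
    (hz : grandMaximal R f z < ⊤) :
    Tendsto (fun k => goodPart (dyadicLevelSet R L f k) (s k) f z) atTop (𝓝 (f z)) := by
  have hheight : Tendsto (fun k : ℕ => L * 2 ^ k) atTop atTop :=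
    Tendsto.const_mul_atTop hL (tendsto_pow_atTop_atTop_of_one_lt one_lt_two)
  refine tendsto_const_nhds.congr' ?_
  filter_upwards [hheight.eventually_ge_atTop (grandMaximal R f z).toReal] with k hk
  have hzk : z ∉ dyadicLevelSet R L f k :=
    not_lt.2 ((ENNReal.le_ofReal_iff_toReal_le hz.ne (by positivity)).2 hk)
  exact ((hT.isWhitneyFamily k).goodPart_of_notMem f hzk).symm

variable [FiniteDimensional ℝ X] [BorelSpace X] [(volume : Measure X).IsAddHaarMeasure]

lemma two_pow_div_le_meanConst (X : Type*) [NormedAddCommGroup X] [NormedSpace ℝ X]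
    [FiniteDimensional ℝ X] [MeasureSpace X] [BorelSpace X]
    [(volume : Measure X).IsAddHaarMeasure] :
    2 ^ (Module.finrank ℝ X + 1) / unitBallVol X ≤ meanConst X := by
  refine div_le_div_of_nonneg_right ?_ unitBallVol_pos.le
  calc (2 : ℝ) ^ (Module.finrank ℝ X + 1) = 2 * 1 * 2 ^ Module.finrank ℝ X * 1 := by ring
    _ ≤ 15 * partitionConst X * 12 ^ Module.finrank ℝ X * overlapConst X := by
      have := one_le_partitionConst X
      have := one_le_overlapConst X
      gcongr <;> norm_num

lemma pieceConst_pos (X : Type*) [NormedAddCommGroup X] [NormedSpace ℝ X]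
    [FiniteDimensional ℝ X] [MeasureSpace X] [BorelSpace X]
    [(volume : Measure X).IsAddHaarMeasure] : 0 < pieceConst X := by
  have := unitBallVol_pos (X := X)
  have := meanConst_pos X
  unfold pieceConst
  positivity

lemma exists_isWhitneyTower [Nontrivial X] (hR : 0 < R) (hL : 0 < L)
    (hG : ∫⁻ z, grandMaximal R f z =
      ENNReal.ofReal (L * ((R / 10) ^ Module.finrank ℝ X * unitBallVol X)))
    (hfG : ∀ z, ENNReal.ofReal |f z| ≤
      ENNReal.ofReal (2 ^ (Module.finrank ℝ X + 1) / unitBallVol X) * grandMaximal R f z) :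
    ∃ s, IsWhitneyTower R L f s := by
  have hω := unitBallVol_pos (X := X)
  have hradius : ∀ k y, 100 * whitneyRadius (dyadicLevelSet R L f k) y ≤ R := fun k y =>
    whitneyRadius_le_of_volume_le hR.le (volume_dyadicLevelSet_le hL hG k)
  have hfamily : ∀ k, ∃ s, IsWhitneyFamily (dyadicLevelSet R L f k) s := fun k =>
    exists_isWhitneyFamily (D := R / 100) (isOpen_dyadicLevelSet R L f k)
      (nonempty_compl_of_volume_ne_top
        (ne_top_of_le_ne_top ENNReal.ofReal_ne_top (volume_dyadicLevelSet_le hL hG k)))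
      fun y _ => by linarith [hradius k y]
  choose s hs using hfamily
  refine ⟨s, hs, fun k => ⟨by positivity, fun y => ?_, fun z hz => not_lt.1 hz, fun z hz => ?_⟩,
    hradius⟩
  · linarith [hradius k y, whitneyRadius_nonneg (dyadicLevelSet R L f k) y]
  · have h := (hfG z).trans (mul_le_mul_right (not_lt.1 hz) _)
    rw [← ENNReal.ofReal_mul (by positivity), ENNReal.ofReal_le_ofReal_iff (by positivity)] at h
    exact h.trans (mul_le_mul_of_nonneg_right (two_pow_div_le_meanConst X) (by positivity))

lemma IsWhitneyFamily.tsum_ofReal_mul_pow_le {O s : Set X} (hs : IsWhitneyFamily O s) {a : ℝ}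
    (ha : 0 ≤ a) : ∑' i : s, ENNReal.ofReal (a * (10 * whitneyRadius O i) ^ Module.finrank ℝ X) ≤
      ENNReal.ofReal (a * (50 ^ Module.finrank ℝ X / unitBallVol X)) * volume O := by
  have hterm : ∀ i : s, ENNReal.ofReal (a * (10 * whitneyRadius O i) ^ Module.finrank ℝ X) =
      ENNReal.ofReal (a * 10 ^ Module.finrank ℝ X) *
        ENNReal.ofReal (whitneyRadius O i ^ Module.finrank ℝ X) := fun i => by
    rw [← ENNReal.ofReal_mul (by positivity), mul_pow, mul_assoc]
  rw [tsum_congr hterm, ENNReal.tsum_mul_left]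
  refine (mul_le_mul_right hs.tsum_whitneyRadius_pow_le _).trans_eq ?_
  rw [← mul_assoc, ← ENNReal.ofReal_mul (by positivity)]
  congr 2
  rw [show (50 : ℝ) = 10 * 5 by norm_num, mul_pow]
  ring

namespace IsWhitneyTower

section Cost

lemma tsum_towerCost_level_le (hT : IsWhitneyTower R L f s) (hL : 0 < L) (k : ℕ) :
    ∑' b : s k ⊕ s (k + 1), ENNReal.ofReal (towerCost R L f s (.inr ⟨k, b⟩)) ≤
      ENNReal.ofReal (meanConst X * 50 ^ Module.finrank ℝ X / unitBallVol X) *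
        (4 * (ENNReal.ofReal (L * 2 ^ k) * volume (dyadicLevelSet R L f k)) +
          2 * (ENNReal.ofReal (L * 2 ^ (k + 1)) * volume (dyadicLevelSet R L f (k + 1)))) := by
  have hω := unitBallVol_pos (X := X)
  have hm := meanConst_pos X
  have hstep : ∀ (a : ℝ) (n k' : ℕ), 0 ≤ a →
      2 * (meanConst X * (L * 2 ^ (k + 1))) = n * (meanConst X * a) →
      ∑' i : s k', ENNReal.ofReal (2 * (meanConst X * (L * 2 ^ (k + 1))) *
        (10 * whitneyRadius (dyadicLevelSet R L f k') i) ^ Module.finrank ℝ X) ≤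
      ENNReal.ofReal (meanConst X * 50 ^ Module.finrank ℝ X / unitBallVol X) *
        (n * (ENNReal.ofReal a * volume (dyadicLevelSet R L f k'))) := by
    intro a n k' _ h
    refine ((hT.isWhitneyFamily k').tsum_ofReal_mul_pow_le (by positivity)).trans_eq ?_
    rw [h, ← ENNReal.ofReal_natCast n, ← mul_assoc (ENNReal.ofReal (n : ℝ)),
      ← ENNReal.ofReal_mul (by positivity), ← mul_assoc (ENNReal.ofReal (meanConst X * _ / _)),
      ← ENNReal.ofReal_mul (by positivity)]
    congr 2
    ring
  rw [Summable.tsum_sum ENNReal.summable ENNReal.summable, mul_add]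
  exact add_le_add (hstep (L * 2 ^ k) 4 k (by positivity) (by push_cast; ring))
    (hstep (L * 2 ^ (k + 1)) 2 (k + 1) (by positivity) (by push_cast; ring))

lemma tsum_towerCost_le (hT : IsWhitneyTower R L f s) (hL : 0 < L)
    (hG : ∫⁻ z, grandMaximal R f z =
      ENNReal.ofReal (L * ((R / 10) ^ Module.finrank ℝ X * unitBallVol X))) (hR : 0 < R) :
    ∑' p, ENNReal.ofReal (towerCost R L f s p) ≤
      ENNReal.ofReal (pieceConst X) * ∫⁻ z, grandMaximal R f z := by
  have hω := unitBallVol_pos (X := X)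
  have hm := meanConst_pos X
  set K := meanConst X * 50 ^ Module.finrank ℝ X / unitBallVol X with hK
  have hKpos : 0 < K := by positivity
  have hcoarse : ENNReal.ofReal (meanConst X * L * (3 * R) ^ Module.finrank ℝ X) ≤
      ENNReal.ofReal K * ∫⁻ z, grandMaximal R f z := by
    rw [hG, ← ENNReal.ofReal_mul hKpos.le]
    refine ENNReal.ofReal_le_ofReal ?_
    calc meanConst X * L * (3 * R) ^ Module.finrank ℝ X
        ≤ meanConst X * L * (50 * (R / 10)) ^ Module.finrank ℝ X :=
          mul_le_mul_of_nonneg_left (pow_le_pow_left₀ (by positivity) (by linarith) _)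
            (by positivity)
      _ = _ := by
          rw [hK, mul_pow]
          field_simp
  have hlevels := tsum_two_pow_mul_measure_lt_le (μ := volume) (measurable_grandMaximal R f) hL.le
  rw [Summable.tsum_sum ENNReal.summable ENNReal.summable, tsum_fintype, Finset.univ_unique,
    Finset.sum_singleton, ENNReal.tsum_sigma']
  have hfine : ∑' k, ∑' b : s k ⊕ s (k + 1), ENNReal.ofReal (towerCost R L f s (.inr ⟨k, b⟩)) ≤
      ENNReal.ofReal K * (12 * ∫⁻ z, grandMaximal R f z) := by
    refine (ENNReal.tsum_le_tsum (hT.tsum_towerCost_level_le hL)).trans ?_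
    rw [ENNReal.tsum_mul_left, ENNReal.tsum_add, ENNReal.tsum_mul_left, ENNReal.tsum_mul_left]
    refine mul_le_mul_right ?_ _
    have hshift := (ENNReal.tsum_comp_le_tsum_of_injective (add_left_injective 1) fun k : ℕ =>
      ENNReal.ofReal (L * 2 ^ k) * volume (dyadicLevelSet R L f k)).trans hlevels
    refine (add_le_add (mul_le_mul_right hlevels 4) (mul_le_mul_right hshift 2)).trans_eq ?_
    ring
  refine (add_le_add hcoarse hfine).trans_eq ?_
  rw [pieceConst, ENNReal.ofReal_mul (by norm_num), ENNReal.ofReal_ofNat]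
  ring

end Cost

section Pieces

variable {x : X}

lemma isPiece_coarse (hT : IsWhitneyTower R L f s) (hR : 0 < R) (hfm : Measurable f)
    (hsupp : Function.support f ⊆ ball x (2 * R)) :
    IsPiece x R x (3 * R) (meanConst X * L) (goodPart (dyadicLevelSet R L f 0) (s 0) f) where
  measurable := (hT.isWhitneyFamily 0).measurable_goodPart hfm
  abs_le z := by
    simpa only [pow_zero, mul_one] using
      (hT.isExceptionalSet 0).abs_goodPart_le (hT.isWhitneyFamily 0) z
  support_subset := ((hT.isWhitneyFamily 0).support_goodPart_subset (hT.radius_le 0) hR.le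
    hsupp).trans (ball_subset_ball (by linarith))
  radius_pos := by positivity
  radius_le := le_rfl
  ball_subset := ball_subset_ball (by linarith)
  integral_eq_zero_or := Or.inr ⟨rfl, rfl⟩

lemma isExceptionalSet_succ (hT : IsWhitneyTower R L f s) (hL : 0 ≤ L) (k : ℕ) :
    IsExceptionalSet R (L * 2 ^ (k + 1)) f (dyadicLevelSet R L f k) :=
  (hT.isExceptionalSet k).mono (mul_le_mul_of_nonneg_left
    (pow_le_pow_right₀ one_le_two k.le_succ) hL)

lemma exists_isPiece_goodPart_badPart (hT : IsWhitneyTower R L f s) (hL : 0 ≤ L) (hR : 0 ≤ R)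
    (hf : Integrable f) (hfm : Measurable f) (hsupp : Function.support f ⊆ ball x (2 * R)) (k : ℕ)
    (j : s k) : ∃ c r M, IsPiece x R c r M (towerPiece R L f s (.inr ⟨k, .inl j⟩)) ∧
      M * r ^ Module.finrank ℝ X ≤ towerCost R L f s (.inr ⟨k, .inl j⟩) := by
  have hs := hT.isWhitneyFamily
  refine ((hT.isExceptionalSet_succ hL k).isLocalized_goodPart_badPart
    (hT.isExceptionalSet (k + 1)) (hs k) (hs (k + 1)) (dyadicLevelSet_succ_subset hL f k) hf hfm
    j).exists_isPiece ((hs k).whitneyRadius_pos j) (hT.radius_le k j) ?_ fun hne => ?_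
  · rw [(hs (k + 1)).integral_goodPart ((hs k).integrable_badPart hf j),
      (hs k).integral_badPart hf j]
  · refine (hs k).exists_mem_ball_of_badPart_ne_zero
      (hsupp.trans (ball_subset_ball (by linarith))) (i := j) fun h => hne ?_
    rw [h]
    exact funext (goodPart_zero _ _)

lemma exists_isPiece_badPart_goodPart (hT : IsWhitneyTower R L f s) (hL : 0 ≤ L) (hR : 0 ≤ R)
    (hf : Integrable f) (hfm : Measurable f) (hsupp : Function.support f ⊆ ball x (2 * R)) (k : ℕ)
    (i : s (k + 1)) : ∃ c r M, IsPiece x R c r M (towerPiece R L f s (.inr ⟨k, .inr i⟩)) ∧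
      M * r ^ Module.finrank ℝ X ≤ towerCost R L f s (.inr ⟨k, .inr i⟩) := by
  have hs := hT.isWhitneyFamily
  refine ((hT.isExceptionalSet_succ hL k).isLocalized_badPart_goodPart (hs k) (hs (k + 1)) hfm
    i).neg.exists_isPiece ((hs (k + 1)).whitneyRadius_pos i) (hT.radius_le (k + 1) i) ?_
    fun hne => ?_
  · rw [integral_neg, (hs (k + 1)).integral_badPart ((hs k).integrable_goodPart hf) i, neg_zero]
  · refine (hs (k + 1)).exists_mem_ball_of_badPart_ne_zero
      ((hs k).support_goodPart_subset (hT.radius_le k) hR hsupp) (i := i) fun h => hne ?_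
    simp only [h, Pi.zero_apply, neg_zero]
    rfl

lemma exists_isPiece (hT : IsWhitneyTower R L f s) (hL : 0 ≤ L) (hR : 0 < R)
    (hf : Integrable f) (hfm : Measurable f) (hsupp : Function.support f ⊆ ball x (2 * R)) :
    ∀ p, ∃ c r M, IsPiece x R c r M (towerPiece R L f s p) ∧
      M * r ^ Module.finrank ℝ X ≤ towerCost R L f s p
  | .inl _ => ⟨_, _, _, hT.isPiece_coarse hR hfm hsupp, le_rfl⟩
  | .inr ⟨k, .inl j⟩ => hT.exists_isPiece_goodPart_badPart hL hR.le hf hfm hsupp k j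
  | .inr ⟨k, .inr i⟩ => hT.exists_isPiece_badPart_goodPart hL hR.le hf hfm hsupp k i

end Pieces

section Convergence

lemma hasSum_towerPiece (hT : IsWhitneyTower R L f s) (hL : 0 < L) (hf : Integrable f) {z : X}
    (hz : grandMaximal R f z < ⊤) (hsum : Summable fun p => towerPiece R L f s p z) :
    HasSum (fun p => towerPiece R L f s p z) (f z) := by
  set g : ℕ → X → ℝ := fun k => goodPart (dyadicLevelSet R L f k) (s k) f
  have hlevel : ∀ k, HasSum (fun b => towerPiece R L f s (.inr ⟨k, b⟩) z) (g (k + 1) z - g k z) :=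
    fun k => by
      convert (hT.isWhitneyFamily k).hasSum_goodPart_sub_goodPart (hT.isWhitneyFamily (k + 1)) hf z
        using 2 with b
      rcases b with j | i <;> rfl
  have hfine : Summable fun q => towerPiece R L f s (.inr q) z :=
    hsum.comp_injective Sum.inr_injective
  have htelescope : Tendsto (fun N => ∑ k ∈ Finset.range N, (g (k + 1) z - g k z)) atTop
      (𝓝 (f z - g 0 z)) := by
    simp only [Finset.sum_range_sub (fun k => g k z)]
    exact (hT.tendsto_goodPart hL hz).sub_const _
  have hfineSum : HasSum (fun q => towerPiece R L f s (.inr q) z) (f z - g 0 z) :=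
    tendsto_nhds_unique (hfine.hasSum.sigma hlevel).tendsto_sum_nat htelescope ▸ hfine.hasSum
  have hcoarse : HasSum (fun p : Unit => towerPiece R L f s (.inl p) z) (g 0 z) :=
    hasSum_unique _
  simpa only [add_sub_cancel] using
    HasSum.sum (f := fun p => towerPiece R L f s p z) hcoarse hfineSum

end Convergence

end IsWhitneyTower

end TowerPieces

section Convergence

variable {α F : Type*} [MeasurableSpace α] {μ : Measure α}

lemma tendsto_eLpNorm_sub_sum_of_ae_hasSum [NormedAddCommGroup F] {u : ℕ → α → F} {f : α → F}
    (hu : ∀ k, AEStronglyMeasurable (u k) μ) (hfin : ∑' k, ∫⁻ z, ‖u k z‖ₑ ∂μ ≠ ⊤)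
    (hf : ∀ᵐ z ∂μ, HasSum (fun k => u k z) (f z)) :
    Tendsto (fun N => eLpNorm (fun z => f z - ∑ k ∈ Finset.range N, u k z) 1 μ) atTop (𝓝 0) := by
  refine tendsto_of_tendsto_of_tendsto_of_le_of_le tendsto_const_nhds
    (ENNReal.tendsto_sum_nat_add (fun k => ∫⁻ z, ‖u k z‖ₑ ∂μ) hfin) (fun _ => zero_le) fun N => ?_
  dsimp only
  rw [eLpNorm_one_eq_lintegral_enorm, ← lintegral_tsum fun k => (hu _).enorm]
  refine lintegral_mono_ae ?_
  filter_upwards [hf] with z hz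
  have htail : HasSum (fun k => u (k + N) z) (f z - ∑ k ∈ Finset.range N, u k z) :=
    (hasSum_nat_add_iff (f := fun k => u k z) N).2 (by rwa [sub_add_cancel])
  rw [← htail.tsum_eq]
  exact enorm_tsum_le_tsum_enorm

lemma exists_measurable_ae_eq_forall_eq_zero_or [MeasurableSpace F] [Zero F] {f : α → F}
    {p : α → Prop} (hf : AEMeasurable f μ) (hp : ∀ᵐ z ∂μ, p z) :
    ∃ g, Measurable g ∧ g =ᵐ[μ] f ∧ ∀ z, g z = 0 ∨ g z = f z ∧ p z := by
  obtain ⟨A, hA, hAm, hgood⟩ := (hf.ae_eq_mk.and hp).exists_measurable_mem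
  refine ⟨A.indicator (hf.mk f), hf.measurable_mk.indicator hAm, ?_, fun z => ?_⟩
  · filter_upwards [hA] with z hz
    rw [Set.indicator_of_mem hz, (hgood z hz).1]
  · by_cases hz : z ∈ A
    · exact Or.inr ⟨by rw [Set.indicator_of_mem hz, (hgood z hz).1], (hgood z hz).2⟩
    · exact Or.inl (Set.indicator_of_notMem hz _)

end Convergence

section PieceDecomposition

variable {X : Type*} [NormedAddCommGroup X] [NormedSpace ℝ X] [MeasureSpace X]

/-- A decomposition of `f` into an almost everywhere convergent series of pieces whose total cost,
the sum of (height) times (radius) to the power of the dimension, is finite. -/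
structure IsPieceDecomposition {ι : Type*} (x : X) (R : ℝ) (f : X → ℝ) (c : ι → X) (r M : ι → ℝ)
    (u : ι → X → ℝ) : Prop where
  isPiece : ∀ k, IsPiece x R (c k) (r k) (M k) (u k)
  cost_ne_top : ∑' k, ENNReal.ofReal (M k * r k ^ Module.finrank ℝ X) ≠ ⊤
  ae_hasSum : ∀ᵐ z, HasSum (fun k => u k z) (f z)

variable {x : X} {R : ℝ} {f g : X → ℝ}

lemma isPieceDecomposition_zero (x : X) (hR : 0 < R) (hf : f =ᵐ[volume] 0) :
    IsPieceDecomposition x R f (fun _ : ℕ => x) (fun _ => 3 * R) 0 0 where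
  isPiece _ := isPiece_zero x hR
  cost_ne_top := by simp only [Pi.zero_apply, zero_mul, ENNReal.ofReal_zero, tsum_zero, ne_eq,
    ENNReal.zero_ne_top, not_false_eq_true]
  ae_hasSum := by
    filter_upwards [hf] with z hz
    rw [hz]
    exact hasSum_zero

namespace IsPieceDecomposition

section General

variable {ι : Type*} {c : ι → X} {r M : ι → ℝ} {u : ι → X → ℝ}

lemma congr (h : IsPieceDecomposition x R f c r M u) (hfg : f =ᵐ[volume] g) :
    IsPieceDecomposition x R g c r M u where
  isPiece := h.isPiece
  cost_ne_top := h.cost_ne_top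
  ae_hasSum := by
    filter_upwards [h.ae_hasSum, hfg] with z hz hfgz
    rwa [← hfgz]

lemma exists_nat [Countable ι] (hR : 0 < R) (h : IsPieceDecomposition x R f c r M u) :
    ∃ (c' : ℕ → X) (r' M' : ℕ → ℝ) (u' : ℕ → X → ℝ), IsPieceDecomposition x R f c' r' M' u' ∧
      ∑' k, ENNReal.ofReal (M' k * r' k ^ Module.finrank ℝ X) =
        ∑' k, ENNReal.ofReal (M k * r k ^ Module.finrank ℝ X) := by
  obtain ⟨_⟩ := nonempty_denumerable (ι ⊕ ℕ)
  set e : ℕ ≃ ι ⊕ ℕ := (Denumerable.eqv (ι ⊕ ℕ)).symm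
  set M' : ι ⊕ ℕ → ℝ := Sum.elim M 0 with hM'
  set r' : ι ⊕ ℕ → ℝ := Sum.elim r fun _ => 3 * R with hr'
  set u' : ι ⊕ ℕ → X → ℝ := Sum.elim u 0
  have hcost : ∑' k, ENNReal.ofReal (M' (e k) * r' (e k) ^ Module.finrank ℝ X) =
      ∑' k, ENNReal.ofReal (M k * r k ^ Module.finrank ℝ X) := by
    rw [e.tsum_eq fun k => ENNReal.ofReal (M' k * r' k ^ Module.finrank ℝ X),
      Summable.tsum_sum ENNReal.summable ENNReal.summable]
    simp only [hM', hr', Sum.elim_inl, Sum.elim_inr, Pi.zero_apply, zero_mul, ENNReal.ofReal_zero,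
      tsum_zero, add_zero]
  have hpiece : ∀ k, IsPiece x R (Sum.elim c (fun _ => x) k) (r' k) (M' k) (u' k)
    | .inl k => h.isPiece k
    | .inr _ => isPiece_zero x hR
  refine ⟨_, r' ∘ e, M' ∘ e, u' ∘ e, ⟨fun k => hpiece (e k), ?_, ?_⟩, hcost⟩
  · exact hcost.trans_ne h.cost_ne_top
  · filter_upwards [h.ae_hasSum] with z hz
    refine (e.hasSum_iff (f := fun k => u' k z)).2 ?_
    simpa only [add_zero] using HasSum.sum (f := fun k => u' k z) hz hasSum_zero

lemma cost_nonneg (h : IsPieceDecomposition x R f c r M u) (k : ι) :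
    0 ≤ M k * r k ^ Module.finrank ℝ X :=
  mul_nonneg (h.isPiece k).bound_nonneg (pow_nonneg (h.isPiece k).radius_pos.le _)

lemma summable_cost (h : IsPieceDecomposition x R f c r M u) :
    Summable fun k => M k * r k ^ Module.finrank ℝ X :=
  (ENNReal.summable_toReal h.cost_ne_top).congr fun k => ENNReal.toReal_ofReal (h.cost_nonneg k)

lemma ofReal_tsum_cost (h : IsPieceDecomposition x R f c r M u) :
    ENNReal.ofReal (∑' k, M k * r k ^ Module.finrank ℝ X) =
      ∑' k, ENNReal.ofReal (M k * r k ^ Module.finrank ℝ X) :=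
  ENNReal.ofReal_tsum_of_nonneg h.cost_nonneg h.summable_cost

end General

variable [FiniteDimensional ℝ X] [BorelSpace X] [(volume : Measure X).IsAddHaarMeasure]

lemma tendsto_eLpNorm {c : ℕ → X} {r M : ℕ → ℝ} {u : ℕ → X → ℝ}
    (h : IsPieceDecomposition x R f c r M u) :
    Tendsto (fun N => eLpNorm (fun z => f z - ∑ k ∈ Finset.range N, u k z) 1 volume)
      atTop (𝓝 0) :=
  tendsto_eLpNorm_sub_sum_of_ae_hasSum
    (fun k => (h.isPiece k).measurable.aestronglyMeasurable)
    (tsum_lintegral_enorm_ne_top_of_isLocalized (fun k => (h.isPiece k).toIsLocalized)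
      (fun k => (h.isPiece k).radius_pos) h.cost_ne_top) h.ae_hasSum

end IsPieceDecomposition

section Existence

variable [FiniteDimensional ℝ X] [BorelSpace X] [(volume : Measure X).IsAddHaarMeasure]

lemma IsWhitneyTower.exists_isPieceDecomposition {L : ℝ} {s : ℕ → Set X}
    (hT : IsWhitneyTower R L f s) (hL : 0 < L) (hR : 0 < R)
    (hG : ∫⁻ z, grandMaximal R f z =
      ENNReal.ofReal (L * ((R / 10) ^ Module.finrank ℝ X * unitBallVol X)))
    (hf : Integrable f) (hfm : Measurable f) (hsupp : Function.support f ⊆ ball x (2 * R)) :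
    ∃ c r M, IsPieceDecomposition x R f c r M (towerPiece R L f s) ∧
      ∑' p, ENNReal.ofReal (M p * r p ^ Module.finrank ℝ X) ≤
        ENNReal.ofReal (pieceConst X) * ∫⁻ z, grandMaximal R f z := by
  choose c r M hpiece hcost using hT.exists_isPiece hL.le hR hf hfm hsupp
  have htotal := (ENNReal.tsum_le_tsum fun p => ENNReal.ofReal_le_ofReal (hcost p)).trans
    (hT.tsum_towerCost_le hL hG hR)
  have hGtop : ∫⁻ z, grandMaximal R f z ≠ ⊤ := hG.trans_ne ENNReal.ofReal_ne_top
  have hcount : ∀ k, Countable (s k) := fun k => (hT.isWhitneyFamily k).countable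
  have hne_top := ne_top_of_le_ne_top (ENNReal.mul_ne_top ENNReal.ofReal_ne_top hGtop) htotal
  refine ⟨c, r, M, ⟨hpiece, hne_top, ?_⟩, htotal⟩
  filter_upwards [ae_summable_of_isLocalized (fun p => (hpiece p).toIsLocalized)
    (fun p => (hpiece p).radius_pos) hne_top,
    ae_lt_top (measurable_grandMaximal R f) hGtop] with z hz hGz
  exact hT.hasSum_towerPiece hL hf hGz hz

variable [Nontrivial X]

lemma exists_isPieceDecomposition_of_measurable (hR : 0 < R) (hf : Integrable f)
    (hfm : Measurable f) (hsupp : Function.support f ⊆ ball x (2 * R))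
    (hfG : ∀ z, ENNReal.ofReal |f z| ≤
      ENNReal.ofReal (2 ^ (Module.finrank ℝ X + 1) / unitBallVol X) * grandMaximal R f z)
    (hzero : ∫⁻ z, grandMaximal R f z ≠ 0) (htop : ∫⁻ z, grandMaximal R f z ≠ ⊤) :
    ∃ (c : ℕ → X) (r M : ℕ → ℝ) (u : ℕ → X → ℝ), IsPieceDecomposition x R f c r M u ∧
      ∑' k, ENNReal.ofReal (M k * r k ^ Module.finrank ℝ X) ≤
        ENNReal.ofReal (pieceConst X) * ∫⁻ z, grandMaximal R f z := by
  have hv : 0 < (R / 10) ^ Module.finrank ℝ X * unitBallVol X :=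
    mul_pos (by positivity) unitBallVol_pos
  set v := (R / 10) ^ Module.finrank ℝ X * unitBallVol X
  set L := (∫⁻ z, grandMaximal R f z).toReal / v
  have hL : 0 < L := div_pos (ENNReal.toReal_pos hzero htop) hv
  have hG : ∫⁻ z, grandMaximal R f z = ENNReal.ofReal (L * v) := by
    rw [div_mul_cancel₀ _ hv.ne', ENNReal.ofReal_toReal htop]
  obtain ⟨s, hT⟩ := exists_isWhitneyTower hR hL hG hfG
  obtain ⟨c, r, M, hdec, hcost⟩ := hT.exists_isPieceDecomposition hL hR hG hf hfm hsupp
  have hcount : ∀ k, Countable (s k) := fun k => (hT.isWhitneyFamily k).countable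
  obtain ⟨c', r', M', u', hdec', hcost'⟩ := hdec.exists_nat hR
  exact ⟨c', r', M', u', hdec', hcost'.trans_le hcost⟩

theorem exists_isPieceDecomposition (hR : 0 < R) (hf : Integrable f)
    (hsupp : Function.support f ⊆ ball x (2 * R)) (htop : ∫⁻ z, grandMaximal R f z ≠ ⊤) :
    ∃ (c : ℕ → X) (r M : ℕ → ℝ) (u : ℕ → X → ℝ), IsPieceDecomposition x R f c r M u ∧
      ∑' k, ENNReal.ofReal (M k * r k ^ Module.finrank ℝ X) ≤
        ENNReal.ofReal (pieceConst X) * ∫⁻ z, grandMaximal R f z := by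
  have hfG := ae_ofReal_abs_le_grandMaximal hR hf
  by_cases hzero : ∫⁻ z, grandMaximal R f z = 0
  · rw [lintegral_eq_zero_iff (measurable_grandMaximal R f)] at hzero
    refine ⟨_, _, _, _, isPieceDecomposition_zero x hR ?_, ?_⟩
    · filter_upwards [hzero, hfG] with z hz hfGz
      rw [hz, Pi.zero_apply, mul_zero] at hfGz
      exact abs_nonpos_iff.1 (ENNReal.ofReal_eq_zero.1 (nonpos_iff_eq_zero.1 hfGz))
    · simp only [Pi.zero_apply, zero_mul, ENNReal.ofReal_zero, tsum_zero, zero_le]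
  obtain ⟨g, hgm, hgf, hg⟩ := exists_measurable_ae_eq_forall_eq_zero_or hf.1.aemeasurable hfG
  rw [← grandMaximal_congr R hgf] at hzero htop hg ⊢
  have hsuppg : Function.support g ⊆ ball x (2 * R) := fun z hz =>
    hsupp (((hg z).resolve_left hz).1.symm.trans_ne hz)
  obtain ⟨c, r, M, u, hdec, hcost⟩ := exists_isPieceDecomposition_of_measurable hR
    (hf.congr hgf.symm) hgm hsuppg (fun z => by
      rcases hg z with hgz | ⟨hgz, hle⟩
      · rw [hgz, abs_zero, ENNReal.ofReal_zero]
        exact zero_le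
      · rwa [hgz]) hzero htop
  exact ⟨c, r, M, u, hdec.congr hgf, hcost⟩

theorem IsDecayKernel.exists_isPieceDecomposition {P : X → ℝ} {C : ℝ} (hP : IsDecayKernel P C)
    (hR : 0 < R) (hf : Integrable f) (hsupp : Function.support f ⊆ ball x (2 * R))
    (htop : ∫⁻ z, localMaximal P R f z ≠ ⊤) :
    ∃ (c : ℕ → X) (r M : ℕ → ℝ) (u : ℕ → X → ℝ), IsPieceDecomposition x R f c r M u ∧
      ∑' k, M k * r k ^ Module.finrank ℝ X ≤
        pieceConst X * (grandConst X C * strongConst X (maxExp X)) *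
          (∫⁻ z, localMaximal P R f z).toReal := by
  have hgrand := hP.lintegral_grandMaximal_le hf (R := R)
  obtain ⟨c, r, M, u, hdec, hcost⟩ := _root_.exists_isPieceDecomposition hR hf hsupp
    (ne_top_of_le_ne_top (ENNReal.mul_ne_top ENNReal.ofReal_ne_top htop) hgrand)
  refine ⟨c, r, M, u, hdec, ?_⟩
  have htotal := hcost.trans (mul_le_mul_right hgrand _)
  rw [← hdec.ofReal_tsum_cost, ENNReal.ofReal_le_iff_le_toReal (ENNReal.mul_ne_top
    ENNReal.ofReal_ne_top (ENNReal.mul_ne_top ENNReal.ofReal_ne_top htop)), ENNReal.toReal_mul,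
    ENNReal.toReal_mul, ENNReal.toReal_ofReal (pieceConst_pos X).le, ENNReal.toReal_ofReal
    (mul_pos hP.grandConst_pos (strongConst_pos (one_lt_maxExp X))).le, ← mul_assoc] at htotal
  exact htotal

end Existence

end PieceDecomposition

section Gaussian

open Nat in
lemma one_add_mul_exp_neg_sq_le (N : ℕ) {s : ℝ} (hs : 0 ≤ s) :
    (1 + s) * exp (-(s ^ 2) / 4) ≤ (N + 1)! * exp 2 * ((1 + s) ^ N)⁻¹ := by
  have hpow : (1 + s) ^ (N + 1) ≤ (N + 1)! * exp (1 + s) := by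
    rw [← div_le_iff₀' (by positivity)]
    exact pow_div_factorial_le_exp (1 + s) (by linarith) (N + 1)
  have hexp : exp (1 + s) * exp (-(s ^ 2) / 4) ≤ exp 2 := by
    rw [← Real.exp_add]
    exact exp_le_exp.2 (by nlinarith [sq_nonneg (s - 2)])
  rw [← div_eq_mul_inv, le_div_iff₀ (by positivity)]
  calc (1 + s) * exp (-(s ^ 2) / 4) * (1 + s) ^ N
      = (1 + s) ^ (N + 1) * exp (-(s ^ 2) / 4) := by ring
    _ ≤ (N + 1)! * exp (1 + s) * exp (-(s ^ 2) / 4) := by gcongr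
    _ ≤ (N + 1)! * exp 2 := by rw [mul_assoc]; gcongr

lemma exp_neg_sq_sub_exp_neg_sq_le {a b : ℝ} (ha : 0 ≤ a) (hab : a ≤ b) :
    exp (-(a ^ 2) / 4) - exp (-(b ^ 2) / 4) ≤ (b - a) * ((1 + a) * exp (-(a ^ 2) / 4)) := by
  have := exp_pos (-(a ^ 2) / 4)
  rcases le_total b (a + 2) with hb | hb
  · have hfactor : exp (-(b ^ 2) / 4) = exp (-(a ^ 2) / 4) * exp (-((b ^ 2 - a ^ 2) / 4)) := by
      rw [← Real.exp_add]
      ring_nf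
    have htaylor : 1 - exp (-((b ^ 2 - a ^ 2) / 4)) ≤ (b - a) * (1 + a) := by
      nlinarith [Real.one_sub_le_exp_neg ((b ^ 2 - a ^ 2) / 4)]
    calc _ = (1 - exp (-((b ^ 2 - a ^ 2) / 4))) * exp (-(a ^ 2) / 4) := by rw [hfactor]; ring
      _ ≤ (b - a) * (1 + a) * exp (-(a ^ 2) / 4) := by gcongr
      _ = _ := mul_assoc _ _ _
  · have hone : 1 ≤ (b - a) * (1 + a) := by nlinarith
    calc _ ≤ 1 * exp (-(a ^ 2) / 4) := by linarith [exp_pos (-(b ^ 2) / 4)]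
      _ ≤ (b - a) * (1 + a) * exp (-(a ^ 2) / 4) := by gcongr
      _ = _ := mul_assoc _ _ _

open Nat in
lemma abs_exp_neg_norm_sq_sub_le {X : Type*} [NormedAddCommGroup X] (N : ℕ) (v v' : X) :
    |exp (-(‖v‖ ^ 2) / 4) - exp (-(‖v'‖ ^ 2) / 4)| ≤
      (N + 1)! * exp 2 * ‖v - v'‖ * (decay N v + decay N v') := by
  wlog h : ‖v‖ ≤ ‖v'‖ generalizing v v'
  · rw [abs_sub_comm, norm_sub_rev, add_comm (decay N v)]
    exact this v' v (le_of_not_ge h)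
  have hmono : exp (-(‖v'‖ ^ 2) / 4) ≤ exp (-(‖v‖ ^ 2) / 4) := by gcongr
  rw [abs_of_nonneg (sub_nonneg.2 hmono)]
  calc _ ≤ (‖v'‖ - ‖v‖) * ((1 + ‖v‖) * exp (-(‖v‖ ^ 2) / 4)) :=
        exp_neg_sq_sub_exp_neg_sq_le (norm_nonneg v) h
    _ ≤ ‖v - v'‖ * ((N + 1)! * exp 2 * decay N v) :=
        mul_le_mul (norm_sub_rev v v' ▸ norm_sub_norm_le v' v)
          (one_add_mul_exp_neg_sq_le N (norm_nonneg v)) (by positivity) (norm_nonneg _)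
    _ ≤ ‖v - v'‖ * ((N + 1)! * exp 2 * (decay N v + decay N v')) := by
        gcongr
        exact le_add_of_nonneg_right (decay_pos N v').le
    _ = _ := by ring

variable {d : ℕ}

lemma gaussP_nonneg (v : E d) : 0 ≤ gaussP d v := by
  unfold gaussP; positivity

lemma integral_gaussP (d : ℕ) : ∫ v, gaussP d v = 1 := by
  have h := GaussianFourier.integral_rexp_neg_mul_sq_norm (V := E d) (b := 1 / 4) (by norm_num)
  have hexp : ∀ v : E d, -(1 / 4 : ℝ) * ‖v‖ ^ 2 = -(‖v‖ ^ 2) / 4 := fun v => by ring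
  simp only [hexp, finrank_euclideanSpace_fin] at h
  unfold gaussP
  rw [integral_const_mul, h, show π / (1 / 4) = 4 * π by ring, ← Real.rpow_add (by positivity),
    neg_div, neg_add_cancel, Real.rpow_zero]

open Nat in
lemma isDecayKernel_gaussP (d : ℕ) : IsDecayKernel (gaussP d)
    ((4 * π) ^ (-(d : ℝ) / 2) * ((fastOrder (E d) + 1)! * exp 2)) where
  abs_le v := by
    rw [abs_of_nonneg (gaussP_nonneg v), gaussP, mul_assoc]
    gcongr
    exact (le_mul_of_one_le_left (exp_pos _).le (by linarith [norm_nonneg v])).trans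
      (one_add_mul_exp_neg_sq_le _ (norm_nonneg v))
  abs_sub_le v v' := by
    rw [gaussP, gaussP, ← mul_sub, abs_mul, abs_of_nonneg (by positivity), mul_assoc, mul_assoc]
    gcongr
    rw [← mul_assoc]
    exact abs_exp_neg_norm_sq_sub_le _ v v'
  integral_eq_one := integral_gaussP d

lemma MnMax_eq_localMaximal (d : ℕ) (n : ℤ) (f : E d → ℝ) :
    MnMax d n f = localMaximal (gaussP d) (2 ^ (-(n : ℝ) / 2)) f := by
  funext x
  refine iSup_congr fun t => iSup_congr fun ht => ?_
  simp only [dilate, Real.rpow_neg ht.1.le, Real.rpow_natCast, finrank_euclideanSpace_fin]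

lemma h1nNorm_eq_lintegral_localMaximal (d : ℕ) (n : ℤ) (f : E d → ℝ) :
    h1nNorm d n f = ∫⁻ x, localMaximal (gaussP d) (2 ^ (-(n : ℝ) / 2)) f x := by
  rw [h1nNorm, MnMax_eq_localMaximal]

end Gaussian

section Atoms

lemma eLpNorm_le_rpow_of_eLpNorm_top_le {α F : Type*} [MeasurableSpace α] {μ : Measure α}
    [NormedAddCommGroup F] {s : Set α} {f : α → F} (hs0 : μ s ≠ 0) (hs : μ s ≠ ⊤)
    (hsupp : Function.support f ⊆ s) (hf : eLpNorm f ⊤ μ ≤ (μ s)⁻¹) (q : ℝ≥0∞) :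
    eLpNorm f q μ ≤ μ s ^ (1 / q.toReal - 1) := by
  have hbound : ∀ᵐ z ∂μ, ‖f z‖ₑ ≤ (μ s)⁻¹ :=
    (ae_le_eLpNormEssSup (f := f)).mono fun _ hz => hz.trans hf
  calc eLpNorm f q μ = eLpNorm f q (μ.restrict s) :=
        (eLpNorm_restrict_eq_of_support_subset hsupp).symm
    _ ≤ (μ s)⁻¹ * μ s ^ q.toReal⁻¹ := by
        simpa only [smul_eq_mul, Measure.restrict_apply_univ] using
          eLpNorm_le_of_ae_enorm_bound (p := q) (ae_restrict_of_ae hbound)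
    _ = μ s ^ (1 / q.toReal - 1) := by
        rw [ENNReal.rpow_sub _ _ hs0 hs, ENNReal.rpow_one, one_div, mul_comm, div_eq_mul_inv]

lemma IsHLAtom.of_top {d : ℕ} {V a : E d → ℝ} {CL r : ℝ} {c : E d}
    (h : IsHLAtom d V CL ⊤ a c r) (q : ℝ≥0∞) : IsHLAtom d V CL q a c r := by
  obtain ⟨hrad, hsupp, hnorm, hint⟩ := h
  refine ⟨hrad, hsupp, ?_, hint⟩
  rcases le_or_gt r 0 with hr | hr
  · rw [ball_eq_empty.2 hr, Set.subset_empty_iff, Function.support_eq_empty_iff] at hsupp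
    rw [hsupp, eLpNorm_zero]
    exact zero_le
  · refine eLpNorm_le_rpow_of_eLpNorm_top_le (measure_ball_pos _ c hr).ne' measure_ball_lt_top.ne
      hsupp (hnorm.trans_eq ?_) q
    rw [ENNReal.toReal_top, _root_.div_zero, zero_sub, ENNReal.rpow_neg_one]

lemma mul_mul_div_mul_cancel_of_abs_le {y M v : ℝ} (hy : |y| ≤ M) (hv : v ≠ 0) :
    M * v * (y / (M * v)) = y := by
  rcases eq_or_ne M 0 with rfl | hM
  · rw [abs_nonpos_iff.1 hy, zero_div, mul_zero]
  · exact mul_div_cancel₀ _ (mul_ne_zero hM hv)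

lemma abs_div_mul_le_inv {y M v : ℝ} (hy : |y| ≤ M) (hv : 0 ≤ v) : |y / (M * v)| ≤ v⁻¹ := by
  have hM : 0 ≤ M := (abs_nonneg y).trans hy
  rw [abs_div, abs_of_nonneg (mul_nonneg hM hv), div_mul_eq_div_div]
  exact (div_le_div_of_nonneg_right (div_le_one_of_le₀ hy hM) hv).trans_eq (one_div v)

lemma mul_critical_radius_le {ρx ρy δ C₀ k₀ : ℝ} (hρ : 0 < ρx) (hC₀ : 0 < C₀) (hk₀ : 0 ≤ k₀)
    (hδ0 : 0 ≤ δ) (hδ : δ ≤ 8 * ρx) (h : C₀⁻¹ * ρx * (1 + δ / ρx) ^ (-k₀) ≤ ρy) :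
    8 * ρx ≤ 8 * 9 ^ k₀ * C₀ * ρy := by
  have hratio : 1 + δ / ρx ≤ 9 := by linarith [(div_le_iff₀ hρ).2 hδ]
  have hpow : (9 : ℝ) ^ (-k₀) ≤ (1 + δ / ρx) ^ (-k₀) :=
    Real.rpow_le_rpow_of_nonpos (by positivity) hratio (neg_nonpos.2 hk₀)
  calc 8 * ρx = 8 * 9 ^ k₀ * C₀ * (C₀⁻¹ * ρx * 9 ^ (-k₀)) := by
        rw [Real.rpow_neg (by norm_num)]
        field_simp
    _ ≤ 8 * 9 ^ k₀ * C₀ * ρy := by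
        gcongr
        exact (mul_le_mul_of_nonneg_left hpow (by positivity)).trans h

end Atoms

section Coefficients

lemma measureReal_ball_pos {X : Type*} [PseudoMetricSpace X] [ProperSpace X] [MeasurableSpace X]
    {μ : Measure X} [μ.IsOpenPosMeasure] [IsFiniteMeasureOnCompacts μ] (c : X) {r : ℝ}
    (hr : 0 < r) : 0 < μ.real (ball c r) :=
  ENNReal.toReal_pos (measure_ball_pos _ c hr).ne' measure_ball_lt_top.ne

variable {X : Type*} [NormedAddCommGroup X] [NormedSpace ℝ X] [FiniteDimensional ℝ X]
  [MeasureSpace X] [BorelSpace X] [(volume : Measure X).IsAddHaarMeasure]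

lemma measureReal_ball_eq (c : X) {r : ℝ} (hr : 0 < r) :
    volume.real (ball c r) = r ^ Module.finrank ℝ X * unitBallVol X := by
  rw [measureReal_def, volume_ball_eq c hr,
    ENNReal.toReal_ofReal (mul_pos (pow_pos hr _) unitBallVol_pos).le]

variable {x : X} {R : ℝ} {f : X → ℝ} {c : ℕ → X} {r M : ℕ → ℝ} {u : ℕ → X → ℝ}

lemma IsPieceDecomposition.abs_mul_measureReal_ball (h : IsPieceDecomposition x R f c r M u)
    (k : ℕ) : |M k * volume.real (ball (c k) (r k))| =
      unitBallVol X * (M k * r k ^ Module.finrank ℝ X) := by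
  rw [measureReal_ball_eq _ (h.isPiece k).radius_pos, ← mul_assoc, mul_comm,
    abs_of_nonneg (mul_nonneg unitBallVol_pos.le (h.cost_nonneg k))]

lemma IsPieceDecomposition.tendsto_eLpNorm_normalized (h : IsPieceDecomposition x R f c r M u) :
    Tendsto (fun N => eLpNorm (fun z => f z - ∑ k ∈ Finset.range N,
      M k * volume.real (ball (c k) (r k)) * (u k z / (M k * volume.real (ball (c k) (r k)))))
        1 volume) atTop (𝓝 0) := by
  have hcancel : ∀ k z, M k * volume.real (ball (c k) (r k)) *
      (u k z / (M k * volume.real (ball (c k) (r k)))) = u k z := fun k z =>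
    mul_mul_div_mul_cancel_of_abs_le ((h.isPiece k).abs_le z)
      (measureReal_ball_pos (c k) (h.isPiece k).radius_pos).ne'
  simpa only [hcancel] using h.tendsto_eLpNorm

end Coefficients

section PieceAtom

variable {d : ℕ} {x c : E d} {R r M : ℝ} {u : E d → ℝ}

lemma IsPiece.isHLAtom {V : E d → ℝ} {CL : ℝ} (h : IsPiece x R c r M u)
    (hrad : r ≤ CL * rho d V c) (hcrit : rho d V x / CL < 3 * R) :
    IsHLAtom d V CL ⊤ (fun z => u z / (M * volume.real (ball c r))) c r := by
  have hball : 0 < volume.real (ball c r) :=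
    measureReal_ball_pos c h.radius_pos
  refine ⟨hrad, (Function.support_div _ _).subset.trans
    (Set.inter_subset_left.trans h.support_subset), ?_, fun hr => ?_⟩
  · refine (eLpNormEssSup_le_of_ae_bound (.of_forall fun z =>
      abs_div_mul_le_inv (h.abs_le z) hball.le)).trans_eq ?_
    rw [ENNReal.toReal_top, _root_.div_zero, zero_sub, ENNReal.rpow_neg_one,
      ENNReal.ofReal_inv_of_pos hball, ofReal_measureReal measure_ball_lt_top.ne]
  · rw [integral_div]
    rcases h.integral_eq_zero_or with hu | ⟨rfl, rfl⟩
    · rw [hu, zero_div]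
    · exact absurd hr hcrit.not_ge

lemma IsPiece.isHLAtom_of_critical_radius {V : E d → ℝ} {C₀ k₀ : ℝ} (h : IsPiece x R c r M u)
    (hC₀ : 1 ≤ C₀) (hk₀ : 0 ≤ k₀) (hR : R / 2 < rho d V x) (hxR : rho d V x ≤ R)
    (hShen : C₀⁻¹ * rho d V x * (1 + dist x c / rho d V x) ^ (-k₀) ≤ rho d V c) :
    IsHLAtom d V (8 * 9 ^ k₀ * C₀) ⊤ (fun z => u z / (M * volume.real (ball c r))) c r := by
  have hρ : 0 < rho d V x := by linarith [h.radius_pos, h.radius_le]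
  have hdist : dist x c ≤ 8 * rho d V x := by
    have := mem_ball'.1 (h.ball_subset (mem_ball_self h.radius_pos))
    linarith
  have hCL : 1 ≤ 8 * 9 ^ k₀ * C₀ :=
    one_le_mul_of_one_le_of_one_le (one_le_mul_of_one_le_of_one_le (by norm_num)
      (Real.one_le_rpow (by norm_num) hk₀)) hC₀
  refine h.isHLAtom ?_ ((div_le_self hρ.le hCL).trans_lt (by linarith))
  linarith [h.radius_le,
    mul_critical_radius_le hρ (one_pos.trans_le hC₀) hk₀ dist_nonneg hdist hShen]

end PieceAtom

section Scales

lemma two_rpow_one_sub_half (s : ℝ) : (2 : ℝ) ^ (1 - s / 2) = 2 * 2 ^ (-s / 2) := by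
  rw [show 1 - s / 2 = 1 + -s / 2 by ring, Real.rpow_add two_pos, Real.rpow_one]

lemma two_rpow_two_sub_half (s : ℝ) : (2 : ℝ) ^ (2 - s / 2) = 4 * 2 ^ (-s / 2) := by
  rw [show 2 - s / 2 = 2 + -s / 2 by ring, Real.rpow_add two_pos, Real.rpow_two]
  norm_num

lemma half_two_rpow_le (s : ℝ) : (2 : ℝ) ^ (-s / 2) / 2 ≤ 2 ^ (-(s + 1) / 2) := by
  rw [← Real.rpow_sub_one two_ne_zero]
  exact Real.rpow_le_rpow_of_exponent_le one_le_two (by linarith)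

end Scales

theorem stmt14_general (d : ℕ) (hd : 0 < d) (V : E d → ℝ) (C₀ k₀ : ℝ) (hC₀ : 1 ≤ C₀)
    (hk₀ : 0 ≤ k₀)
    (hShen : ∀ x y : E d,
      C₀⁻¹ * rho d V x * (1 + dist x y / rho d V x) ^ (-k₀) ≤ rho d V y) :
    ∃ C : ℝ, 0 < C ∧
      ∀ (n : ℤ) (x : E d),
        (2:ℝ) ^ (-((n:ℝ)+1)/2) < rho d V x → rho d V x ≤ (2:ℝ) ^ (-(n:ℝ)/2) →
        ∀ f : E d → ℝ, Memh1n d n f →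
        Function.support f ⊆ ball x ((2:ℝ) ^ (1 - (n:ℝ)/2)) →
        ∃ (a : ℕ → E d → ℝ) (c : ℕ → E d) (rr : ℕ → ℝ) (lam : ℕ → ℝ),
          (∀ j, IsHLAtom d V (8 * 9 ^ k₀ * C₀) ⊤ (a j) (c j) (rr j) ∧
            ball (c j) (rr j) ⊆ ball x ((2:ℝ) ^ (2 - (n:ℝ)/2))) ∧
          Filter.Tendsto
            (fun N => eLpNorm (fun y => f y - ∑ j ∈ Finset.range N, lam j * a j y) 1 volume)
            Filter.atTop (nhds 0) ∧
          Summable (fun j => |lam j|) ∧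
          (∑' j, |lam j|) ≤ C * (h1nNorm d n f).toReal := by
  have : Nonempty (Fin d) := Fin.pos_iff_nonempty.1 hd
  have hP := isDecayKernel_gaussP d
  set A := pieceConst (E d) * (grandConst (E d) _ * strongConst (E d) (maxExp (E d)))
  have hApos : 0 < A := mul_pos (pieceConst_pos _)
    (mul_pos hP.grandConst_pos (strongConst_pos (one_lt_maxExp _)))
  refine ⟨unitBallVol (E d) * A, mul_pos unitBallVol_pos hApos, fun n x hx hxn f hf hsupp => ?_⟩
  rw [two_rpow_one_sub_half] at hsupp
  rw [two_rpow_two_sub_half]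
  obtain ⟨c, r, M, u, hdec, hcost⟩ := hP.exists_isPieceDecomposition (by positivity) hf.1 hsupp
    (h1nNorm_eq_lintegral_localMaximal d n f ▸ hf.2.ne)
  rw [← h1nNorm_eq_lintegral_localMaximal] at hcost
  refine ⟨_, c, r, fun j => M j * volume.real (ball (c j) (r j)), fun j =>
    ⟨(hdec.isPiece j).isHLAtom_of_critical_radius hC₀ hk₀
      ((half_two_rpow_le n).trans_lt hx) hxn (hShen x (c j)),
      (hdec.isPiece j).ball_subset⟩, hdec.tendsto_eLpNorm_normalized, ?_, ?_⟩
  all_goals simp_rw [hdec.abs_mul_measureReal_ball]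
  · exact hdec.summable_cost.mul_left _
  · rw [_root_.tsum_mul_left, mul_assoc]
    exact mul_le_mul_of_nonneg_left hcost unitBallVol_pos.le

/-- Atomic decomposition of functions in `h^1_n` supported in `B(x, 2^{1-n/2})` with
`x ∈ 𝓑_n`, by `(H^1_L, q)`-atoms related to balls inside `B(x, 2^{2-n/2})`. -/
theorem stmt14 (d : ℕ) (hd : 3 ≤ d) (V : E d → ℝ) (hV0 : ∀ x, 0 ≤ V x)
    (hVloc : LocallyIntegrable V volume) (hVne : ¬ (V =ᵐ[volume] (0 : E d → ℝ)))
    (hRH : IsRH d V)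
    (C₀ k₀ : ℝ) (hC₀ : 1 < C₀) (hk₀ : 1 ≤ k₀)
    (hShen : ∀ x y : E d,
      C₀⁻¹ * rho d V x * (1 + dist x y / rho d V x) ^ (-k₀) ≤ rho d V y ∧
      rho d V y ≤ C₀ * rho d V x * (1 + dist x y / rho d V x) ^ (k₀ / (k₀ + 1))) :
    ∀ q : ℝ≥0∞, 1 < q → ∃ C : ℝ, 0 < C ∧
      ∀ (n : ℤ) (x : E d),
        (2:ℝ) ^ (-((n:ℝ)+1)/2) < rho d V x → rho d V x ≤ (2:ℝ) ^ (-(n:ℝ)/2) →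
        ∀ f : E d → ℝ, Memh1n d n f →
        Function.support f ⊆ ball x ((2:ℝ) ^ (1 - (n:ℝ)/2)) →
        ∃ (a : ℕ → E d → ℝ) (c : ℕ → E d) (rr : ℕ → ℝ) (lam : ℕ → ℝ),
          (∀ j, IsHLAtom d V (8 * 9 ^ k₀ * C₀) q (a j) (c j) (rr j) ∧
            ball (c j) (rr j) ⊆ ball x ((2:ℝ) ^ (2 - (n:ℝ)/2))) ∧
          Filter.Tendsto
            (fun N => eLpNorm (fun y => f y - ∑ j ∈ Finset.range N, lam j * a j y) 1 volume)
            Filter.atTop (nhds 0) ∧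
          Summable (fun j => |lam j|) ∧
          (∑' j, |lam j|) ≤ C * (h1nNorm d n f).toReal := by
  intro q _
  obtain ⟨C, hC, h⟩ := stmt14_general d (by omega) V C₀ k₀ hC₀.le (by linarith)
    fun x y => (hShen x y).1
  exact ⟨C, hC, fun n x hx hxn f hf hsupp => (h n x hx hxn f hf hsupp).imp
    fun a ⟨c, r, lam, ha, hsum⟩ => ⟨c, r, lam, fun j => ⟨(ha j).1.of_top q, (ha j).2⟩, hsum⟩⟩
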